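/- Let k ≥ 2 be an integer and let χ be a quadratic Dirichlet character modulo D with χ(−1) = (−1)^k. For a sequence d : ℕ → ℂ the following are equivalent. (1) For every f ∈ M^{!,∞}_{2−k}(D,χ) with Fourier coefficients c(m), one has ∑_{m≥0} c(−m)·d(m) = 0 (a finite sum, since c(−m) = 0 for m sufficiently large). (2) The formal series ∑_{m≥0} d(m)q^m is the q-expansion of an element of M^∞_k(D,χ); that is, there exists g ∈ M^∞_k(D,χ) with g(τ) = ∑_{m≥0} d(m)e^{2πimτ} for all τ ∈ ℍ. -/

import Mathlib

/-!
Modularity criterion (Theorem 3.2.2 / `thm:modularity criterion`): for `k ≥ 2` and a quadratic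
Dirichlet character `χ` mod `D` with `χ(-1) = (-1)^k`, a sequence `d : ℕ → ℂ` pairs to zero
against the principal parts of all `f ∈ M^{!,∞}_{2-k}(D,χ)` if and only if `∑ d(m) q^m` is the
`q`-expansion of an element of `M^∞_k(D,χ)`.
-/

noncomputable section

/-- The complex upper half plane, as a subset of `ℂ`. -/
def UHP : Set ℂ := {z : ℂ | 0 < z.im}

/-- A `2 × 2` integer matrix viewed as a real matrix. -/
def matR (g : Matrix (Fin 2) (Fin 2) ℤ) : Matrix (Fin 2) (Fin 2) ℝ :=
  g.map fun x => (x : ℝ)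

/-- The weight `w` slash action of a real `2 × 2` matrix `g = [[a,b],[c,d]]` (of positive
determinant) on functions: `(f ∣[w] g)(τ) = det(g)^{w/2} (cτ+d)^{-w} f((aτ+b)/(cτ+d))`. -/
def slash (w : ℤ) (g : Matrix (Fin 2) (Fin 2) ℝ) (f : ℂ → ℂ) : ℂ → ℂ := fun τ =>
  (Real.sqrt g.det : ℂ) ^ w * ((g 1 0 : ℂ) * τ + (g 1 1 : ℂ)) ^ (-w) *
    f (((g 0 0 : ℂ) * τ + (g 0 1 : ℂ)) / ((g 1 0 : ℂ) * τ + (g 1 1 : ℂ)))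

/-- `χ : ℤ → ℂ` is a quadratic Dirichlet character modulo `D`. -/
structure IsQuadDirChar (D : ℕ) (χ : ℤ → ℂ) : Prop where
  periodic : ∀ a : ℤ, χ (a + D) = χ a
  mul : ∀ a b : ℤ, χ (a * b) = χ a * χ b
  eq_zero_iff : ∀ a : ℤ, χ a = 0 ↔ ¬ IsCoprime a (D : ℤ)
  sq_vals : ∀ a : ℤ, χ a = 0 ∨ χ a = 1 ∨ χ a = -1

/-- `f : ℍ → ℂ` is a weakly holomorphic modular form of weight `w`, level `Γ₀(D)`, character
`χ`, holomorphic outside the cusp `∞`, with Fourier coefficients `c`; i.e. `f ∈ M^{!,∞}_w(D,χ)`.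
Only the restriction of `f` to the upper half plane matters. -/
structure IsWeaklyHolInfty (D : ℕ) (χ : ℤ → ℂ) (w : ℤ) (f : ℂ → ℂ) (c : ℤ → ℂ) : Prop where
  holo : DifferentiableOn ℂ f UHP
  transform : ∀ γ : Matrix.SpecialLinearGroup (Fin 2) ℤ, (D : ℤ) ∣ γ 1 0 →
    ∀ τ ∈ UHP, slash w (matR γ) f τ = χ (γ 1 1) * f τ
  coeff_bddBelow : ∃ m₀ : ℤ, ∀ m : ℤ, m < -m₀ → c m = 0
  fourier : ∀ τ ∈ UHP,
    HasSum (fun m : ℤ => c m * Complex.exp (2 * (Real.pi : ℂ) * Complex.I * m * τ)) (f τ)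
  bdd_at_other_cusps : ∀ γ : Matrix.SpecialLinearGroup (Fin 2) ℤ, ¬ (D : ℤ) ∣ γ 1 0 →
    ∃ C : ℝ, ∀ τ : ℂ, 1 ≤ τ.im → ‖slash w (matR γ) f τ‖ ≤ C

/-- `g ∈ M^∞_k(D,χ)`: a holomorphic modular form of weight `k`, level `Γ₀(D)`, character `χ`,
vanishing at all cusps other than `∞`. -/
structure MemMInftySpace (D : ℕ) (χ : ℤ → ℂ) (k : ℤ) (g : ℂ → ℂ) : Prop where
  holo : DifferentiableOn ℂ g UHP
  transform : ∀ γ : Matrix.SpecialLinearGroup (Fin 2) ℤ, (D : ℤ) ∣ γ 1 0 →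
    ∀ τ ∈ UHP, slash k (matR γ) g τ = χ (γ 1 1) * g τ
  bdd_at_infty : ∃ C : ℝ, ∀ τ : ℂ, 1 ≤ τ.im → ‖g τ‖ ≤ C
  vanish_at_other_cusps : ∀ γ : Matrix.SpecialLinearGroup (Fin 2) ℤ, ¬ (D : ℤ) ∣ γ 1 0 →
    Filter.Tendsto (fun τ : ℂ => slash k (matR γ) g τ)
      (Filter.comap Complex.im Filter.atTop) (nhds 0)

/-!
# Duality between principal parts and `q`-expansions

A form of level `Γ₀(D)` and character `χ` is induced to a vector-valued form for `SL₂(ℤ)`, with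
components indexed by the cosets `SL₂(ℤ)/Γ₀(D)` and permuted up to signs. The component at the
trivial coset is the original form; the others describe its behaviour at the cusps other than `∞`.

*Coefficients of forms are orthogonal to principal parts.* If `F` has weight `2 - k` and `G` has
weight `k`, then `∑ i, F i * G i` is a weakly holomorphic form of level one and weight two. Its
constant term is zero: subtracting derivatives of forms of weight zero leaves a holomorphic form of
weight two, hence `0`. The components away from the trivial coset tend to zero at `i∞`, so the
constant term `∑ c(-m) d(m)` of the component at the trivial coset vanishes as well.

*Orthogonal sequences come from forms.* The main point is to find a frame: as many vector-valued
forms `f a` as there are cosets, such that `det (f a i)` vanishes nowhere on `ℍ`. An Eisenstein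
series of large weight which is nonzero at `∞` and zero at the other cusps has components whose
squares are pairwise distinct, so by a Vandermonde argument its odd powers have a determinant that
is not identically zero. If the determinant vanishes at `z₀`, then a linear relation at `z₀`, with
coefficients replaced by suitable monomials in `E₄` and `E₆`, gives a form divisible by a level one
form `H` whose only zeros are simple zeros on the orbit of `z₀`; the quotient replaces a member of
the frame of larger weight. The total weight is nonnegative, since the square of the determinant is
a holomorphic form of level one, so this stops. The zeros of `H` are simple because the Rankin–Cohen
bracket of `E₄` and `E₆` is a nonzero multiple of `Δ`. They form one orbit because `E₄` and `E₆`
determine all the sums `∑ (m z + n)⁻ᵏ` with `k ≥ 4` even, and such power sums recover the lattice.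

In coordinates with respect to the frame a form of weight `2 - k` is an arbitrary tuple of weakly
holomorphic forms of level one. The functional pairing the principal part at `∞` with `d`, defined
on vectors bounded at the other cusps, kills the forms of weight `2 - k` among them, so it extends
to a functional killing all of these forms. Level one duality turns each coordinate of the extension
into a level one form `t a`. With `f' a` the members of the dual frame, `∑ a, t a * f' a` is a form
of weight `k`, and evaluating the functional on vectors supported at one cusp reads off its Fourier
coefficients: `d` at `∞`, and zero in exponents `≤ 0` at the other cusps.
-/

section

open UpperHalfPlane Filter Topology Asymptotics Function Complex
open scoped MatrixGroups Manifold ModularForm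

namespace ModularityCriterion

/-! ### Fourier expansions at a cusp of width `h` -/

/-- The exponential `e(mz/h)`: the `m`-th power of the local parameter at a cusp of width `h`. -/
def qPow (h : ℝ) (m : ℤ) (z : ℍ) : ℂ := Periodic.qParam h z ^ m

/-- Holomorphic functions on `ℍ` of period `h > 0` that are meromorphic at `i∞`, the latter
encoded as at most exponential growth in the imaginary part. -/
structure MeroPeriodic (h : ℝ) (F : ℍ → ℂ) : Prop where
  pos : 0 < h
  mdiff : MDiff F
  vadd_eq : ∀ z : ℍ, F (h +ᵥ z) = F z
  exists_isBounded : ∃ n : ℕ, IsBoundedAtImInfty (F * qPow h n)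

/-- The `m`-th Fourier coefficient of a function of period `h`, as a mean along `Im z = 1`. -/
def qCoeff (h : ℝ) (F : ℍ → ℂ) (m : ℤ) : ℂ :=
  1 / h * ∫ x in (0 : ℝ)..h, (F * qPow h (-m)) (x +ᵥ UpperHalfPlane.I)

section qPow

variable (h : ℝ) (m n : ℤ) (z : ℍ)

lemma qPow_add : qPow h (m + n) = qPow h m * qPow h n :=
  funext fun _ => zpow_add₀ (Periodic.qParam_ne_zero _) _ _

lemma qPow_zero : qPow h 0 = 1 := funext fun _ => zpow_zero _

lemma qPow_natCast (n : ℕ) : qPow h n z = Periodic.qParam h z ^ n := zpow_natCast _ _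

lemma qPow_neg_mul : qPow h (-m) * qPow h m = 1 := by
  rw [← qPow_add, neg_add_cancel, qPow_zero]

lemma qPow_neg_mul_apply : qPow h (-m) z * qPow h m z = 1 := congrFun (qPow_neg_mul h m) z

lemma qPow_eq_exp : qPow h m z = cexp (2 * Real.pi * Complex.I * m * z / h) := by
  rw [qPow, Periodic.qParam, ← Complex.exp_int_mul]
  ring_nf

lemma norm_qPow : ‖qPow h m z‖ = Real.exp (-2 * Real.pi * z.im / h) ^ m := by
  rw [qPow, norm_zpow, Periodic.norm_qParam]; rfl

lemma mdifferentiable_qPow : MDiff (qPow h m) := by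
  rw [UpperHalfPlane.mdifferentiable_iff]
  have : DifferentiableOn ℂ (fun z : ℂ => cexp (2 * Real.pi * Complex.I * m * z / h))
    {z | 0 < z.im} := by fun_prop
  refine this.congr fun z hz => ?_
  rw [comp_apply, qPow_eq_exp, ofComplex_apply_of_im_pos hz]

variable {h m}

lemma qPow_vadd (hh : h ≠ 0) : qPow h m (h +ᵥ z) = qPow h m z := by
  have hh' : (h : ℂ) ≠ 0 := mod_cast hh
  have : 2 * (Real.pi : ℂ) * Complex.I * (h + z) / h =
      2 * Real.pi * Complex.I * z / h + 2 * Real.pi * Complex.I := by field_simp; ring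
  simp only [qPow, Periodic.qParam, coe_vadd, this, Complex.exp_periodic _]

lemma qPow_one_eq {n : ℕ} (hn : n ≠ 0) : qPow 1 m = qPow n (n * m) := by
  have : (n : ℂ) ≠ 0 := mod_cast hn
  ext z
  simp only [qPow_eq_exp]
  congr 1
  push_cast
  field_simp

lemma isZeroAtImInfty_qPow (hh : 0 < h) (hm : 0 < m) : IsZeroAtImInfty (qPow h m) := by
  lift m to ℕ using hm.le
  have := (qParam_tendsto_atImInfty hh).pow m
  rw [zero_pow (by omega)] at this
  exact this.congr fun z => (qPow_natCast h z m).symm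

lemma isBoundedAtImInfty_qPow (hh : 0 < h) (hm : 0 ≤ m) : IsBoundedAtImInfty (qPow h m) := by
  rcases hm.eq_or_lt with rfl | hm
  · rw [qPow_zero]; exact const_boundedAtFilter _ 1
  · exact (isZeroAtImInfty_qPow hh hm).isBoundedAtImInfty

end qPow

section Closure

variable {h : ℝ} {F G : ℍ → ℂ}

lemma isBoundedAtImInfty_mul_qPow_mono (hh : 0 < h) {m n : ℤ} (hmn : m ≤ n)
    (hF : IsBoundedAtImInfty (F * qPow h m)) : IsBoundedAtImInfty (F * qPow h n) := by
  rw [← add_sub_cancel m n, qPow_add, ← mul_assoc]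
  exact BoundedAtFilter.mul hF (isBoundedAtImInfty_qPow hh (by omega))

lemma MeroPeriodic.of_isBounded (hh : 0 < h) (hF : MDiff F) (hp : ∀ z : ℍ, F (h +ᵥ z) = F z)
    {n : ℤ} (hb : IsBoundedAtImInfty (F * qPow h n)) : MeroPeriodic h F :=
  ⟨hh, hF, hp, n.toNat, isBoundedAtImInfty_mul_qPow_mono hh (by omega) hb⟩

lemma meroPeriodic_qPow (hh : 0 < h) (m : ℤ) : MeroPeriodic h (qPow h m) :=
  .of_isBounded hh (mdifferentiable_qPow h m) (fun z => qPow_vadd z hh.ne') (n := -m) <| by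
    rw [mul_comm, qPow_neg_mul]
    exact const_boundedAtFilter _ 1

lemma meroPeriodic_const (hh : 0 < h) (c : ℂ) : MeroPeriodic h (fun _ => c) :=
  .of_isBounded hh mdifferentiable_const (fun _ => rfl) (n := 0) <| by
    rw [qPow_zero, mul_one]
    exact const_boundedAtFilter _ c

namespace MeroPeriodic

lemma mul (hF : MeroPeriodic h F) (hG : MeroPeriodic h G) : MeroPeriodic h (F * G) := by
  obtain ⟨n, hn⟩ := hF.exists_isBounded
  obtain ⟨m, hm⟩ := hG.exists_isBounded
  refine ⟨hF.pos, hF.mdiff.mul hG.mdiff, fun z => by simp [hF.vadd_eq, hG.vadd_eq], n + m, ?_⟩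
  have : F * G * qPow h ((n + m : ℕ) : ℤ) = F * qPow h n * (G * qPow h m) := by
    push_cast
    rw [qPow_add, mul_mul_mul_comm]
  rw [this]
  exact BoundedAtFilter.mul hn hm

lemma add (hF : MeroPeriodic h F) (hG : MeroPeriodic h G) : MeroPeriodic h (F + G) := by
  obtain ⟨n, hn⟩ := hF.exists_isBounded
  obtain ⟨m, hm⟩ := hG.exists_isBounded
  refine ⟨hF.pos, hF.mdiff.add hG.mdiff, fun z => by simp [hF.vadd_eq, hG.vadd_eq], n + m, ?_⟩
  rw [add_mul]
  exact BoundedAtFilter.add (isBoundedAtImInfty_mul_qPow_mono hF.pos (by simp) hn)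
    (isBoundedAtImInfty_mul_qPow_mono hF.pos (by simp) hm)

end MeroPeriodic

/-- The algebra of holomorphic functions of period `h` that are meromorphic at `i∞`. -/
def meroPeriodicSubalgebra (hh : 0 < h) : Subalgebra ℂ (ℍ → ℂ) where
  carrier := {F | MeroPeriodic h F}
  mul_mem' hF hG := MeroPeriodic.mul hF hG
  add_mem' hF hG := MeroPeriodic.add hF hG
  algebraMap_mem' c := meroPeriodic_const hh c

namespace MeroPeriodic

lemma smul (hF : MeroPeriodic h F) (c : ℂ) : MeroPeriodic h (c • F) :=
  (meroPeriodicSubalgebra hF.pos).smul_mem hF c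

lemma sub (hF : MeroPeriodic h F) (hG : MeroPeriodic h G) : MeroPeriodic h (F - G) :=
  (meroPeriodicSubalgebra hF.pos).sub_mem hF hG

lemma sum (hh : 0 < h) {ι : Type*} {s : Finset ι} {F : ι → ℍ → ℂ}
    (hF : ∀ i ∈ s, MeroPeriodic h (F i)) : MeroPeriodic h (∑ i ∈ s, F i) :=
  (meroPeriodicSubalgebra hh).sum_mem hF

lemma prod (hh : 0 < h) {ι : Type*} {s : Finset ι} {F : ι → ℍ → ℂ}
    (hF : ∀ i ∈ s, MeroPeriodic h (F i)) : MeroPeriodic h (∏ i ∈ s, F i) :=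
  (meroPeriodicSubalgebra hh).prod_mem hF

lemma natCast_vadd_eq (hF : MeroPeriodic 1 F) (r : ℕ) (z : ℍ) : F ((r : ℝ) +ᵥ z) = F z := by
  induction r with
  | zero => simp
  | succ r ih => rw [← ih, ← hF.vadd_eq ((r : ℝ) +ᵥ z), vadd_vadd, Nat.cast_succ, add_comm]

lemma of_period_one (hF : MeroPeriodic 1 F) {n : ℕ} (hn : 0 < n) : MeroPeriodic n F := by
  obtain ⟨N, hN⟩ := hF.exists_isBounded
  refine .of_isBounded (mod_cast hn) hF.mdiff (hF.natCast_vadd_eq n) (n := n * N) ?_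
  rwa [← qPow_one_eq hn.ne']

end MeroPeriodic

end Closure

section Coefficients

variable {h : ℝ} {F G : ℍ → ℂ}

lemma continuous_horizontal_line (hF : MDiff F) :
    Continuous fun x : ℝ => F (x +ᵥ UpperHalfPlane.I) := by
  refine hF.continuous.comp (UpperHalfPlane.isEmbedding_coe.continuous_iff.2 ?_)
  have : (UpperHalfPlane.coe ∘ fun x : ℝ => (x +ᵥ UpperHalfPlane.I : ℍ)) =
    fun x : ℝ => (x : ℂ) + UpperHalfPlane.I := by ext x; simp
  rw [this]
  fun_prop

lemma qCoeff_add (hF : MDiff F) (hG : MDiff G) (m : ℤ) :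
    qCoeff h (F + G) m = qCoeff h F m + qCoeff h G m := by
  have hq := mdifferentiable_qPow h (-m)
  simp only [qCoeff, add_mul, Pi.add_apply]
  rw [intervalIntegral.integral_add, mul_add]
  exacts [(continuous_horizontal_line (hF.mul hq)).intervalIntegrable _ _,
    (continuous_horizontal_line (hG.mul hq)).intervalIntegrable _ _]

lemma qCoeff_smul (c : ℂ) (m : ℤ) : qCoeff h (c • F) m = c * qCoeff h F m := by
  simp only [qCoeff, smul_mul_assoc, Pi.smul_apply, smul_eq_mul,
    intervalIntegral.integral_const_mul]
  ring

lemma qCoeff_neg (m : ℤ) : qCoeff h (-F) m = -qCoeff h F m := by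
  simpa using qCoeff_smul (F := F) (-1) m

lemma qCoeff_sub (hF : MDiff F) (hG : MDiff G) (m : ℤ) :
    qCoeff h (F - G) m = qCoeff h F m - qCoeff h G m := by
  rw [sub_eq_add_neg, qCoeff_add hF hG.neg, qCoeff_neg, sub_eq_add_neg]

lemma qCoeff_zero (m : ℤ) : qCoeff h 0 m = 0 := by
  simpa using qCoeff_smul (F := 0) (h := h) 0 m

lemma qCoeff_sum {ι : Type*} {s : Finset ι} {F : ι → ℍ → ℂ}
    (hF : ∀ i ∈ s, MeroPeriodic h (F i)) (m : ℤ) :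
    qCoeff h (∑ i ∈ s, F i) m = ∑ i ∈ s, qCoeff h (F i) m := by
  classical
  induction s using Finset.induction_on with
  | empty => simpa using qCoeff_zero m
  | insert a s ha ih =>
    have ha' := hF a (by simp)
    have hs : ∀ i ∈ s, MeroPeriodic h (F i) := fun i hi => hF i (by simp [hi])
    rw [Finset.sum_insert ha, Finset.sum_insert ha, ← ih hs,
      qCoeff_add ha'.mdiff (MeroPeriodic.sum ha'.pos hs).mdiff]

lemma qCoeff_mul_qPow (F : ℍ → ℂ) (m n : ℤ) :
    qCoeff h (F * qPow h n) m = qCoeff h F (m - n) := by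
  rw [qCoeff, qCoeff, mul_assoc, ← qPow_add, neg_sub, sub_eq_add_neg]

lemma periodic_comp_ofComplex_of_vadd_eq (hp : ∀ z : ℍ, F (h +ᵥ z) = F z) :
    Periodic (F ∘ ofComplex) h := by
  intro w
  by_cases! hw : 0 < Complex.im w
  · have hw' : 0 < Complex.im (w + h) := by simpa using hw
    simp only [comp_apply, ofComplex_apply_of_im_pos hw, ofComplex_apply_of_im_pos hw']
    rw [← hp ⟨w, hw⟩]
    congr 1
    ext
    simp [add_comm]
  · have hw' : Complex.im (w + h) ≤ 0 := by simpa using hw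
    simp [ofComplex_apply_of_im_nonpos hw, ofComplex_apply_of_im_nonpos hw']

namespace MeroPeriodic

lemma periodic (hF : MeroPeriodic h F) : Periodic (F ∘ ofComplex) h :=
  periodic_comp_ofComplex_of_vadd_eq hF.vadd_eq

lemma analyticAt_cuspFunction (hF : MeroPeriodic h F) (hb : IsBoundedAtImInfty F) :
    AnalyticAt ℂ (cuspFunction h F) 0 :=
  analyticAt_cuspFunction_zero hF.pos hF.periodic hF.mdiff hb

lemma qCoeff_natCast (hF : MeroPeriodic h F) (hb : IsBoundedAtImInfty F) (n : ℕ) :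
    qCoeff h F n = (qExpansion h F).coeff n := by
  rw [qExpansion_coeff_eq_intervalIntegral hF.pos hF.periodic hF.mdiff hb n one_pos, qCoeff]
  congr 2
  ext x
  have : (x +ᵥ UpperHalfPlane.I : ℍ) = ⟨x + (1 : ℝ) * Complex.I, by simp⟩ := by ext; simp
  rw [this]
  simp [qPow, mul_comm]

lemma tendsto_qCoeff_zero (hF : MeroPeriodic h F) (hb : IsBoundedAtImInfty F) :
    Tendsto F atImInfty (𝓝 (qCoeff h F 0)) := by
  have ha := hF.analyticAt_cuspFunction hb
  have h0 : qCoeff h F 0 = cuspFunction h F 0 := by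
    rw [← Nat.cast_zero, hF.qCoeff_natCast hb, qExpansion_coeff_zero hF.pos ha hF.periodic,
      cuspFunction_apply_zero hF.pos ha hF.periodic]
  have hF_eq : (cuspFunction h F ∘ fun τ ↦ Periodic.qParam h τ : ℍ → ℂ) = F :=
    funext fun τ => by simpa using eq_cuspFunction τ hF.pos.ne' hF.periodic
  simpa [h0, hF_eq] using ha.continuousAt.tendsto.comp (qParam_tendsto_atImInfty hF.pos)

lemma qCoeff_eq_zero_of_isZero (hF : MeroPeriodic h F) (hz : IsZeroAtImInfty F) {m : ℤ}
    (hm : m ≤ 0) : qCoeff h F m = 0 := by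
  have hq := meroPeriodic_qPow hF.pos (-m)
  have hz' : IsZeroAtImInfty (F * qPow h (-m)) :=
    hz.mul_boundedAtFilter (isBoundedAtImInfty_qPow hF.pos (by omega))
  have := tendsto_nhds_unique ((hF.mul hq).tendsto_qCoeff_zero hz'.isBoundedAtImInfty) hz'
  rwa [qCoeff_mul_qPow, zero_sub, neg_neg] at this

lemma qCoeff_eq_zero_of_lt (hF : MeroPeriodic h F) {M : ℤ}
    (hb : IsBoundedAtImInfty (F * qPow h (-M))) {m : ℤ} (hm : m < M) : qCoeff h F m = 0 := by
  have hz : IsZeroAtImInfty (F * qPow h (-M) * qPow h 1) :=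
    BoundedAtFilter.mul_zeroAtFilter hb (isZeroAtImInfty_qPow hF.pos one_pos)
  rw [mul_assoc, ← qPow_add] at hz
  have := (hF.mul (meroPeriodic_qPow hF.pos _)).qCoeff_eq_zero_of_isZero hz
    (m := m + (-M + 1)) (by omega)
  rwa [qCoeff_mul_qPow, add_sub_cancel_right] at this

lemma exists_qCoeff_eq_zero (hF : MeroPeriodic h F) :
    ∃ N : ℕ, ∀ m < -(N : ℤ), qCoeff h F m = 0 := by
  obtain ⟨n, hn⟩ := hF.exists_isBounded
  exact ⟨n, fun m hm => hF.qCoeff_eq_zero_of_lt (M := -n) (by rwa [neg_neg]) hm⟩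

lemma hasSum_nat (hF : MeroPeriodic h F) {N : ℤ} (hb : IsBoundedAtImInfty (F * qPow h N))
    (z : ℍ) : HasSum (fun n : ℕ => qCoeff h F (n - N) * qPow h (n - N) z) (F z) := by
  have hG := hF.mul (meroPeriodic_qPow hF.pos N)
  have hs := (hasSum_qExpansion hF.pos hG.periodic hG.mdiff hb z).mul_right (qPow h (-N) z)
  have hFz : (F * qPow h N) z * qPow h (-N) z = F z := by
    rw [Pi.mul_apply]
    linear_combination F z * qPow_neg_mul_apply h N z
  rw [hFz] at hs
  refine hs.congr_fun fun n => ?_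
  rw [← hG.qCoeff_natCast hb, qCoeff_mul_qPow, sub_eq_add_neg (n : ℤ) N, qPow_add, Pi.mul_apply,
    qPow_natCast, smul_eq_mul, mul_assoc]

end MeroPeriodic

lemma hasSum_nat_sub_iff {f : ℤ → ℂ} {N : ℤ} (hf : ∀ m < -N, f m = 0) (a : ℂ) :
    HasSum (fun n : ℕ => f (n - N)) a ↔ HasSum f a := by
  have hi : Function.Injective (fun n : ℕ => (n : ℤ) - N) := fun a b hab => by simpa using hab
  refine hi.hasSum_iff (f := f) fun m hm => hf m ?_
  by_contra hc
  exact hm ⟨(m + N).toNat, by simp only; omega⟩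

lemma MeroPeriodic.hasSum (hF : MeroPeriodic h F) (z : ℍ) :
    HasSum (fun m : ℤ => qCoeff h F m * qPow h m z) (F z) := by
  obtain ⟨n, hn⟩ := hF.exists_isBounded
  refine (hasSum_nat_sub_iff (N := n) (fun m hm => ?_) _).1 (hF.hasSum_nat hn z)
  rw [hF.qCoeff_eq_zero_of_lt (M := -n) (by rwa [neg_neg]) hm, zero_mul]

lemma MeroPeriodic.ext (hF : MeroPeriodic h F) (hG : MeroPeriodic h G)
    (hc : ∀ m, qCoeff h F m = qCoeff h G m) : F = G :=
  funext fun z => (hF.hasSum z).unique (by simpa only [hc] using hG.hasSum z)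

section OfHasSum

variable {c : ℤ → ℂ} {N : ℤ}

lemma hasSum_mul_qPow_of_hasSum (hc : ∀ m < -N, c m = 0)
    (hs : ∀ z, HasSum (fun m : ℤ => c m * qPow h m z) (F z)) (z : ℍ) :
    HasSum (fun n : ℕ => c (n - N) • Periodic.qParam h z ^ n) ((F * qPow h N) z) := by
  have := ((hasSum_nat_sub_iff (N := N) (f := fun m => c m * qPow h m z)
    (fun m hm => by simp [hc m hm]) _).2 (hs z)).mul_right (qPow h N z)
  refine this.congr_fun fun n => ?_
  rw [smul_eq_mul, ← qPow_natCast, mul_assoc, ← Pi.mul_apply (qPow h _), ← qPow_add,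
    sub_add_cancel]

lemma isBoundedAtImInfty_of_hasSum (hh : 0 < h) (hc : ∀ m < -N, c m = 0)
    (hs : ∀ z, HasSum (fun m : ℤ => c m * qPow h m z) (F z)) :
    IsBoundedAtImInfty (F * qPow h N) :=
  isBoundedAtImInfty_of_hasSum_qExpansion hh (hasSum_mul_qPow_of_hasSum hc hs)

lemma meroPeriodic_of_hasSum (hh : 0 < h) (hF : MDiff F) (hc : ∀ m < -N, c m = 0)
    (hs : ∀ z, HasSum (fun m : ℤ => c m * qPow h m z) (F z)) : MeroPeriodic h F := by
  refine .of_isBounded hh hF (fun z => (hs (h +ᵥ z)).unique ?_)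
    (isBoundedAtImInfty_of_hasSum hh hc hs)
  simpa only [qPow_vadd _ hh.ne'] using hs z

lemma coeff_qExpansion_eq_of_hasSum (hF : MeroPeriodic h F) (hb : IsBoundedAtImInfty F)
    {c : ℕ → ℂ} (hs : ∀ z : ℍ, HasSum (fun n => c n • Periodic.qParam h z ^ n) (F z)) (n : ℕ) :
    (qExpansion h F).coeff n = c n := by
  have ha := hF.analyticAt_cuspFunction hb
  have h1 := (hasFPowerSeriesOnBall_cuspFunction hF.pos ha hs).hasFPowerSeriesAt
  have h2 := (hasFPowerSeriesOnBall_cuspFunction hF.pos ha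
    (hasSum_qExpansion hF.pos hF.periodic hF.mdiff hb)).hasFPowerSeriesAt
  simpa using congrArg (fun p => p.coeff n) (h2.eq_formalMultilinearSeries h1)

lemma qCoeff_eq_of_hasSum (hh : 0 < h) (hF : MDiff F) (hc : ∀ m < -N, c m = 0)
    (hs : ∀ z, HasSum (fun m : ℤ => c m * qPow h m z) (F z)) : qCoeff h F = c := by
  have hM := meroPeriodic_of_hasSum hh hF hc hs
  have hb := isBoundedAtImInfty_of_hasSum hh hc hs
  have hG := hM.mul (meroPeriodic_qPow hh N)
  ext m
  by_cases! hm : m < -N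
  · rw [hM.qCoeff_eq_zero_of_lt (M := -N) (by rwa [neg_neg]) hm, hc m hm]
  · have hm' : m = (m + N).toNat - N := by omega
    rw [hm', ← qCoeff_mul_qPow, hG.qCoeff_natCast hb,
      coeff_qExpansion_eq_of_hasSum hG hb (hasSum_mul_qPow_of_hasSum hc hs)]

lemma qCoeff_qPow (hh : 0 < h) (m n : ℤ) : qCoeff h (qPow h m) n = if n = m then 1 else 0 := by
  refine congrFun (qCoeff_eq_of_hasSum (c := fun n => if n = m then 1 else 0) (N := -m) hh
    (mdifferentiable_qPow h m) (fun n hn => if_neg (by omega)) fun z => ?_) n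
  convert hasSum_ite_eq m (qPow h m z) using 2 with n
  split_ifs with hn
  · rw [hn, one_mul]
  · rw [zero_mul]

end OfHasSum

namespace MeroPeriodic

lemma isBounded_mul_qPow_of_qCoeff (hF : MeroPeriodic h F) {M : ℤ}
    (hc : ∀ m < M, qCoeff h F m = 0) : IsBoundedAtImInfty (F * qPow h (-M)) :=
  isBoundedAtImInfty_of_hasSum hF.pos (by simpa using hc) hF.hasSum

lemma isBounded_of_qCoeff (hF : MeroPeriodic h F) (hc : ∀ m < 0, qCoeff h F m = 0) :
    IsBoundedAtImInfty F := by
  simpa [qPow_zero] using hF.isBounded_mul_qPow_of_qCoeff hc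

lemma isZero_of_qCoeff (hF : MeroPeriodic h F) (hc : ∀ m ≤ 0, qCoeff h F m = 0) :
    IsZeroAtImInfty F := by
  have hb := hF.isBounded_mul_qPow_of_qCoeff (M := 1) fun m hm => hc m (by omega)
  have hz : IsZeroAtImInfty (F * qPow h (-1) * qPow h 1) :=
    BoundedAtFilter.mul_zeroAtFilter hb (isZeroAtImInfty_qPow hF.pos one_pos)
  rwa [mul_assoc, qPow_neg_mul, mul_one] at hz

/-- Boundedness near `i∞` extends to a fixed half plane because the terms of the Fourier series
are largest on its boundary. -/
lemma exists_norm_le_of_isBounded (hF : MeroPeriodic h F) (hb : IsBoundedAtImInfty F) :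
    ∃ C : ℝ, ∀ z : ℍ, 1 ≤ z.im → ‖F z‖ ≤ C := by
  have hs := hF.hasSum_nat (N := 0) (by simpa [qPow_zero] using hb)
  have hI := (hs UpperHalfPlane.I).summable.norm
  refine ⟨_, fun z hz => (hs z).tsum_eq ▸ tsum_of_norm_bounded hI.hasSum fun n => ?_⟩
  rw [norm_mul, norm_mul, norm_qPow, norm_qPow, sub_zero, zpow_natCast, zpow_natCast,
    UpperHalfPlane.I_im]
  gcongr ?_ * Real.exp (?_ / h) ^ n
  · exact hF.pos.le
  · nlinarith [Real.pi_pos]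

end MeroPeriodic

section Functional

variable {hh : 0 < h}

lemma isBoundedAtImInfty_sub_sum_mul_qPow {M : ℤ} {N : ℕ} (hF : MeroPeriodic h F)
    (hN : ∀ m < -(N : ℤ), qCoeff h F m = 0) :
    IsBoundedAtImInfty
      ((F - ∑ m ∈ Finset.Ico (-(N : ℤ)) M, qCoeff h F m • qPow h m) * qPow h (-M)) := by
  have hq : ∀ i ∈ Finset.Ico (-(N : ℤ)) M, MeroPeriodic h (qCoeff h F i • qPow h i) :=
    fun i _ => (meroPeriodic_qPow hF.pos i).smul _
  have hS := MeroPeriodic.sum hF.pos hq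
  refine (hF.sub hS).isBounded_mul_qPow_of_qCoeff fun m hm => ?_
  rw [qCoeff_sub hF.mdiff hS.mdiff, qCoeff_sum hq]
  simp only [qCoeff_smul, qCoeff_qPow hF.pos, mul_ite, mul_one, mul_zero, Finset.sum_ite_eq,
    Finset.mem_Ico]
  split_ifs with h1
  · exact sub_self _
  · rw [hN m (by omega), sub_zero]

lemma linearMap_apply_eq_finsum (L : meroPeriodicSubalgebra hh →ₗ[ℂ] ℂ) {M : ℤ}
    (hL : ∀ G : meroPeriodicSubalgebra hh, IsBoundedAtImInfty (G.1 * qPow h (-M)) → L G = 0)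
    (G : meroPeriodicSubalgebra hh) :
    L G = ∑ᶠ m : ℤ, qCoeff h G.1 m * L ⟨qPow h m, meroPeriodic_qPow hh m⟩ := by
  have hG : MeroPeriodic h G.1 := G.2
  obtain ⟨N, hN⟩ := hG.exists_qCoeff_eq_zero
  have hq : ∀ m : ℤ, M ≤ m → L ⟨qPow h m, meroPeriodic_qPow hh m⟩ = 0 := by
    refine fun m hm => hL _ ?_
    rw [← qPow_add]
    exact isBoundedAtImInfty_qPow hh (by omega)
  have hsupp : (support fun m : ℤ =>
      qCoeff h G.1 m * L ⟨qPow h m, meroPeriodic_qPow hh m⟩) ⊆ Finset.Ico (-(N : ℤ)) M := by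
    intro m hm
    rw [Finset.coe_Ico, Set.mem_Ico]
    by_contra! hc
    by_cases! hmN : -(N : ℤ) ≤ m
    · exact hm (by simp only [hq m (hc hmN), mul_zero])
    · exact hm (by simp only [hN m hmN, zero_mul])
  rw [finsum_eq_sum_of_support_subset _ hsupp]
  have hR := hL (G - ∑ m ∈ Finset.Ico (-(N : ℤ)) M, qCoeff h G.1 m •
    ⟨qPow h m, meroPeriodic_qPow hh m⟩) (by
      simpa using isBoundedAtImInfty_sub_sum_mul_qPow (M := M) hG hN)
  simpa only [map_sub, map_sum, map_smul, smul_eq_mul, sub_eq_zero] using hR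

lemma MeroPeriodic.qCoeff_mul_zero (hF : MeroPeriodic h F) (hG : MeroPeriodic h G) :
    qCoeff h (F * G) 0 = ∑ᶠ m : ℤ, qCoeff h G m * qCoeff h F (-m) := by
  let L : meroPeriodicSubalgebra hF.pos →ₗ[ℂ] ℂ :=
    { toFun := fun G => qCoeff h (F * G.1) 0
      map_add' := fun A B => by
        have hA : MeroPeriodic h A.1 := A.2
        have hB : MeroPeriodic h B.1 := B.2
        rw [Subalgebra.coe_add, mul_add, qCoeff_add (hF.mul hA).mdiff (hF.mul hB).mdiff]
      map_smul' := fun c A => by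
        rw [Subalgebra.coe_smul, mul_smul_comm, qCoeff_smul, RingHom.id_apply, smul_eq_mul] }
  obtain ⟨n, hn⟩ := hF.exists_isBounded
  refine (linearMap_apply_eq_finsum L (M := n + 1) (fun A hb => ?_) ⟨G, hG⟩).trans
    (finsum_congr fun m => ?_)
  · have hA : MeroPeriodic h A.1 := A.2
    refine (hF.mul hA).qCoeff_eq_zero_of_lt (M := 1) ?_ zero_lt_one
    have hFA : F * qPow h n * (A.1 * qPow h (-(n + 1))) = F * A.1 * qPow h (-1) := by
      rw [neg_add, qPow_add]
      linear_combination (F * A.1 * qPow h (-1)) * qPow_neg_mul h n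
    exact hFA ▸ BoundedAtFilter.mul hn hb
  · change _ * qCoeff h (F * qPow h m) 0 = _
    rw [qCoeff_mul_qPow, zero_sub]

end Functional

end Coefficients

/-! ### Level one forms with poles at infinity -/

/-- Weakly holomorphic modular forms of weight `w` for `SL(2, ℤ)`. -/
structure IsLevelOneForm (w : ℤ) (F : ℍ → ℂ) : Prop where
  mdiff : MDiff F
  smul_eq : ∀ (γ : SL(2, ℤ)) (z : ℍ), F (γ • z) = denom γ z ^ w * F z
  exists_isBounded : ∃ n : ℕ, IsBoundedAtImInfty (F * qPow 1 n)

section LevelOneForm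

variable {w v : ℤ} {F G : ℍ → ℂ}

lemma forall_smul_eq_iff_slash_eq (γ : SL(2, ℤ)) :
    (∀ z : ℍ, F (γ • z) = denom γ z ^ w * F z) ↔ F ∣[w] γ = F := by
  refine Iff.trans (forall_congr' fun z => ?_) funext_iff.symm
  rw [ModularForm.SL_slash_apply, zpow_neg,
    mul_inv_eq_iff_eq_mul₀ (zpow_ne_zero w (denom_ne_zero γ z)), mul_comm (F z)]

lemma denom_T (z : ℍ) : denom (ModularGroup.T : SL(2, ℤ)) z = 1 := by
  rw [ModularGroup.denom_apply]
  simp [ModularGroup.T]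

namespace IsLevelOneForm

lemma slash_eq (hF : IsLevelOneForm w F) (γ : SL(2, ℤ)) : F ∣[w] γ = F :=
  (forall_smul_eq_iff_slash_eq γ).1 (hF.smul_eq γ)

lemma meroPeriodic (hF : IsLevelOneForm w F) : MeroPeriodic 1 F :=
  ⟨one_pos, hF.mdiff, fun z => by rw [← modular_T_smul, hF.smul_eq, denom_T, one_zpow, one_mul],
    hF.exists_isBounded⟩

lemma of_slash_eq_of_isBounded (hF : MDiff F) (hs : ∀ γ : SL(2, ℤ), F ∣[w] γ = F)
    (hb : IsBoundedAtImInfty F) : IsLevelOneForm w F :=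
  ⟨hF, fun γ => (forall_smul_eq_iff_slash_eq γ).2 (hs γ), 0, by simpa [qPow_zero] using hb⟩

lemma mul (hF : IsLevelOneForm w F) (hG : IsLevelOneForm v G) :
    IsLevelOneForm (w + v) (F * G) where
  mdiff := hF.mdiff.mul hG.mdiff
  smul_eq γ z := by
    simp only [Pi.mul_apply, hF.smul_eq, hG.smul_eq, zpow_add₀ (denom_ne_zero γ z)]
    ring
  exists_isBounded := (hF.meroPeriodic.mul hG.meroPeriodic).exists_isBounded

lemma add (hF : IsLevelOneForm w F) (hG : IsLevelOneForm w G) : IsLevelOneForm w (F + G) where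
  mdiff := hF.mdiff.add hG.mdiff
  smul_eq γ z := by simp only [Pi.add_apply, hF.smul_eq, hG.smul_eq, mul_add]
  exists_isBounded := (hF.meroPeriodic.add hG.meroPeriodic).exists_isBounded

lemma smul (hF : IsLevelOneForm w F) (c : ℂ) : IsLevelOneForm w (c • F) where
  mdiff := (hF.meroPeriodic.smul c).mdiff
  smul_eq γ z := by simp only [Pi.smul_apply, hF.smul_eq, smul_eq_mul, mul_left_comm]
  exists_isBounded := (hF.meroPeriodic.smul c).exists_isBounded

lemma sub (hF : IsLevelOneForm w F) (hG : IsLevelOneForm w G) : IsLevelOneForm w (F - G) := by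
  simpa [sub_eq_add_neg] using hF.add (hG.smul (-1))

lemma zero : IsLevelOneForm w 0 :=
  ⟨mdifferentiable_const, by simp, (meroPeriodic_const one_pos 0).exists_isBounded⟩

lemma one : IsLevelOneForm 0 1 :=
  ⟨mdifferentiable_const, by simp, (meroPeriodic_const one_pos 1).exists_isBounded⟩

lemma pow (hF : IsLevelOneForm w F) (n : ℕ) : IsLevelOneForm (n * w) (F ^ n) := by
  induction n with
  | zero => simpa using one
  | succ n ih => simpa [pow_succ, add_mul] using ih.mul hF

/-- A level one form bounded at `i∞`, bundled as a modular form. -/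
def toModularForm (hF : IsLevelOneForm w F) (hb : IsBoundedAtImInfty F) : ModularForm 𝒮ℒ w where
  toFun := F
  slash_action_eq' := fun _ ⟨γ, hγ⟩ ↦ hγ ▸ hF.slash_eq γ
  holo' := hF.mdiff
  bdd_at_cusps' {c} hc := by
    rw [Subgroup.IsArithmetic.isCusp_iff_isCusp_SL2Z] at hc
    rw [OnePoint.isBoundedAt_iff_forall_SL2Z hc]
    intro γ _
    rwa [hF.slash_eq γ]

lemma eq_zero_of_weight_two (hF : IsLevelOneForm 2 F) (hb : IsBoundedAtImInfty F) : F = 0 :=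
  have := rank_zero_iff.1 ModularForm.levelOne_weight_two_rank_zero
  congrArg DFunLike.coe (Subsingleton.elim (hF.toModularForm hb) 0)

lemma eq_zero_of_weight_neg (hw : w < 0) (hF : IsLevelOneForm w F) (hb : IsBoundedAtImInfty F) :
    F = 0 :=
  ModularFormClass.levelOne_neg_weight_eq_zero hw (hF.toModularForm hb)

lemma exists_eq_const (hF : IsLevelOneForm 0 F) (hb : IsBoundedAtImInfty F) :
    ∃ c, F = fun _ => c :=
  ModularFormClass.levelOne_weight_zero_const (hF.toModularForm hb)

lemma eq_zero_of_odd (hw : Odd w) (hF : IsLevelOneForm w F) : F = 0 := by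
  ext z
  have := hF.smul_eq (-1) z
  rw [ModularGroup.SL_neg_smul, one_smul, ModularGroup.denom_apply] at this
  simpa [hw.neg_one_zpow, self_eq_neg] using this

end IsLevelOneForm

lemma isBoundedAtImInfty_modularForm (f : ModularForm 𝒮ℒ w) : IsBoundedAtImInfty f :=
  have : Fact (IsCusp OnePoint.infty 𝒮ℒ) :=
    ⟨Subgroup.isCusp_of_mem_strictPeriods one_pos one_mem_strictPeriods_SL⟩
  ModularFormClass.bdd_at_infty f

lemma isLevelOneForm_modularForm (f : ModularForm 𝒮ℒ w) : IsLevelOneForm w f :=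
  .of_slash_eq_of_isBounded f.holo' (fun γ => f.slash_action_eq' _ ⟨γ, rfl⟩)
    (isBoundedAtImInfty_modularForm f)

end LevelOneForm

section Derivative

open Derivative

variable {F : ℍ → ℂ}

lemma hasDerivAt_qParam_one (w : ℂ) :
    HasDerivAt (Periodic.qParam 1) (2 * Real.pi * Complex.I * Periodic.qParam 1 w) w := by
  have h : HasDerivAt (fun w : ℂ => 2 * Real.pi * Complex.I * w / (1 : ℝ))
      (2 * Real.pi * Complex.I) w := by
    simpa using (hasDerivAt_id w).const_mul (2 * Real.pi * Complex.I)
  exact h.cexp.congr_deriv (mul_comm _ _)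

lemma normalizedDerivOfComplex_eq_of_comp_qParam {g : ℂ → ℂ}
    (hF : ∀ z : ℍ, F z = g (Periodic.qParam 1 z)) {z : ℍ}
    (hg : DifferentiableAt ℂ g (Periodic.qParam 1 z)) :
    normalizedDerivOfComplex F z = Periodic.qParam 1 z * deriv g (Periodic.qParam 1 z) := by
  have heq : F ∘ ofComplex =ᶠ[𝓝 (z : ℂ)] g ∘ Periodic.qParam 1 := by
    filter_upwards [isOpen_upperHalfPlaneSet.mem_nhds z.im_pos] with w hw
    simp only [comp_apply, hF, ofComplex_apply_of_im_pos hw]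
  have hd := hg.hasDerivAt.comp (z : ℂ) (hasDerivAt_qParam_one z)
  rw [normalizedDerivOfComplex, (hd.congr_of_eventuallyEq heq).deriv]
  have := Complex.two_pi_I_ne_zero
  field_simp

lemma normalizedDerivOfComplex_qPow (m : ℤ) :
    normalizedDerivOfComplex (qPow 1 m) = (m : ℂ) • qPow 1 m := by
  ext z
  have hq := Periodic.qParam_ne_zero (h := 1) (z : ℂ)
  have hd := hasDerivAt_zpow m _ (Or.inl hq)
  rw [normalizedDerivOfComplex_eq_of_comp_qParam (F := qPow 1 m) (fun _ => rfl)
    hd.differentiableAt, hd.deriv, zpow_sub_one₀ hq, Pi.smul_apply, qPow, smul_eq_mul]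
  field_simp

lemma MeroPeriodic.isBounded_normalizedDeriv (hF : MeroPeriodic 1 F) (hb : IsBoundedAtImInfty F) :
    IsBoundedAtImInfty (normalizedDerivOfComplex F) := by
  have hD (z : ℍ) := normalizedDerivOfComplex_eq_of_comp_qParam (z := z)
    (fun z => (UpperHalfPlane.eq_cuspFunction z one_ne_zero hF.periodic).symm)
    (differentiableAt_cuspFunction one_pos hF.periodic hF.mdiff hb
      (Periodic.norm_qParam_lt_one one_pos z.im_pos))
  have hq := qParam_tendsto_atImInfty one_pos
  have hlim := hq.mul ((hF.analyticAt_cuspFunction hb).deriv.continuousAt.tendsto.comp hq)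
  exact (hlim.congr fun z => (hD z).symm).isBigO_one ℝ

lemma normalizedDerivOfComplex_vadd_one (hp : ∀ z : ℍ, F ((1 : ℝ) +ᵥ z) = F z) (z : ℍ) :
    normalizedDerivOfComplex F ((1 : ℝ) +ᵥ z) = normalizedDerivOfComplex F z := by
  have hF : F ∘ ofComplex = fun w => (F ∘ ofComplex) (w + (1 : ℝ)) :=
    funext fun w => (periodic_comp_ofComplex_of_vadd_eq hp w).symm
  rw [normalizedDerivOfComplex, normalizedDerivOfComplex]
  conv_rhs => rw [hF, deriv_comp_add_const]
  rw [coe_vadd, add_comm]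

lemma MeroPeriodic.normalizedDeriv (hF : MeroPeriodic 1 F) :
    MeroPeriodic 1 (normalizedDerivOfComplex F) := by
  obtain ⟨n, hn⟩ := hF.exists_isBounded
  have hb := (hF.mul (meroPeriodic_qPow one_pos n)).isBounded_normalizedDeriv hn
  rw [normalizedDerivOfComplex_mul _ _ hF.mdiff (mdifferentiable_qPow 1 n),
    normalizedDerivOfComplex_qPow, mul_smul_comm] at hb
  refine ⟨one_pos, normalizedDerivOfComplex_mdifferentiable hF.mdiff,
    normalizedDerivOfComplex_vadd_one hF.vadd_eq, n, ?_⟩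
  have h := BoundedAtFilter.add hb (BoundedAtFilter.neg (BoundedAtFilter.smul (n : ℂ) hn))
  rw [Int.cast_natCast, add_neg_cancel_right] at h
  exact h

lemma hasDerivAt_horizontal_line (hF : MDiff F) (x : ℝ) :
    HasDerivAt (fun x : ℝ => F (x +ᵥ UpperHalfPlane.I))
      (2 * Real.pi * Complex.I * normalizedDerivOfComplex F (x +ᵥ UpperHalfPlane.I)) x := by
  have hline : HasDerivAt (fun x : ℝ => (x : ℂ) + Complex.I) 1 x :=
    (Complex.ofRealCLM.hasDerivAt (x := x)).add_const Complex.I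
  have hcoe (y : ℝ) : ((y +ᵥ UpperHalfPlane.I : ℍ) : ℂ) = y + Complex.I := by simp
  have hd := (mdifferentiableAt_iff.1 (hF (x +ᵥ UpperHalfPlane.I))).hasDerivAt
  rw [hcoe] at hd
  have hcomp := HasDerivAt.scomp x hd hline
  have heq : (F ∘ ofComplex) ∘ (fun x : ℝ => (x : ℂ) + Complex.I) =
      fun x : ℝ => F (x +ᵥ UpperHalfPlane.I) :=
    funext fun y => by rw [comp_apply, comp_apply, ← hcoe, ofComplex_apply]
  rwa [heq, one_smul, ← hcoe, ← mul_inv_cancel_left₀ Complex.two_pi_I_ne_zero (deriv _ _)] at hcomp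

lemma MeroPeriodic.qCoeff_normalizedDeriv_zero (hF : MeroPeriodic 1 F) :
    qCoeff 1 (normalizedDerivOfComplex F) 0 = 0 := by
  have hint := intervalIntegral.integral_eq_sub_of_hasDerivAt
    (fun x _ => hasDerivAt_horizontal_line hF.mdiff x) (a := 0) (b := 1)
    (((continuous_horizontal_line hF.normalizedDeriv.mdiff).const_mul _).intervalIntegrable _ _)
  rw [intervalIntegral.integral_const_mul, hF.vadd_eq, zero_vadd, sub_self] at hint
  simp [qCoeff, qPow_zero, (mul_eq_zero.1 hint).resolve_left Complex.two_pi_I_ne_zero]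

lemma MeroPeriodic.qCoeff_normalizedDeriv (hF : MeroPeriodic 1 F) (m : ℤ) :
    qCoeff 1 (normalizedDerivOfComplex F) m = m * qCoeff 1 F m := by
  have hq := meroPeriodic_qPow one_pos (-m)
  have h := (hF.mul hq).qCoeff_normalizedDeriv_zero
  rw [normalizedDerivOfComplex_mul _ _ hF.mdiff hq.mdiff, normalizedDerivOfComplex_qPow,
    qCoeff_add (hF.normalizedDeriv.mul hq).mdiff (hF.mul (hq.smul _)).mdiff, mul_smul_comm,
    qCoeff_smul, qCoeff_mul_qPow, qCoeff_mul_qPow, zero_sub, neg_neg] at h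
  push_cast at h
  linear_combination h

lemma IsLevelOneForm.normalizedDeriv (hF : IsLevelOneForm 0 F) :
    IsLevelOneForm 2 (normalizedDerivOfComplex F) where
  mdiff := hF.meroPeriodic.normalizedDeriv.mdiff
  smul_eq γ := by
    refine (forall_smul_eq_iff_slash_eq γ).2 ?_
    have h := normalizedDerivOfComplex_SL_slash (k := 0) hF.mdiff (γ := γ)
    rw [hF.slash_eq γ, zero_add] at h
    conv_rhs => rw [h]
    ext z
    simp
  exists_isBounded := hF.meroPeriodic.normalizedDeriv.exists_isBounded

end Derivative

/-- `F` is a `q`-series with leading term `q ^ n`. -/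
def HasMonicLead (F : ℍ → ℂ) (n : ℤ) : Prop := Tendsto (F * qPow 1 (-n)) atImInfty (𝓝 1)

namespace HasMonicLead

variable {F G : ℍ → ℂ} {m n : ℤ}

lemma mul (hF : HasMonicLead F m) (hG : HasMonicLead G n) : HasMonicLead (F * G) (m + n) := by
  have h := Tendsto.mul hF hG
  rw [one_mul] at h
  refine h.congr fun z => ?_
  simp only [neg_add, qPow_add, Pi.mul_apply]
  ring

lemma one : HasMonicLead 1 0 := by
  simp only [HasMonicLead, neg_zero, qPow_zero, mul_one]
  exact tendsto_const_nhds

lemma pow (hF : HasMonicLead F m) (n : ℕ) : HasMonicLead (F ^ n) (n * m) := by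
  induction n with
  | zero => simpa using one
  | succ n ih => simpa [pow_succ, add_mul] using ih.mul hF

lemma zpow (hF : HasMonicLead F m) (n : ℤ) : HasMonicLead (fun z => F z ^ n) (m * n) := by
  have h := Tendsto.zpow₀ hF n (Or.inl one_ne_zero)
  rw [one_zpow] at h
  refine h.congr fun z => ?_
  rw [Pi.mul_apply, mul_zpow, Pi.mul_apply, qPow, qPow, ← zpow_mul, neg_mul]

lemma isBounded (hF : HasMonicLead F n) : IsBoundedAtImInfty (F * qPow 1 (-n)) :=
  Tendsto.isBigO_one ℝ hF

lemma qCoeff_eq_one (hF : HasMonicLead F n) (hp : MeroPeriodic 1 F) : qCoeff 1 F n = 1 := by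
  have h := tendsto_nhds_unique
    ((hp.mul (meroPeriodic_qPow one_pos (-n))).tendsto_qCoeff_zero hF.isBounded) hF
  rwa [qCoeff_mul_qPow, zero_sub, neg_neg] at h

lemma qCoeff_eq_zero (hF : HasMonicLead F n) (hp : MeroPeriodic 1 F) (hm : m < n) :
    qCoeff 1 F m = 0 :=
  hp.qCoeff_eq_zero_of_lt hF.isBounded hm

lemma of_qCoeff (hp : MeroPeriodic 1 F) (h1 : qCoeff 1 F n = 1)
    (h0 : ∀ m < n, qCoeff 1 F m = 0) : HasMonicLead F n := by
  have h := (hp.mul (meroPeriodic_qPow one_pos (-n))).tendsto_qCoeff_zero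
    (hp.isBounded_mul_qPow_of_qCoeff h0)
  rwa [qCoeff_mul_qPow, zero_sub, neg_neg, h1] at h

end HasMonicLead

open ModularForm EisensteinSeries

lemma isLevelOneForm_E₄ : IsLevelOneForm 4 E₄ := isLevelOneForm_modularForm E₄

lemma isLevelOneForm_E₆ : IsLevelOneForm 6 E₆ := isLevelOneForm_modularForm E₆

lemma hasMonicLead_E {k : ℕ} (hk : 3 ≤ k) (hk2 : Even k) : HasMonicLead (E hk) 0 := by
  have hp := (isLevelOneForm_modularForm (E hk)).meroPeriodic
  have hb := isBoundedAtImInfty_modularForm (E hk)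
  refine .of_qCoeff hp ?_ fun m hm =>
    hp.qCoeff_eq_zero_of_lt (by rwa [neg_zero, qPow_zero, mul_one]) hm
  rw [← Nat.cast_zero, hp.qCoeff_natCast hb, E_qExpansion_coeff_zero _ hk2]

lemma isLevelOneForm_discriminant : IsLevelOneForm 12 discriminant :=
  .of_slash_eq_of_isBounded CuspForm.discriminant.holo'
    (fun γ => CuspForm.discriminant.slash_action_eq' _ ⟨γ, rfl⟩)
    discriminant_isZeroAtImInfty.isBoundedAtImInfty

lemma hasMonicLead_discriminant : HasMonicLead discriminant 1 := by
  have hp := isLevelOneForm_discriminant.meroPeriodic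
  refine .of_qCoeff hp ?_ fun m hm =>
    hp.qCoeff_eq_zero_of_isZero discriminant_isZeroAtImInfty (by omega)
  exact (hp.qCoeff_natCast discriminant_isZeroAtImInfty.isBoundedAtImInfty 1).trans
    discriminant_qExpansion_coeff_one

lemma isLevelOneForm_discriminant_zpow (c : ℤ) :
    IsLevelOneForm (12 * c) fun z => discriminant z ^ c where
  mdiff := by
    have hpow : MDiff fun z => discriminant z ^ c.natAbs :=
      isLevelOneForm_discriminant.mdiff.pow c.natAbs
    rcases c.natAbs_eq with h | h <;> rw [h]
    · simpa only [zpow_natCast] using hpow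
    · simp only [zpow_neg, zpow_natCast]
      exact hpow.inv fun z => pow_ne_zero _ (discriminant_ne_zero z)
  smul_eq γ z := by rw [isLevelOneForm_discriminant.smul_eq, mul_zpow, ← zpow_mul]
  exists_isBounded := ⟨(-c).toNat, isBoundedAtImInfty_mul_qPow_mono one_pos (m := -(1 * c))
    (by omega) (hasMonicLead_discriminant.zpow c).isBounded⟩

/-- The monomial `E₄ ^ a * E₆ ^ b * Δ ^ c`. The exponent `c` may be negative because `Δ` has no
zeros, so that these monomials realise every even weight and every pole order. -/
def eisensteinMonomial (a b : ℕ) (c : ℤ) : ℍ → ℂ := E₄ ^ a * E₆ ^ b * fun z => discriminant z ^ c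

lemma isLevelOneForm_eisensteinMonomial (a b : ℕ) (c : ℤ) {w : ℤ}
    (hw : 4 * a + 6 * b + 12 * c = w) : IsLevelOneForm w (eisensteinMonomial a b c) := by
  have h := ((isLevelOneForm_E₄.pow a).mul (isLevelOneForm_E₆.pow b)).mul
    (isLevelOneForm_discriminant_zpow c)
  rwa [mul_comm (a : ℤ), mul_comm (b : ℤ), hw] at h

lemma hasMonicLead_eisensteinMonomial (a b : ℕ) (c : ℤ) :
    HasMonicLead (eisensteinMonomial a b c) c := by
  have h₄ : HasMonicLead E₄ 0 := hasMonicLead_E (by norm_num) ⟨2, rfl⟩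
  have h₆ : HasMonicLead E₆ 0 := hasMonicLead_E (by norm_num) ⟨3, rfl⟩
  have h := ((h₄.pow a).mul (h₆.pow b)).mul (hasMonicLead_discriminant.zpow c)
  rwa [mul_zero, mul_zero, zero_add, zero_add, one_mul] at h

section Duality

open Derivative

/-- The leading polar term can be removed by a multiple of the derivative of `(E₄³/Δ)ⁿ⁺¹`, and
derivatives have no constant term. -/
lemma IsLevelOneForm.qCoeff_zero_eq_zero {F : ℍ → ℂ} (hF : IsLevelOneForm 2 F) :
    qCoeff 1 F 0 = 0 := by
  obtain ⟨n, hn⟩ := hF.exists_isBounded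
  induction n generalizing F with
  | zero => rw [hF.eq_zero_of_weight_two (by simpa [qPow_zero] using hn), qCoeff_zero]
  | succ n ih =>
    set J := eisensteinMonomial (3 * (n + 1)) 0 (-(n + 1 : ℤ))
    have hJ : IsLevelOneForm 0 J := isLevelOneForm_eisensteinMonomial _ _ _ (by push_cast; ring)
    have hJlead : HasMonicLead J (-(n + 1 : ℤ)) := hasMonicLead_eisensteinMonomial _ _ _
    set c := qCoeff 1 F (-(n + 1 : ℤ))
    have hD := hJ.normalizedDeriv.smul (c / (n + 1))
    have hcoeff (m : ℤ) : qCoeff 1 (F + (c / (n + 1)) • normalizedDerivOfComplex J) m =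
        qCoeff 1 F m + c / (n + 1) * (m * qCoeff 1 J m) := by
      rw [qCoeff_add hF.mdiff hD.mdiff, qCoeff_smul, hJ.meroPeriodic.qCoeff_normalizedDeriv]
    have hbdd := (hF.add hD).meroPeriodic.isBounded_mul_qPow_of_qCoeff (M := -n) fun m hm => by
      rw [hcoeff]
      rcases eq_or_ne m (-(n + 1 : ℤ)) with rfl | hne
      · have hn0 : (n + 1 : ℂ) ≠ 0 := by exact_mod_cast n.succ_ne_zero
        rw [hJlead.qCoeff_eq_one hJ.meroPeriodic]
        push_cast
        field_simp
        simp only [c]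
        ring
      · rw [hJlead.qCoeff_eq_zero hJ.meroPeriodic (by omega), hF.meroPeriodic.qCoeff_eq_zero_of_lt
          (M := -(n + 1 : ℕ)) (by simpa using hn) (by push_cast; omega)]
        simp
    simpa [hcoeff] using ih (hF.add hD) (by simpa using hbdd)

lemma exists_weight_eq_of_even {w : ℤ} (hw : Even w) :
    ∃ (a b : ℕ) (c : ℤ), a ≤ 2 ∧ b ≤ 1 ∧ 4 * a + 6 * b + 12 * c = w := by
  obtain ⟨v, rfl⟩ := hw
  have : v % 6 = 0 ∨ v % 6 = 1 ∨ v % 6 = 2 ∨ v % 6 = 3 ∨ v % 6 = 4 ∨ v % 6 = 5 := by omega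
  rcases this with h | h | h | h | h | h
  · exact ⟨0, 0, v / 6, by omega, by omega, by push_cast; omega⟩
  · exact ⟨2, 1, v / 6 - 1, by omega, by omega, by push_cast; omega⟩
  · exact ⟨1, 0, v / 6, by omega, by omega, by push_cast; omega⟩
  · exact ⟨0, 1, v / 6, by omega, by omega, by push_cast; omega⟩
  · exact ⟨2, 0, v / 6, by omega, by omega, by push_cast; omega⟩
  · exact ⟨1, 1, v / 6, by omega, by omega, by push_cast; omega⟩

lemma exists_hasMonicLead {a b : ℕ} {c p : ℤ} (hp : p ≤ c) :
    ∃ F, IsLevelOneForm (4 * a + 6 * b + 12 * c) F ∧ HasMonicLead F p := by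
  obtain ⟨r, hr⟩ := Int.eq_ofNat_of_zero_le (sub_nonneg.2 hp)
  exact ⟨_, isLevelOneForm_eisensteinMonomial (a + 3 * r) b p (by push_cast; rw [← hr]; ring),
    hasMonicLead_eisensteinMonomial _ _ _⟩

lemma exists_qCoeff_eq_of_le {a b : ℕ} {c : ℤ} (K : ℕ) (t : ℤ → ℂ)
    (ht : ∀ n < c + 1 - K, t n = 0) :
    ∃ T, IsLevelOneForm (4 * a + 6 * b + 12 * c) T ∧ ∀ n ≤ c, qCoeff 1 T n = t n := by
  induction K generalizing t with
  | zero => exact ⟨0, .zero, fun n hn => by rw [qCoeff_zero, ht n (by simp; omega)]⟩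
  | succ K ih =>
    obtain ⟨F, hF, hlead⟩ :=
      exists_hasMonicLead (a := a) (b := b) (c := c) (p := c - K) (by omega)
    obtain ⟨T, hT, hc⟩ := ih (fun n => t n - t (c - K) * qCoeff 1 F n) fun n hn => by
      rcases eq_or_ne n (c - K) with rfl | hne
      · simp [hlead.qCoeff_eq_one hF.meroPeriodic]
      · rw [hlead.qCoeff_eq_zero hF.meroPeriodic (by omega), ht n (by push_cast; omega)]
        simp
    refine ⟨T + t (c - K) • F, hT.add (hF.smul _), fun n hn => ?_⟩
    rw [qCoeff_add hT.mdiff (hF.smul _).mdiff, qCoeff_smul, hc n hn]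
    ring

lemma IsLevelOneForm.finsum_qCoeff_mul_eq_zero {w : ℤ} {S T : ℍ → ℂ} (hS : IsLevelOneForm w S)
    (hT : IsLevelOneForm (2 - w) T) : ∑ᶠ n : ℤ, qCoeff 1 T n * qCoeff 1 S (-n) = 0 := by
  rw [← hS.meroPeriodic.qCoeff_mul_zero hT.meroPeriodic]
  exact IsLevelOneForm.qCoeff_zero_eq_zero (by simpa using hS.mul hT)

lemma MeroPeriodic.finite_support_mul_qCoeff_neg {F : ℍ → ℂ} (hF : MeroPeriodic 1 F) {t : ℤ → ℂ}
    {N : ℤ} (ht : ∀ n < -N, t n = 0) :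
    (Function.support fun n : ℤ => t n * qCoeff 1 F (-n)).Finite := by
  obtain ⟨M, hM⟩ := hF.exists_qCoeff_eq_zero
  refine (Set.finite_Icc (-N) M).subset fun n hn => ⟨?_, ?_⟩ <;> by_contra h
  · exact left_ne_zero_of_mul hn (ht n (by omega))
  · exact right_ne_zero_of_mul hn (hM _ (by omega))

/-- Pairing with forms of each leading exponent `< -c` makes the values of `t` vanish in turn. -/
lemma eq_zero_of_forall_finsum_eq_zero {a b : ℕ} {c : ℤ} {t : ℤ → ℂ} (ht : ∀ n ≤ c, t n = 0)
    (horth : ∀ S, IsLevelOneForm (4 * a + 6 * b + 12 * (-1 - c)) S →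
      ∑ᶠ n : ℤ, t n * qCoeff 1 S (-n) = 0) : t = 0 := by
  have hind (r : ℕ) : ∀ n < c + 1 + r, t n = 0 := by
    induction r with
    | zero => exact fun n hn => ht n (by simp at hn; omega)
    | succ r ih =>
      intro n hn
      rcases (show n < c + 1 + r ∨ n = c + 1 + r by push_cast at hn; omega) with h | rfl
      · exact ih n h
      obtain ⟨S, hS, hlead⟩ := exists_hasMonicLead (a := a) (b := b) (c := -1 - c)
        (p := -(c + 1 + r)) (by omega)
      have h := horth S hS
      rw [finsum_eq_single _ (c + 1 + r : ℤ), hlead.qCoeff_eq_one hS.meroPeriodic, mul_one] at h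
      · exact h
      intro m hm
      rcases hm.lt_or_gt with hlt | hgt
      · rw [ih m hlt, zero_mul]
      · rw [hlead.qCoeff_eq_zero hS.meroPeriodic (by omega), mul_zero]
  exact funext fun n => hind (n - c).toNat n (by omega)

/-- A form with the right coefficients up to some exponent `c` always exists; orthogonality forces
its remaining coefficients. -/
lemma exists_isLevelOneForm_qCoeff_eq {w : ℤ} (hw : Even w) (t : ℤ → ℂ) {N : ℤ}
    (ht : ∀ n < -N, t n = 0)
    (horth : ∀ S, IsLevelOneForm w S → ∑ᶠ n : ℤ, t n * qCoeff 1 S (-n) = 0) :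
    ∃ T, IsLevelOneForm (2 - w) T ∧ qCoeff 1 T = t := by
  obtain ⟨a, b, c, ha, hb, hw'⟩ := exists_weight_eq_of_even (even_two.sub hw)
  obtain ⟨T, hT, hc⟩ := exists_qCoeff_eq_of_le (a := a) (b := b) (c := c) (c + 1 + N).toNat t
    (fun n hn => ht n (by omega))
  rw [hw'] at hT
  refine ⟨T, hT, (sub_eq_zero.1 ?_).symm⟩
  refine eq_zero_of_forall_finsum_eq_zero (a := 2 - a) (b := 1 - b) (c := c)
    (fun n hn => sub_eq_zero.2 (hc n hn).symm) fun S hS => ?_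
  rw [show (4 * (2 - a : ℕ) + 6 * (1 - b : ℕ) + 12 * (-1 - c) : ℤ) = w by
    push_cast [ha, hb]; linarith] at hS
  obtain ⟨M, hM⟩ := hT.meroPeriodic.exists_qCoeff_eq_zero
  simp only [Pi.sub_apply, sub_mul]
  rw [finsum_sub_distrib (hS.meroPeriodic.finite_support_mul_qCoeff_neg ht)
    (hS.meroPeriodic.finite_support_mul_qCoeff_neg hM), horth S hS,
    hS.finsum_qCoeff_mul_eq_zero hT, sub_zero]

end Duality

/-! ### The values of `E₄` and `E₆` determine an orbit of the modular group -/

section PowerSums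

variable {ι κ : Type*} {x : ι → ℂ} {y : κ → ℂ} {p : ℕ}

/-- When `P` kills all other points of modulus at least `‖a‖`, the power sums weighted by `P`
isolate the contribution of `a`. -/
lemma tendsto_tsum_eval_mul_pow (hx : Summable fun i => ‖x i‖ ^ p) (P : Polynomial ℂ) {a : ℂ}
    (ha : a ≠ 0) (hP : ∀ i, ‖a‖ ≤ ‖x i‖ → x i ≠ a → P.eval (x i) = 0) :
    Tendsto (fun n : ℕ => ∑' i, P.eval (x i) * x i ^ p * (x i / a) ^ n) atTop
      (𝓝 (∑' i, open Classical in if x i = a then P.eval a * a ^ p else 0)) := by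
  classical
  have hr : 0 < ‖a‖ := norm_pos_iff.2 ha
  have hcases (i : ι) : x i = a ∨ P.eval (x i) = 0 ∨ ‖x i‖ < ‖a‖ := by
    by_cases hi : x i = a
    · exact .inl hi
    · exact .inr ((le_or_gt ‖a‖ ‖x i‖).imp (hP i · hi) id)
  obtain ⟨C, hC⟩ := (isCompact_closedBall (0 : ℂ) ‖a‖).exists_bound_of_continuousOn
    P.continuous.continuousOn
  have hC0 : 0 ≤ C := (norm_nonneg _).trans (hC 0 (by simp))
  have hball (u : ℂ) (hu : ‖u‖ ≤ ‖a‖) : ‖P.eval u‖ ≤ C := hC u (by simpa using hu)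
  refine tendsto_tsum_of_dominated_convergence (bound := fun i => C * ‖x i‖ ^ p) (hx.mul_left C)
    (fun i => ?_) (Eventually.of_forall fun n i => ?_)
  · rcases hcases i with hi | hi | hi
    · simp [hi, ha]
    · rw [hi]
      split_ifs with h
      · simp [← h, hi]
      · simp
    · have hlt : ‖x i / a‖ < 1 := by rwa [norm_div, div_lt_one hr]
      rw [if_neg fun h => hi.ne (congrArg norm h)]
      simpa using (tendsto_pow_atTop_nhds_zero_of_norm_lt_one hlt).const_mul
        (P.eval (x i) * x i ^ p)
  · rcases hcases i with hi | hi | hi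
    · rw [hi, div_self ha, one_pow, mul_one, norm_mul, norm_pow]
      gcongr
      exact hball a le_rfl
    · rw [hi, zero_mul, zero_mul, norm_zero]
      positivity
    · have hle : ‖x i / a‖ ^ n ≤ 1 :=
        pow_le_one₀ (norm_nonneg _) (by rw [norm_div, div_le_one hr]; exact hi.le)
      rw [norm_mul, norm_mul, norm_pow, norm_pow, ← mul_one (C * _)]
      gcongr
      exact hball _ hi.le

lemma finite_setOf_le_norm (hx : Summable fun i => ‖x i‖ ^ p) {r : ℝ} (hr : 0 < r) :
    {i | r ≤ ‖x i‖}.Finite := by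
  have h := hx.tendsto_cofinite_zero.eventually (eventually_lt_nhds (pow_pos hr p))
  refine (eventually_cofinite.1 h).subset fun i (hi : r ≤ ‖x i‖) => ?_
  exact not_lt.2 (pow_le_pow_left₀ hr.le hi p)

lemma summable_pow_add (hx : Summable fun i => ‖x i‖ ^ p) (n : ℕ) :
    Summable fun i => x i ^ (n + p) := by
  refine Summable.of_norm_bounded_eventually hx ?_
  filter_upwards [(finite_setOf_le_norm hx one_pos).compl_mem_cofinite] with i (hi : ¬1 ≤ ‖x i‖)
  rw [norm_pow]
  exact pow_le_pow_of_le_one (norm_nonneg _) (not_le.1 hi).le (Nat.le_add_left p n)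

lemma tsum_eval_mul_pow_eq_sum (hx : Summable fun i => ‖x i‖ ^ p) (P : Polynomial ℂ) (n : ℕ)
    (a : ℂ) : ∑' i, P.eval (x i) * x i ^ p * (x i / a) ^ n =
      ∑ e ∈ Finset.range (P.natDegree + 1), P.coeff e / a ^ n * ∑' i, x i ^ (e + n + p) := by
  simp_rw [← tsum_mul_left]
  rw [← Summable.tsum_finsetSum fun e _ => (summable_pow_add hx _).mul_left _]
  refine tsum_congr fun i => ?_
  rw [Polynomial.eval_eq_sum_range, Finset.sum_mul, Finset.sum_mul]
  refine Finset.sum_congr rfl fun e _ => ?_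
  rw [div_pow, pow_add, pow_add]
  ring

/-- If `x i` were not a value of `y`, a polynomial vanishing at the finitely many other points of
modulus at least `‖x i‖` would separate the two families. -/
lemma exists_eq_of_tsum_pow_eq (hx : Summable fun i => ‖x i‖ ^ p)
    (hy : Summable fun j => ‖y j‖ ^ p) (hinj : Injective x)
    (h : ∀ n : ℕ, ∑' i, x i ^ (n + p) = ∑' j, y j ^ (n + p)) {i : ι} (hi : x i ≠ 0) :
    ∃ j, y j = x i := by
  classical
  by_contra! hne
  have hr : 0 < ‖x i‖ := norm_pos_iff.2 hi
  set S : Finset ℂ := ((finite_setOf_le_norm hx hr).toFinset.image x ∪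
    (finite_setOf_le_norm hy hr).toFinset.image y).erase (x i) with hS
  set P : Polynomial ℂ := ∏ a ∈ S, (Polynomial.X - Polynomial.C a) with hP
  have hroot {u : ℂ} (hu : u ∈ S) : P.eval u = 0 := by
    rw [hP, Polynomial.eval_prod]
    exact Finset.prod_eq_zero hu (by simp)
  have hPi : P.eval (x i) ≠ 0 := by
    rw [hP, Polynomial.eval_prod, Finset.prod_ne_zero_iff]
    intro a ha
    simpa [sub_eq_zero] using (Finset.ne_of_mem_erase ha).symm
  have hlimx := tendsto_tsum_eval_mul_pow hx P hi fun j hj hj' => hroot (by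
    simpa [hS, hj'] using .inl ⟨j, hj, rfl⟩)
  have hlimy := tendsto_tsum_eval_mul_pow hy P hi fun j hj hj' => hroot (by
    simpa [hS, hj'] using .inr ⟨j, hj, rfl⟩)
  have heq := tendsto_nhds_unique hlimx (hlimy.congr fun n => by
    simp_rw [tsum_eval_mul_pow_eq_sum hx, tsum_eval_mul_pow_eq_sum hy, h])
  rw [tsum_eq_single i fun j hj => if_neg fun h => hj (hinj h), if_pos rfl] at heq
  simp only [hne, if_false, tsum_zero] at heq
  exact mul_ne_zero hPi (pow_ne_zero p hi) heq

end PowerSums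

open ModularForm EisensteinSeries

section WeightedScaling

lemma IsLevelOneForm.exists_eq_smul_add_mul_discriminant {a b : ℕ} {w : ℤ} {F : ℍ → ℂ}
    (hF : IsLevelOneForm w F) (hb : IsBoundedAtImInfty F) (hw : 4 * a + 6 * b = w) :
    ∃ (c : ℂ) (Q : ℍ → ℂ), IsLevelOneForm (w - 12) Q ∧ IsBoundedAtImInfty Q ∧
      ∀ z, F z = c * (E₄ z ^ a * E₆ z ^ b) + Q z * discriminant z := by
  set c := qCoeff 1 F 0
  set M := eisensteinMonomial a b 0 with hM
  have hMform : IsLevelOneForm w M := isLevelOneForm_eisensteinMonomial a b 0 (by rw [← hw]; ring)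
  have hMlead : HasMonicLead M 0 := hasMonicLead_eisensteinMonomial a b 0
  have hG : IsLevelOneForm w (F - c • M) := hF.sub (hMform.smul c)
  have hcusp : ∀ m < (1 : ℤ), qCoeff 1 (F - c • M) m = 0 := fun m hm => by
    rw [qCoeff_sub hF.mdiff (hMform.smul c).mdiff, qCoeff_smul]
    rcases eq_or_ne m 0 with rfl | hne
    · rw [hMlead.qCoeff_eq_one hMform.meroPeriodic, mul_one, sub_self]
    · rw [hMlead.qCoeff_eq_zero hMform.meroPeriodic (by omega), mul_zero, sub_zero]
      exact hF.meroPeriodic.qCoeff_eq_zero_of_lt (M := 0)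
        (by rwa [neg_zero, qPow_zero, mul_one]) (by omega)
  refine ⟨c, (F - c • M) * fun z => discriminant z ^ (-1 : ℤ),
    by simpa [sub_eq_add_neg] using hG.mul (isLevelOneForm_discriminant_zpow (-1)), ?_, fun z => ?_⟩
  · have h := (hG.meroPeriodic.isBounded_mul_qPow_of_qCoeff hcusp).mul
      (hasMonicLead_discriminant.zpow (-1)).isBounded
    rwa [mul_mul_mul_comm, mul_neg_one, neg_neg, qPow_neg_mul, mul_one] at h
  · have := discriminant_ne_zero z
    simp only [hM, eisensteinMonomial, Pi.mul_apply, Pi.sub_apply, Pi.smul_apply, Pi.pow_apply,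
      zpow_zero, smul_eq_mul, zpow_neg_one]
    field_simp
    ring

lemma exists_eq_four_mul_add_six_mul {k : ℕ} (hk : Even k) (hk2 : k ≠ 2) :
    ∃ a b : ℕ, k = 4 * a + 6 * b := by
  obtain ⟨r, hr⟩ := hk
  rcases Nat.even_or_odd r with ⟨s, hs⟩ | ⟨s, hs⟩
  · exact ⟨s, 0, by omega⟩
  · exact ⟨s - 1, 1, by omega⟩

lemma IsLevelOneForm.apply_eq_pow_mul {z₀ z₁ : ℍ} {l : ℂ} (h₄ : E₄ z₁ = l ^ 4 * E₄ z₀)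
    (h₆ : E₆ z₁ = l ^ 6 * E₆ z₀) {k : ℕ} {F : ℍ → ℂ} (hF : IsLevelOneForm k F)
    (hb : IsBoundedAtImInfty F) : F z₁ = l ^ k * F z₀ := by
  induction k using Nat.strong_induction_on generalizing F with
  | _ k ih =>
  rcases Nat.even_or_odd k with hk | hk
  swap
  · simp [hF.eq_zero_of_odd (by exact_mod_cast hk)]
  rcases eq_or_ne k 2 with rfl | hk2
  · simp [hF.eq_zero_of_weight_two hb]
  obtain ⟨a, b, hab⟩ := exists_eq_four_mul_add_six_mul hk hk2
  obtain ⟨c, Q, hQ, hQb, hFQ⟩ :=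
    hF.exists_eq_smul_add_mul_discriminant hb (a := a) (b := b) (by exact_mod_cast hab.symm)
  have hQl : Q z₁ * l ^ 12 = l ^ k * Q z₀ := by
    rcases lt_or_ge k 12 with hk12 | hk12
    · simp [hQ.eq_zero_of_weight_neg (by omega) hQb]
    · obtain ⟨m, rfl⟩ := Nat.exists_eq_add_of_le' hk12
      rw [ih m (by omega) (by simpa using hQ) hQb]
      ring
  have hΔ : discriminant z₁ = l ^ 12 * discriminant z₀ := by
    rw [discriminant_eq_E₄_cube_sub_E₆_sq, discriminant_eq_E₄_cube_sub_E₆_sq, h₄, h₆]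
    ring
  rw [hFQ, hFQ, hΔ, h₄, h₆, mul_add, ← mul_assoc (Q z₁), hQl, hab]
  ring

end WeightedScaling

section Lattice

/-- The point `v₀ z + v₁` of the lattice `ℤz + ℤ`. -/
def latticePoint (z : ℍ) (v : Fin 2 → ℤ) : ℂ := v 0 * z + v 1

variable {z z₀ z₁ : ℍ} {l : ℂ}

lemma int_mul_add_int_inj {a b c d : ℤ} (h : (a * z + b : ℂ) = c * z + d) : a = c ∧ b = d := by
  have him := congrArg Complex.im h
  have hre := congrArg Complex.re h
  simp only [add_im, mul_im, intCast_re, intCast_im, coe_im, zero_mul, add_zero] at him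
  obtain rfl : a = c := by exact_mod_cast mul_right_cancel₀ z.im_ne_zero him
  simpa using hre

lemma latticePoint_injective (z : ℍ) : Injective (latticePoint z) := fun v w h => by
  obtain ⟨h0, h1⟩ := int_mul_add_int_inj h
  ext i
  fin_cases i
  exacts [h0, h1]

lemma inv_latticePoint_pow (k : ℕ) (v : Fin 2 → ℤ) :
    (latticePoint z v)⁻¹ ^ k = eisSummand k v z := by
  rw [eisSummand, zpow_neg, zpow_natCast, inv_pow, latticePoint]

lemma summable_norm_inv_latticePoint (z : ℍ) :
    Summable fun v => ‖(latticePoint z v)⁻¹‖ ^ 3 := by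
  simp_rw [← norm_pow, inv_latticePoint_pow]
  exact summable_norm_eisSummand le_rfl z

lemma tsum_inv_latticePoint_pow (h₄ : E₄ z₁ = l ^ 4 * E₄ z₀) (h₆ : E₆ z₁ = l ^ 6 * E₆ z₀)
    (n : ℕ) : ∑' v, (latticePoint z₁ v)⁻¹ ^ (n + 3) =
      ∑' v, (l * (latticePoint z₀ v)⁻¹) ^ (n + 3) := by
  have hE := (isLevelOneForm_modularForm (E (k := n + 3) (by omega))).apply_eq_pow_mul h₄ h₆
    (isBoundedAtImInfty_modularForm _)
  have hE' (z : ℍ) : eisensteinSeries (N := 1) 0 (n + 3 : ℕ) z =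
      2 * E (k := n + 3) (by omega) z := by
    change _ = 2 * (1 / 2 * eisensteinSeries (N := 1) 0 (n + 3 : ℕ) z)
    ring
  simp only [mul_pow, inv_latticePoint_pow, tsum_mul_left]
  rw [tsum_eisSummand_eq_riemannZeta_mul_eisensteinSeries (by omega),
    tsum_eisSummand_eq_riemannZeta_mul_eisensteinSeries (by omega), hE', hE', hE]
  ring

lemma exists_latticePoint_eq (hl : l ≠ 0) (h₄ : E₄ z₁ = l ^ 4 * E₄ z₀)
    (h₆ : E₆ z₁ = l ^ 6 * E₆ z₀) (v : Fin 2 → ℤ) :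
    ∃ w, l * latticePoint z₁ v = latticePoint z₀ w := by
  have hzero (z : ℍ) : latticePoint z 0 = 0 := by simp [latticePoint]
  rcases eq_or_ne v 0 with rfl | hv
  · exact ⟨0, by simp [hzero]⟩
  have hv0 : latticePoint z₁ v ≠ 0 := fun h =>
    hv (latticePoint_injective z₁ (h.trans (hzero z₁).symm))
  obtain ⟨w, hw⟩ := exists_eq_of_tsum_pow_eq (summable_norm_inv_latticePoint z₁)
    (by simpa only [norm_mul, mul_pow] using (summable_norm_inv_latticePoint z₀).mul_left _)
    (inv_injective.comp (latticePoint_injective z₁)) (tsum_inv_latticePoint_pow h₄ h₆)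
    (inv_ne_zero hv0)
  refine ⟨w, ?_⟩
  rw [← inv_inj, mul_inv, ← hw, inv_mul_cancel_left₀ hl]

lemma det_pos_of_eq {a b c d : ℤ} (hl : l ≠ 0) (h₁ : l * z₁ = a * z₀ + b)
    (h₂ : l = c * z₀ + d) : 0 < a * d - b * c := by
  have h : Complex.normSq l * z₁.im = ((a * d - b * c : ℤ) : ℝ) * z₀.im := by
    have him := congrArg Complex.im (congrArg (starRingEnd ℂ l * ·) h₁)
    simp only [← mul_assoc, mul_comm (starRingEnd ℂ l) l, Complex.mul_conj] at him
    rw [h₂] at him ⊢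
    simp only [mul_im, ofReal_re, coe_im, ofReal_im, coe_re, zero_mul, add_zero, map_add, map_mul,
      map_intCast, add_re, mul_re, intCast_re, conj_re, intCast_im, conj_im, mul_neg, neg_zero,
      sub_zero, add_im, neg_mul] at him
    rw [him]
    push_cast
    ring
  have hpos := h ▸ mul_pos (Complex.normSq_pos.2 hl) z₁.im_pos
  exact_mod_cast (pos_iff_pos_of_mul_pos hpos).2 z₀.im_pos

lemma exists_smul_eq_of_lattice_eq (hl : l ≠ 0)
    (h₁ : ∀ v, ∃ w, l * latticePoint z₁ v = latticePoint z₀ w)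
    (h₂ : ∀ v, ∃ w, l⁻¹ * latticePoint z₀ v = latticePoint z₁ w) :
    ∃ γ : SL(2, ℤ), z₁ = γ • z₀ := by
  obtain ⟨ab, hab⟩ := h₁ ![1, 0]
  obtain ⟨cd, hcd⟩ := h₁ ![0, 1]
  obtain ⟨ab', hab'⟩ := h₂ ![1, 0]
  obtain ⟨cd', hcd'⟩ := h₂ ![0, 1]
  rw [inv_mul_eq_iff_eq_mul₀ hl] at hab' hcd'
  simp only [latticePoint, Matrix.cons_val_zero, Matrix.cons_val_one, Int.cast_one, Int.cast_zero,
    one_mul, zero_mul, add_zero, zero_add, mul_one] at hab hcd hab' hcd'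
  obtain ⟨h11, h12⟩ := int_mul_add_int_inj (z := z₀) (a := ab' 0 * ab 0 + ab' 1 * cd 0)
    (b := ab' 0 * ab 1 + ab' 1 * cd 1) (c := 1) (d := 0)
    (by push_cast; linear_combination -hab' - ab' 0 * hab - ab' 1 * hcd)
  obtain ⟨-, h22⟩ := int_mul_add_int_inj (z := z₀) (a := cd' 0 * ab 0 + cd' 1 * cd 0)
    (b := cd' 0 * ab 1 + cd' 1 * cd 1) (c := 0) (d := 1)
    (by push_cast; linear_combination -hcd' - cd' 0 * hab - cd' 1 * hcd)
  have hdet : ab 0 * cd 1 - ab 1 * cd 0 = 1 := by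
    refine Int.eq_one_of_mul_eq_one_left (det_pos_of_eq hl hab hcd).le
      (a := ab' 0 * cd' 1 - ab' 1 * cd' 0) ?_
    linear_combination (cd' 0 * ab 1 + cd' 1 * cd 1) * h11 + h22 -
      (cd' 0 * ab 0 + cd' 1 * cd 0) * h12
  obtain ⟨γ, hγ⟩ : ∃ γ : SL(2, ℤ), γ.1 = !![ab 0, ab 1; cd 0, cd 1] :=
    ⟨⟨_, by rw [Matrix.det_fin_two_of, hdet]⟩, rfl⟩
  have hentry (i j : Fin 2) : γ i j = !![ab 0, ab 1; cd 0, cd 1] i j := by rw [← hγ]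
  refine ⟨γ, UpperHalfPlane.ext ?_⟩
  rw [UpperHalfPlane.coe_specialLinearGroup_apply]
  have hz₁ : (z₁ : ℂ) = (ab 0 * z₀ + ab 1) / (cd 0 * z₀ + cd 1) := by
    rw [← hab, ← hcd, mul_div_cancel_left₀ _ hl]
  simp [hentry, hz₁]

lemma exists_smul_eq_of_E₄_E₆ (hl : l ≠ 0) (h₄ : E₄ z₁ = l ^ 4 * E₄ z₀)
    (h₆ : E₆ z₁ = l ^ 6 * E₆ z₀) : ∃ γ : SL(2, ℤ), z₁ = γ • z₀ :=
  exists_smul_eq_of_lattice_eq hl (exists_latticePoint_eq hl h₄ h₆)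
    (exists_latticePoint_eq (inv_ne_zero hl) (by rw [h₄]; field_simp) (by rw [h₆]; field_simp))

end Lattice

/-! ### Level one forms with simple zeros on a single orbit -/

section OrbitDivisor

open ModularForm EisensteinSeries Derivative

/-- The Rankin–Cohen bracket of `E₄` and `E₆`, a nonzero multiple of the discriminant. It controls
the order of vanishing of polynomials in `E₄` and `E₆`. -/
def eisensteinBracket : ℍ → ℂ := (4 : ℂ) • (E₄ * normalizedDerivOfComplex E₆) -
  (6 : ℂ) • (E₆ * normalizedDerivOfComplex E₄)

/-- The terms of the Serre derivatives involving `E₂` cancel. -/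
lemma eisensteinBracket_eq_serreDerivative (z : ℍ) : eisensteinBracket z =
    4 * (E₄ z * serreDerivative (6 : ℤ) E₆ z) - 6 * (E₆ z * serreDerivative (4 : ℤ) E₄ z) := by
  simp only [eisensteinBracket, Pi.sub_apply, Pi.smul_apply, Pi.mul_apply, smul_eq_mul,
    serreDerivative_apply]
  push_cast
  ring

lemma IsLevelOneForm.serreDerivative_smul {w : ℤ} {F : ℍ → ℂ} (hF : IsLevelOneForm w F)
    (γ : SL(2, ℤ)) (z : ℍ) : serreDerivative w F (γ • z) =
      denom γ z ^ (w + 2) * serreDerivative w F z :=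
  (forall_smul_eq_iff_slash_eq γ).2 (serreDerivative_slash_invariant hF.mdiff (hF.slash_eq γ)) z

lemma isLevelOneForm_eisensteinBracket : IsLevelOneForm 12 eisensteinBracket := by
  have hp₄ := isLevelOneForm_E₄.meroPeriodic
  have hp₆ := isLevelOneForm_E₆.meroPeriodic
  have hp : MeroPeriodic 1 eisensteinBracket :=
    ((hp₄.mul hp₆.normalizedDeriv).smul 4).sub ((hp₆.mul hp₄.normalizedDeriv).smul 6)
  refine ⟨hp.mdiff, fun γ z => ?_, hp.exists_isBounded⟩
  have hd := denom_ne_zero γ z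
  simp only [eisensteinBracket_eq_serreDerivative, isLevelOneForm_E₄.serreDerivative_smul,
    isLevelOneForm_E₆.serreDerivative_smul, isLevelOneForm_E₄.smul_eq, isLevelOneForm_E₆.smul_eq,
    zpow_add₀ hd]
  norm_cast
  ring

lemma tendsto_normalizedDeriv_mul_qPow {F : ℍ → ℂ} (hF : MeroPeriodic 1 F)
    (hb : IsBoundedAtImInfty F) :
    Tendsto (normalizedDerivOfComplex F * qPow 1 (-1)) atImInfty (𝓝 (qCoeff 1 F 1)) := by
  have hb' : IsBoundedAtImInfty (normalizedDerivOfComplex F * qPow 1 (-1)) := by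
    refine hF.normalizedDeriv.isBounded_mul_qPow_of_qCoeff fun m hm => ?_
    rw [hF.qCoeff_normalizedDeriv]
    rcases eq_or_ne m 0 with rfl | hne
    · rw [Int.cast_zero, zero_mul]
    · rw [hF.qCoeff_eq_zero_of_lt (M := 0) (by simpa [qPow_zero] using hb) (by omega), mul_zero]
  have h := (hF.normalizedDeriv.mul (meroPeriodic_qPow one_pos (-1))).tendsto_qCoeff_zero hb'
  rwa [qCoeff_mul_qPow, zero_sub, neg_neg, hF.qCoeff_normalizedDeriv, Int.cast_one, one_mul] at h

lemma qCoeff_modularForm_one {w : ℤ} (f : ModularForm 𝒮ℒ w) :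
    qCoeff 1 f 1 = (qExpansion 1 f).coeff 1 := by
  have h := (isLevelOneForm_modularForm f).meroPeriodic.qCoeff_natCast
    (isBoundedAtImInfty_modularForm f) 1
  rwa [Nat.cast_one] at h

lemma tendsto_E₄ : Tendsto E₄ atImInfty (𝓝 1) := by
  simpa [HasMonicLead, qPow_zero] using hasMonicLead_E (k := 4) (by norm_num) ⟨2, rfl⟩

lemma tendsto_E₆ : Tendsto E₆ atImInfty (𝓝 1) := by
  simpa [HasMonicLead, qPow_zero] using hasMonicLead_E (k := 6) (by norm_num) ⟨3, rfl⟩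

/-- The constant `-3456 = 4 * (-504) - 6 * 240` comes from the linear coefficients of `E₆` and
`E₄`. -/
lemma tendsto_eisensteinBracket_mul_qPow :
    Tendsto (eisensteinBracket * qPow 1 (-1)) atImInfty (𝓝 (-3456)) := by
  have hD₄ := tendsto_normalizedDeriv_mul_qPow isLevelOneForm_E₄.meroPeriodic
    (isBoundedAtImInfty_modularForm E₄)
  have hD₆ := tendsto_normalizedDeriv_mul_qPow isLevelOneForm_E₆.meroPeriodic
    (isBoundedAtImInfty_modularForm E₆)
  rw [qCoeff_modularForm_one, E₄_qExpansion_coeff_one] at hD₄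
  rw [qCoeff_modularForm_one, E₆_qExpansion_coeff_one] at hD₆
  have h := ((tendsto_E₄.mul hD₆).const_mul 4).sub ((tendsto_E₆.mul hD₄).const_mul 6)
  norm_num only at h
  refine h.congr fun z => ?_
  simp only [eisensteinBracket, Pi.mul_apply, Pi.sub_apply, Pi.smul_apply, smul_eq_mul]
  ring

lemma eisensteinBracket_ne_zero (z : ℍ) : eisensteinBracket z ≠ 0 := by
  set Q := eisensteinBracket * fun z => discriminant z ^ (-1 : ℤ) with hQ
  have hQform : IsLevelOneForm (12 + 12 * -1) Q :=
    isLevelOneForm_eisensteinBracket.mul (isLevelOneForm_discriminant_zpow (-1))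
  rw [mul_neg_one, add_neg_cancel] at hQform
  have hlim : Tendsto Q atImInfty (𝓝 (-3456)) := by
    have h := tendsto_eisensteinBracket_mul_qPow.mul (hasMonicLead_discriminant.zpow (-1))
    rw [mul_one] at h
    refine h.congr fun z => ?_
    have hq := congrFun (qPow_neg_mul 1 1) z
    simp only [Pi.mul_apply, Pi.one_apply] at hq
    simp only [hQ, Pi.mul_apply, mul_neg_one, neg_neg]
    linear_combination (eisensteinBracket z * discriminant z ^ (-1 : ℤ)) * hq
  obtain ⟨c, hc⟩ := hQform.exists_eq_const (Tendsto.isBigO_one ℝ hlim)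
  have hc' : c = -3456 := tendsto_nhds_unique tendsto_const_nhds (hc ▸ hlim)
  intro h0
  have h := congrFun hc z
  norm_num [hQ, h0, hc'] at h

/-- `H` is a level one form of weight `w` whose divisor is the orbit of `z₀` (or zero): it does not
vanish at the cusp, and its zeros are simple and lie in that orbit. -/
structure IsOrbitDivisor (w : ℤ) (z₀ : ℍ) (H : ℍ → ℂ) : Prop where
  isLevelOneForm : IsLevelOneForm w H
  exists_tendsto : ∃ c ≠ 0, Tendsto H atImInfty (𝓝 c)
  exists_smul_eq : ∀ z, H z = 0 → ∃ γ : SL(2, ℤ), z = γ • z₀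
  deriv_ne_zero : ∀ z, H z = 0 → normalizedDerivOfComplex H z ≠ 0

variable {z z₀ : ℍ}

lemma E₆_ne_zero_of_E₄_eq_zero (h₄ : E₄ z = 0) : E₆ z ≠ 0 := fun h₆ =>
  discriminant_ne_zero z (by simp [discriminant_eq_E₄_cube_sub_E₆_sq, h₄, h₆])

lemma isOrbitDivisor_E₆ (h₀ : E₆ z₀ = 0) : IsOrbitDivisor 6 z₀ E₆ where
  isLevelOneForm := isLevelOneForm_E₆
  exists_tendsto := ⟨1, one_ne_zero, tendsto_E₆⟩
  exists_smul_eq z hz := by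
    have h₄₀ : E₄ z₀ ≠ 0 := fun h => E₆_ne_zero_of_E₄_eq_zero h h₀
    have h₄ : E₄ z ≠ 0 := fun h => E₆_ne_zero_of_E₄_eq_zero h hz
    obtain ⟨l, hl⟩ := IsAlgClosed.exists_pow_nat_eq (E₄ z / E₄ z₀) (n := 4) four_pos
    refine exists_smul_eq_of_E₄_E₆ (l := l) (fun h => ?_) (by rw [hl, div_mul_cancel₀ _ h₄₀])
      (by rw [hz, h₀, mul_zero])
    exact div_ne_zero h₄ h₄₀ (by rw [← hl, h, zero_pow four_ne_zero])
  deriv_ne_zero z hz h := eisensteinBracket_ne_zero z (by simp [eisensteinBracket, hz, h])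

lemma isOrbitDivisor_E₄ (h₀ : E₄ z₀ = 0) : IsOrbitDivisor 4 z₀ E₄ where
  isLevelOneForm := isLevelOneForm_E₄
  exists_tendsto := ⟨1, one_ne_zero, tendsto_E₄⟩
  exists_smul_eq z hz := by
    have h₆₀ := E₆_ne_zero_of_E₄_eq_zero h₀
    have h₆ := E₆_ne_zero_of_E₄_eq_zero hz
    obtain ⟨l, hl⟩ := IsAlgClosed.exists_pow_nat_eq (E₆ z / E₆ z₀) (n := 6) (by norm_num)
    refine exists_smul_eq_of_E₄_E₆ (l := l) (fun h => ?_) (by rw [hz, h₀, mul_zero])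
      (by rw [hl, div_mul_cancel₀ _ h₆₀])
    exact div_ne_zero h₆ h₆₀ (by rw [← hl, h, zero_pow (by norm_num)])
  deriv_ne_zero z hz h := eisensteinBracket_ne_zero z (by simp [eisensteinBracket, hz, h])

/-- The combination of `E₄ ^ 3` and `E₆ ^ 2` that vanishes on the orbit of `z₀`. -/
def orbitForm (z₀ : ℍ) : ℍ → ℂ :=
  E₆ z₀ ^ 2 • (E₄ : ℍ → ℂ) ^ 3 - E₄ z₀ ^ 3 • (E₆ : ℍ → ℂ) ^ 2

lemma orbitForm_apply (z₀ z : ℍ) :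
    orbitForm z₀ z = E₆ z₀ ^ 2 * E₄ z ^ 3 - E₄ z₀ ^ 3 * E₆ z ^ 2 := rfl

lemma isLevelOneForm_orbitForm (z₀ : ℍ) : IsLevelOneForm 12 (orbitForm z₀) :=
  ((isLevelOneForm_E₄.pow 3).smul (E₆ z₀ ^ 2)).sub ((isLevelOneForm_E₆.pow 2).smul (E₄ z₀ ^ 3))

lemma E₄_ne_zero_of_orbitForm_eq_zero (h₄ : E₄ z₀ ≠ 0) (hz : orbitForm z₀ z = 0) :
    E₄ z ≠ 0 := fun h => by
  have h₆ := E₆_ne_zero_of_E₄_eq_zero h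
  simp [orbitForm_apply, h, h₄, h₆] at hz

lemma E₆_ne_zero_of_orbitForm_eq_zero (h₄ : E₄ z₀ ≠ 0) (h₆ : E₆ z₀ ≠ 0)
    (hz : orbitForm z₀ z = 0) : E₆ z ≠ 0 := fun h => by
  have h₄' := E₄_ne_zero_of_orbitForm_eq_zero h₄ hz
  simp [orbitForm_apply, h, h₆, h₄'] at hz

lemma exists_smul_eq_of_orbitForm_eq_zero (h₄ : E₄ z₀ ≠ 0) (h₆ : E₆ z₀ ≠ 0)
    (hz : orbitForm z₀ z = 0) : ∃ γ : SL(2, ℤ), z = γ • z₀ := by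
  have h₄' := E₄_ne_zero_of_orbitForm_eq_zero h₄ hz
  have h₆' := E₆_ne_zero_of_orbitForm_eq_zero h₄ h₆ hz
  rw [orbitForm_apply] at hz
  obtain ⟨l, hl⟩ := IsAlgClosed.exists_pow_nat_eq ((E₆ z / E₆ z₀) / (E₄ z / E₄ z₀)) (n := 2)
    two_pos
  refine exists_smul_eq_of_E₄_E₆ (l := l) (fun h => ?_) ?_ ?_
  · exact div_ne_zero (div_ne_zero h₆' h₆) (div_ne_zero h₄' h₄)
      (by rw [← hl, h, zero_pow two_ne_zero])
  · rw [show l ^ 4 = (l ^ 2) ^ 2 by ring, hl]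
    field_simp
    linear_combination hz
  · rw [show l ^ 6 = (l ^ 2) ^ 3 by ring, hl]
    field_simp
    linear_combination hz

lemma E₆_mul_eisensteinBracket_eq (z₀ z : ℍ) : E₄ z₀ ^ 3 * (E₆ z * eisensteinBracket z) =
    6 * normalizedDerivOfComplex E₄ z * orbitForm z₀ z -
      2 * E₄ z * normalizedDerivOfComplex (orbitForm z₀) z := by
  have hE₄ := isLevelOneForm_E₄
  have hE₆ := isLevelOneForm_E₆
  rw [orbitForm_apply, orbitForm, normalizedDerivOfComplex_sub _ _ ((hE₄.pow 3).smul _).mdiff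
      ((hE₆.pow 2).smul _).mdiff, normalizedDerivOfComplex_smul _ _ (hE₄.pow 3).mdiff,
    normalizedDerivOfComplex_smul _ _ (hE₆.pow 2).mdiff,
    normalizedDerivOfComplex_pow _ _ hE₄.mdiff, normalizedDerivOfComplex_pow _ _ hE₆.mdiff]
  simp only [eisensteinBracket, Pi.sub_apply, Pi.smul_apply, Pi.mul_apply, Pi.pow_apply,
    smul_eq_mul]
  simp
  ring

lemma isOrbitDivisor_orbitForm (h₄ : E₄ z₀ ≠ 0) (h₆ : E₆ z₀ ≠ 0) :
    IsOrbitDivisor 12 z₀ (orbitForm z₀) where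
  isLevelOneForm := isLevelOneForm_orbitForm z₀
  exists_tendsto := by
    refine ⟨E₆ z₀ ^ 2 * 1 ^ 3 - E₄ z₀ ^ 3 * 1 ^ 2, fun h => discriminant_ne_zero z₀ ?_,
      ((tendsto_E₄.pow 3).const_mul _).sub ((tendsto_E₆.pow 2).const_mul _)⟩
    rw [discriminant_eq_E₄_cube_sub_E₆_sq]
    linear_combination -h / 1728
  exists_smul_eq _ hz := exists_smul_eq_of_orbitForm_eq_zero h₄ h₆ hz
  deriv_ne_zero z hz h := by
    refine mul_ne_zero (pow_ne_zero 3 h₄) (mul_ne_zero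
      (E₆_ne_zero_of_orbitForm_eq_zero h₄ h₆ hz) (eisensteinBracket_ne_zero z)) ?_
    rw [E₆_mul_eisensteinBracket_eq, hz, h, mul_zero, mul_zero, sub_zero]

end OrbitDivisor

/-! ### Vector-valued forms and their determinants -/

section Division

open Derivative

/-- Near a common zero `a` the quotient is the quotient of the slopes at `a`. -/
lemma differentiableAt_div_of_simple_zero {U : Set ℂ} {f g : ℂ → ℂ} {a : ℂ} (hU : U ∈ 𝓝 a)
    (hf : DifferentiableOn ℂ f U) (hg : DifferentiableOn ℂ g U) (hfa : f a = 0) (hga : g a = 0)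
    (hga' : deriv g a ≠ 0) :
    DifferentiableAt ℂ (fun z => if g z = 0 then deriv f z / deriv g z else f z / g z) a := by
  have hdf : DifferentiableAt ℂ (dslope f a) a :=
    ((differentiableOn_dslope hU).2 hf).differentiableAt hU
  have hdg : DifferentiableAt ℂ (dslope g a) a :=
    ((differentiableOn_dslope hU).2 hg).differentiableAt hU
  have hne : dslope g a a ≠ 0 := by rwa [dslope_same]
  refine (hdf.div hdg hne).congr_of_eventuallyEq ?_
  filter_upwards [hdg.continuousAt.eventually_ne hne] with y hy
  rw [Pi.div_apply]
  rcases eq_or_ne y a with rfl | hya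
  · rw [if_pos hga, dslope_same, dslope_same]
  · rw [dslope_of_ne _ hya, slope_def_field, hga, sub_zero] at hy
    have hgy : g y ≠ 0 := fun h => hy (by rw [h, zero_div])
    rw [if_neg hgy, dslope_of_ne _ hya, dslope_of_ne _ hya, slope_def_field, slope_def_field, hfa,
      hga, sub_zero, sub_zero, div_div_div_cancel_right₀ (sub_ne_zero.2 hya)]

lemma exists_differentiableOn_eq_mul {U : Set ℂ} (hU : IsOpen U) {f g : ℂ → ℂ}
    (hf : DifferentiableOn ℂ f U) (hg : DifferentiableOn ℂ g U)
    (hs : ∀ z ∈ U, g z = 0 → deriv g z ≠ 0) (h0 : ∀ z ∈ U, g z = 0 → f z = 0) :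
    ∃ q, DifferentiableOn ℂ q U ∧ ∀ z ∈ U, f z = g z * q z := by
  refine ⟨fun z => if g z = 0 then deriv f z / deriv g z else f z / g z, fun a ha => ?_,
    fun z hz => ?_⟩
  · refine DifferentiableAt.differentiableWithinAt ?_
    have hUa := hU.mem_nhds ha
    by_cases hga : g a = 0
    · exact differentiableAt_div_of_simple_zero hUa hf hg (h0 a ha hga) hga (hs a ha hga)
    · have hd := hg.differentiableAt hUa
      refine ((hf.differentiableAt hUa).div hd hga).congr_of_eventuallyEq ?_
      filter_upwards [hd.continuousAt.eventually_ne hga] with y hy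
      rw [if_neg hy, Pi.div_apply]
  · by_cases hgz : g z = 0
    · rw [hgz, zero_mul, h0 z hz hgz]
    · simp only [if_neg hgz, mul_div_cancel₀ _ hgz]

lemma exists_mdiff_eq_mul {F H : ℍ → ℂ} (hF : MDiff F) (hH : MDiff H)
    (hs : ∀ z, H z = 0 → normalizedDerivOfComplex H z ≠ 0) (h0 : ∀ z, H z = 0 → F z = 0) :
    ∃ G : ℍ → ℂ, MDiff G ∧ F = H * G := by
  rw [UpperHalfPlane.mdifferentiable_iff] at hF hH
  have hs' : ∀ z ∈ {z : ℂ | 0 < z.im}, (H ∘ ofComplex) z = 0 → deriv (H ∘ ofComplex) z ≠ 0 :=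
    fun z hz h hd => hs _ h (by
      rw [normalizedDerivOfComplex, ofComplex_apply_of_im_pos hz]
      exact mul_eq_zero_of_right _ hd)
  obtain ⟨q, hq, hFq⟩ := exists_differentiableOn_eq_mul isOpen_upperHalfPlaneSet hF hH hs'
    fun z _ h => h0 _ h
  refine ⟨fun z => q z, UpperHalfPlane.mdifferentiable_iff.2 (hq.congr fun z hz => ?_), ?_⟩
  · rw [comp_apply, ofComplex_apply_of_im_pos hz]
  · ext z
    simpa using hFq z z.im_pos

lemma isBoundedAtImInfty_of_mul {F H : ℍ → ℂ} {c : ℂ} (hc : c ≠ 0)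
    (hH : Tendsto H atImInfty (𝓝 c)) (hb : IsBoundedAtImInfty (H * F)) :
    IsBoundedAtImInfty F := by
  have hinv : IsBoundedAtImInfty (fun z => (H z)⁻¹) := Tendsto.isBigO_one ℝ (hH.inv₀ hc)
  refine (hinv.mul hb).congr' ?_ .rfl
  filter_upwards [hH.eventually_ne hc] with z hz
  exact inv_mul_cancel_left₀ hz (F z)

end Division

section VectorForm

variable {ι : Type*} [MulAction SL(2, ℤ) ι] {ε : SL(2, ℤ) → ι → ℂ} {w w₀ : ℤ} {u v : ι → ℍ → ℂ}

/-- Holomorphic vector-valued forms of weight `w` for the action of `SL(2, ℤ)` on the components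
by permutations with multipliers `ε`. No condition is imposed at infinity. -/
structure IsVectorForm (ε : SL(2, ℤ) → ι → ℂ) (w : ℤ) (v : ι → ℍ → ℂ) : Prop where
  mdiff : ∀ i, MDiff (v i)
  smul_eq : ∀ (γ : SL(2, ℤ)) (i : ι) (z : ℍ),
    v i (γ • z) = ε γ i * denom γ z ^ w * v (γ⁻¹ • i) z

namespace IsVectorForm

lemma add (hu : IsVectorForm ε w u) (hv : IsVectorForm ε w v) : IsVectorForm ε w (u + v) where
  mdiff i := (hu.mdiff i).add (hv.mdiff i)
  smul_eq γ i z := by simp only [Pi.add_apply, hu.smul_eq, hv.smul_eq, mul_add]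

lemma zero : IsVectorForm ε w (0 : ι → ℍ → ℂ) where
  mdiff _ := mdifferentiable_const
  smul_eq γ i z := by simp

lemma sum {κ : Type*} (s : Finset κ) {v : κ → ι → ℍ → ℂ}
    (hv : ∀ a ∈ s, IsVectorForm ε w (v a)) : IsVectorForm ε w (∑ a ∈ s, v a) :=
  Finset.sum_induction v (IsVectorForm ε w) (fun _ _ => add) zero hv

lemma mul_left {F : ℍ → ℂ} (hF : IsLevelOneForm w₀ F) (hv : IsVectorForm ε w v) :
    IsVectorForm ε (w₀ + w) (fun i => F * v i) where
  mdiff i := hF.mdiff.mul (hv.mdiff i)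
  smul_eq γ i z := by
    simp only [Pi.mul_apply, hv.smul_eq, hF.smul_eq, zpow_add₀ (denom_ne_zero γ z)]
    ring

lemma of_mul_left {H : ℍ → ℂ} (hH : IsLevelOneForm w₀ H) (hH0 : H ≠ 0) (hu : ∀ i, MDiff (u i))
    (hv : IsVectorForm ε w (fun i => H * u i)) : IsVectorForm ε (w - w₀) u := by
  refine ⟨hu, fun γ i => congrFun ?_⟩
  set D : ℍ → ℂ := fun z => denom γ z ^ (w - w₀)
  have hlhs : MDiff (fun z : ℍ => u i (γ • z)) :=
    (hu i).comp (mdifferentiable_smul (g := (γ : GL (Fin 2) ℝ)) (by simp))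
  have hrhs : MDiff (ε γ i • (D * u (γ⁻¹ • i))) :=
    ((mdifferentiable_denom_zpow (γ : GL (Fin 2) ℝ) (w - w₀)).mul (hu _)).const_smul _
  have hprod : H * ((fun z => u i (γ • z)) - ε γ i • (D * u (γ⁻¹ • i))) = 0 := by
    ext z
    have hd := denom_ne_zero γ z
    have h := hv.smul_eq γ i z
    simp only [Pi.mul_apply, hH.smul_eq] at h
    rw [show w = w₀ + (w - w₀) by ring, zpow_add₀ hd] at h
    apply mul_left_cancel₀ (zpow_ne_zero w₀ hd)
    simp only [Pi.mul_apply, Pi.sub_apply, Pi.smul_apply, smul_eq_mul, Pi.zero_apply, D]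
    linear_combination h
  have h := ((UpperHalfPlane.mul_eq_zero_iff hH.mdiff (hlhs.sub hrhs)).1 hprod).resolve_left hH0
  simpa [mul_assoc, funext_iff] using sub_eq_zero.1 h

lemma exists_eq_mul {z₀ : ℍ} {H : ℍ → ℂ} (hv : IsVectorForm ε w v)
    (hH : IsOrbitDivisor w₀ z₀ H) (hb : ∀ i, IsBoundedAtImInfty (v i)) (h0 : ∀ i, v i z₀ = 0) :
    ∃ u, IsVectorForm ε (w - w₀) u ∧ (∀ i, IsBoundedAtImInfty (u i)) ∧ ∀ i, v i = H * u i := by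
  have hdvd (i : ι) : ∃ G : ℍ → ℂ, MDiff G ∧ v i = H * G :=
    exists_mdiff_eq_mul (hv.mdiff i) hH.isLevelOneForm.mdiff hH.deriv_ne_zero fun z hz => by
      obtain ⟨γ, rfl⟩ := hH.exists_smul_eq z hz
      rw [hv.smul_eq, h0, mul_zero]
  choose u hu hvu using hdvd
  obtain ⟨c, hc, hlim⟩ := hH.exists_tendsto
  have hH0 : H ≠ 0 := by
    rintro rfl
    exact hc (tendsto_nhds_unique hlim tendsto_const_nhds)
  refine ⟨u, of_mul_left hH.isLevelOneForm hH0 hu (by rwa [← funext hvu]), fun i => ?_, hvu⟩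
  exact isBoundedAtImInfty_of_mul hc hlim (by rw [← hvu]; exact hb i)

end IsVectorForm

end VectorForm

section FrameDet

lemma mdifferentiable_sum {κ : Type*} {s : Finset κ} {F : κ → ℍ → ℂ} (h : ∀ a ∈ s, MDiff (F a)) :
    MDiff (∑ a ∈ s, F a) := by
  have hzero : MDiff (0 : ℍ → ℂ) := mdifferentiable_const
  exact Finset.sum_induction _ (fun P : ℍ → ℂ => MDiff P) (fun _ _ hP hQ => hP.add hQ) hzero h

lemma mdifferentiable_prod {κ : Type*} {s : Finset κ} {F : κ → ℍ → ℂ} (h : ∀ a ∈ s, MDiff (F a)) :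
    MDiff (∏ a ∈ s, F a) := by
  have hone : MDiff (1 : ℍ → ℂ) := mdifferentiable_const
  exact Finset.prod_induction _ (fun P : ℍ → ℂ => MDiff P) (fun _ _ hP hQ => hP.mul hQ) hone h

variable {ι : Type*} [Fintype ι] [DecidableEq ι] {f : ι → ι → ℍ → ℂ}

/-- The determinant of the square array whose rows are the vectors `f a`. -/
def frameDet (f : ι → ι → ℍ → ℂ) (z : ℍ) : ℂ := (Matrix.of fun a i => f a i z).det

lemma frameDet_eq_sum (f : ι → ι → ℍ → ℂ) : frameDet f = ∑ σ : Equiv.Perm ι,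
    ((Equiv.Perm.sign σ : ℤ) : ℂ) • ∏ i, f (σ i) i := by
  ext z
  simp [frameDet, Matrix.det_apply, Units.smul_def]

lemma mdifferentiable_frameDet (hf : ∀ a i, MDiff (f a i)) : MDiff (frameDet f) := by
  rw [frameDet_eq_sum]
  exact mdifferentiable_sum fun σ _ => (mdifferentiable_prod fun i _ => hf (σ i) i).const_smul _

lemma isBoundedAtImInfty_frameDet (hf : ∀ a i, IsBoundedAtImInfty (f a i)) :
    IsBoundedAtImInfty (frameDet f) := by
  rw [frameDet_eq_sum]
  exact (boundedAtImInftySubalgebra ℂ).sum_mem fun σ _ =>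
    (boundedAtImInftySubalgebra ℂ).smul_mem
      ((boundedAtImInftySubalgebra ℂ).prod_mem fun i _ => hf (σ i) i) _

lemma exists_relation_of_frameDet_eq_zero {z : ℍ} (hz : frameDet f z = 0) :
    ∃ c : ι → ℂ, c ≠ 0 ∧ ∀ i, ∑ a, c a * f a i z = 0 := by
  obtain ⟨c, hc, hv⟩ := Matrix.exists_vecMul_eq_zero_iff.2 hz
  exact ⟨c, hc, fun i => by simpa [Matrix.vecMul, dotProduct] using congrFun hv i⟩

lemma mul_frameDet_update {H : ℍ → ℂ} {u : ι → ℍ → ℂ} {m : ι → ℍ → ℂ}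
    (hu : ∀ i, H * u i = ∑ a, m a * f a i) (a₀ : ι) :
    H * frameDet (update f a₀ u) = m a₀ * frameDet f := by
  ext z
  have hrow : (Matrix.of fun a i => update f a₀ u a i z) =
      (Matrix.of fun a i => f a i z).updateRow a₀ (fun i => u i z) := by
    ext a i
    rcases eq_or_ne a a₀ with rfl | hne
    · simp
    · simp [hne]
  have hcomb : H z • (fun i => u i z) =
      ∑ a, m a z • (Matrix.of fun a i => f a i z) a := by
    ext i
    simpa using congrFun (hu i) z
  simp only [Pi.mul_apply, frameDet]
  rw [hrow, ← Matrix.det_updateRow_smul, hcomb, Matrix.det_updateRow_sum, smul_eq_mul]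

variable [MulAction SL(2, ℤ) ι] {ε : SL(2, ℤ) → ι → ℂ} {k : ℤ} {wt : ι → ℤ}

lemma frameDet_smul_eq (hf : ∀ a, IsVectorForm ε (wt a) (f a)) (γ : SL(2, ℤ)) (z : ℍ) :
    frameDet f (γ • z) = denom γ z ^ (∑ a, wt a) * ((∏ i, ε γ i) *
      (((Equiv.Perm.sign (MulAction.toPerm γ⁻¹ : Equiv.Perm ι) : ℤ) : ℂ) * frameDet f z)) := by
  have hprod : denom γ z ^ (∑ a, wt a) = ∏ a, denom γ z ^ wt a := by
    induction (Finset.univ : Finset ι) using Finset.induction_on with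
    | empty => rw [Finset.sum_empty, Finset.prod_empty, zpow_zero]
    | insert a s ha ih =>
      rw [Finset.prod_insert ha, Finset.sum_insert ha, ← ih, zpow_add₀ (denom_ne_zero γ z)]
  rw [hprod, frameDet, frameDet, ← Matrix.det_permute', ← Matrix.det_mul_row,
    ← Matrix.det_mul_column]
  congr 1
  ext a i
  simp only [Matrix.of_apply, (hf a).smul_eq, Matrix.submatrix_apply, id_eq,
    MulAction.toPerm_apply]
  ring

lemma frameDet_sq_smul_eq (hε : ∀ γ i, ε γ i ^ 2 = 1) (hf : ∀ a, IsVectorForm ε (wt a) (f a))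
    (γ : SL(2, ℤ)) (z : ℍ) : (frameDet f ^ 2) (γ • z) =
      denom γ z ^ (2 * ∑ a, wt a) * (frameDet f ^ 2) z := by
  have hsign : (((Equiv.Perm.sign (MulAction.toPerm γ⁻¹ : Equiv.Perm ι) : ℤ) : ℂ)) ^ 2 = 1 := by
    exact_mod_cast Int.units_coe_mul_self _ ▸ sq _
  rw [Pi.pow_apply, Pi.pow_apply, frameDet_smul_eq hf, mul_pow, mul_pow, mul_pow,
    ← Finset.prod_pow, Finset.prod_congr rfl fun i _ => hε γ i, Finset.prod_const_one, hsign,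
    one_mul, one_mul, mul_comm 2, zpow_mul, zpow_ofNat]

lemma frameDet_eq_zero_of_smul (hε : ∀ γ i, ε γ i ^ 2 = 1)
    (hf : ∀ a, IsVectorForm ε (wt a) (f a)) {γ : SL(2, ℤ)} {z : ℍ}
    (h : frameDet f (γ • z) = 0) : frameDet f z = 0 := by
  have hsq := frameDet_sq_smul_eq hε hf γ z
  rw [Pi.pow_apply, Pi.pow_apply, h, zero_pow two_ne_zero] at hsq
  exact pow_eq_zero_iff two_ne_zero |>.1
    ((mul_eq_zero.1 hsq.symm).resolve_left (zpow_ne_zero _ (denom_ne_zero γ z)))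

/-- A square array of bounded vector-valued forms `f a` of weights `wt a` congruent to `k` modulo
two, linearly independent in the sense that its determinant is not identically zero. -/
structure IsFrame (ε : SL(2, ℤ) → ι → ℂ) (k : ℤ) (wt : ι → ℤ) (f : ι → ι → ℍ → ℂ) : Prop where
  isVectorForm : ∀ a, IsVectorForm ε (wt a) (f a)
  isBounded : ∀ a i, IsBoundedAtImInfty (f a i)
  even_sub : ∀ a, Even (wt a - k)
  frameDet_ne_zero : frameDet f ≠ 0

lemma IsFrame.sum_weight_nonneg (hε : ∀ γ i, ε γ i ^ 2 = 1) (hf : IsFrame ε k wt f) :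
    0 ≤ ∑ a, wt a := by
  by_contra! hneg
  have hd := mdifferentiable_frameDet fun a => (hf.isVectorForm a).mdiff
  have hb : IsBoundedAtImInfty (frameDet f ^ 2) := by
    rw [sq]
    exact (isBoundedAtImInfty_frameDet hf.isBounded).mul (isBoundedAtImInfty_frameDet hf.isBounded)
  have hform : IsLevelOneForm (2 * ∑ a, wt a) (frameDet f ^ 2) :=
    ⟨hd.pow 2, frameDet_sq_smul_eq hε hf.isVectorForm, 0, by simpa [qPow_zero] using hb⟩
  exact hf.frameDet_ne_zero (pow_eq_zero_iff two_ne_zero |>.1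
    (hform.eq_zero_of_weight_neg (by omega) hb))

end FrameDet

/-! ### Frames with nowhere vanishing determinant -/

section EllipticPoints

open ModularGroup ModularForm EisensteinSeries

/-- The elliptic point of order three, a primitive sixth root of unity. -/
def rho : ℍ := ⟨⟨1 / 2, √3 / 2⟩, by simp⟩

lemma rho_sq : (rho : ℂ) ^ 2 = rho - 1 := by
  have h3 : √3 * √3 = 3 := Real.mul_self_sqrt (by norm_num)
  have hrho : (rho : ℂ) = ⟨1 / 2, √3 / 2⟩ := rfl
  rw [hrho]
  apply Complex.ext
  · simp [sq]
    linear_combination -h3 / 4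
  · simp [sq]
    ring

lemma rho_cube : (rho : ℂ) ^ 3 = -1 := by linear_combination ((rho : ℂ) + 1) * rho_sq

lemma coe_T_mul_S : (T * S : SL(2, ℤ)).1 = !![1, -1; 1, 0] := by decide

lemma denom_T_mul_S (z : ℍ) : denom (T * S : SL(2, ℤ)) z = z := by
  rw [denom_apply, coe_T_mul_S]
  simp

lemma T_mul_S_smul_rho : (T * S : SL(2, ℤ)) • rho = rho := by
  apply UpperHalfPlane.ext
  rw [UpperHalfPlane.coe_specialLinearGroup_apply, coe_T_mul_S]
  simp only [Matrix.of_apply, Matrix.cons_val', Matrix.cons_val_zero, Matrix.cons_val_one,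
    Matrix.cons_val_fin_one, algebraMap_int_eq, eq_intCast, Int.cast_one, Int.cast_neg,
    Int.cast_zero, Complex.ofReal_one, Complex.ofReal_neg, Complex.ofReal_zero, add_zero, one_mul]
  rw [div_eq_iff (UpperHalfPlane.ne_zero rho)]
  linear_combination -rho_sq

lemma six_dvd_of_rho_zpow_eq_one {n : ℤ} (hn : Even n) (h : (rho : ℂ) ^ n = 1) : 6 ∣ n := by
  have h6 : (rho : ℂ) ^ (6 : ℤ) = 1 := by
    rw [zpow_ofNat]
    linear_combination ((rho : ℂ) ^ 3 - 1) * rho_cube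
  rw [← Int.mul_ediv_add_emod n 6, zpow_add₀ (UpperHalfPlane.ne_zero rho), zpow_mul, h6, one_zpow,
    one_mul] at h
  have h0 : n % 6 = 0 ∨ n % 6 = 2 ∨ n % 6 = 4 := by obtain ⟨r, rfl⟩ := hn; omega
  rcases h0 with h0 | h0 | h0
  · exact Int.dvd_of_emod_eq_zero h0
  all_goals
    rw [h0, zpow_ofNat] at h
    refine absurd ?_ rho.im_ne_zero
  · rw [← coe_im, show (rho : ℂ) = 2 by linear_combination h - rho_sq]
    simp
  · rw [← coe_im, show (rho : ℂ) = -1 by linear_combination -h + (rho : ℂ) * rho_cube]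
    simp

lemma E₄_rho : E₄ rho = 0 := by
  have h := isLevelOneForm_E₄.smul_eq (T * S) rho
  rw [T_mul_S_smul_rho, denom_T_mul_S] at h
  by_contra h0
  have h4 := six_dvd_of_rho_zpow_eq_one (n := 4) ⟨2, rfl⟩
    (mul_right_cancel₀ h0 (by rw [one_mul, ← h]))
  omega

lemma S_smul_I : S • UpperHalfPlane.I = UpperHalfPlane.I := by
  apply UpperHalfPlane.ext
  rw [UpperHalfPlane.coe_specialLinearGroup_apply]
  simp [S]

lemma E₆_I : E₆ UpperHalfPlane.I = 0 := by
  have h := isLevelOneForm_E₆.smul_eq S UpperHalfPlane.I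
  have h6 : Complex.I ^ (6 : ℤ) = -1 := by
    rw [zpow_ofNat, show 6 = 2 * 3 from rfl, pow_mul, Complex.I_sq]
    norm_num
  rw [S_smul_I, denom_S, UpperHalfPlane.coe_I, h6] at h
  linear_combination h / 2

lemma four_dvd_of_I_zpow_eq_one {n : ℤ} (hn : Even n) (h : Complex.I ^ n = 1) : 4 ∣ n := by
  obtain ⟨r, rfl⟩ := hn
  rw [← two_mul, zpow_mul, zpow_ofNat, Complex.I_sq] at h
  rcases Int.even_or_odd r with ⟨s, rfl⟩ | ho
  · omega
  · rw [ho.neg_one_zpow] at h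
    norm_num at h

end EllipticPoints

section Lowering

variable {ι : Type*} [MulAction SL(2, ℤ) ι] {ε : SL(2, ℤ) → ι → ℂ} {k : ℤ}
  {wt : ι → ℤ} {f : ι → ι → ℍ → ℂ} {γ : SL(2, ℤ)} {z₀ : ℍ} {c : ι → ℂ}

lemma denom_zpow_neg_mul_eq (hf : ∀ a, IsVectorForm ε (wt a) (f a)) (hγ : γ • z₀ = z₀) (a i : ι) :
    denom γ z₀ ^ (-wt a) * f a i z₀ = ε γ i * f a (γ⁻¹ • i) z₀ := by
  have h := (hf a).smul_eq γ i z₀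
  have hd := zpow_ne_zero (wt a) (denom_ne_zero γ z₀)
  rw [hγ] at h
  rw [zpow_neg, inv_mul_eq_iff_eq_mul₀ hd, h]
  ring

variable [Fintype ι]

lemma sum_prod_sub_mul_eq_zero (hf : ∀ a, IsVectorForm ε (wt a) (f a)) (hγ : γ • z₀ = z₀)
    (hc : ∀ i, ∑ a, c a * f a i z₀ = 0) (t : Finset ℂ) (i : ι) :
    ∑ a, (∏ u ∈ t, (denom γ z₀ ^ (-wt a) - u)) * c a * f a i z₀ = 0 := by
  induction t using Finset.induction_on generalizing i with
  | empty => simpa using hc i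
  | insert u t hu ih =>
    set P : ι → ℂ := fun a => ∏ u ∈ t, (denom γ z₀ ^ (-wt a) - u)
    calc ∑ a, (∏ u ∈ insert u t, (denom γ z₀ ^ (-wt a) - u)) * c a * f a i z₀
        = ε γ i * ∑ a, P a * c a * f a (γ⁻¹ • i) z₀ - u * ∑ a, P a * c a * f a i z₀ := by
          rw [Finset.mul_sum, Finset.mul_sum, ← Finset.sum_sub_distrib]
          refine Finset.sum_congr rfl fun a _ => ?_
          rw [Finset.prod_insert hu]
          linear_combination P a * c a * denom_zpow_neg_mul_eq hf hγ a i
      _ = 0 := by rw [ih, ih, mul_zero, mul_zero, sub_zero]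

/-- At a fixed point of `γ` the linear relations are stable under the diagonal operator with
entries `denom γ z₀ ^ (-wt a)`, so a relation can be projected to one of its eigenspaces. -/
lemma exists_relation_denom_zpow_eq (hf : ∀ a, IsVectorForm ε (wt a) (f a)) (hγ : γ • z₀ = z₀)
    (hc0 : c ≠ 0) (hc : ∀ i, ∑ a, c a * f a i z₀ = 0) :
    ∃ c' : ι → ℂ, c' ≠ 0 ∧ (∀ i, ∑ a, c' a * f a i z₀ = 0) ∧
      ∀ a b, c' a ≠ 0 → c' b ≠ 0 → denom γ z₀ ^ wt a = denom γ z₀ ^ wt b := by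
  classical
  obtain ⟨b, hb⟩ := Function.ne_iff.1 hc0
  set d : ι → ℂ := fun a => denom γ z₀ ^ (-wt a)
  set t : Finset ℂ := (Finset.univ.image d).erase (d b)
  have hsupp (a : ι) (ha : (∏ u ∈ t, (d a - u)) * c a ≠ 0) : d a = d b := by
    by_contra hab
    have hat : d a ∈ t := Finset.mem_erase.2 ⟨hab, Finset.mem_image_of_mem d (Finset.mem_univ a)⟩
    exact ha (mul_eq_zero_of_left (Finset.prod_eq_zero hat (sub_self _)) _)
  refine ⟨fun a => (∏ u ∈ t, (d a - u)) * c a, Function.ne_iff.2 ⟨b, ?_⟩,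
    sum_prod_sub_mul_eq_zero hf hγ hc t, fun a a' ha ha' => ?_⟩
  · exact mul_ne_zero
      (Finset.prod_ne_zero_iff.2 fun u hu => sub_ne_zero.2 (Finset.ne_of_mem_erase hu).symm) hb
  · have h : d a = d a' := (hsupp a ha).trans (hsupp a' ha').symm
    simpa only [d, zpow_neg, inv_inj] using h

variable [DecidableEq ι] {w₀ W : ℤ} {H : ℍ → ℂ}

lemma IsFrame.exists_update (hf : IsFrame ε k wt f) (hH : IsOrbitDivisor w₀ z₀ H) (hw₀ : Even w₀)
    (hc : ∀ i, ∑ a, c a * f a i z₀ = 0) {m : ι → ℍ → ℂ}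
    (hm : ∀ a, c a ≠ 0 → IsLevelOneForm (W - wt a) (m a) ∧ IsBoundedAtImInfty (m a) ∧ m a z₀ ≠ 0)
    {a₀ : ι} (ha₀ : c a₀ ≠ 0) (hW : Even (W - k)) :
    ∃ u, IsFrame ε k (update wt a₀ (W - w₀)) (update f a₀ u) := by
  set M : ι → ℍ → ℂ := fun a => (c a / m a z₀) • m a
  have hM (a : ι) : IsLevelOneForm (W - wt a) (M a) ∧ IsBoundedAtImInfty (M a) ∧
      M a z₀ = c a := by
    rcases eq_or_ne (c a) 0 with h0 | h0
    · simp only [M, h0, zero_div, zero_smul]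
      exact ⟨.zero, const_boundedAtFilter _ _, rfl⟩
    · obtain ⟨hl, hb, hz⟩ := hm a h0
      exact ⟨hl.smul _, BoundedAtFilter.smul _ hb, div_mul_cancel₀ _ hz⟩
  have hv : IsVectorForm ε W (∑ a, fun i => M a * f a i) :=
    IsVectorForm.sum _ fun a _ => by
      simpa using (hf.isVectorForm a).mul_left (hM a).1
  obtain ⟨u, hu, hub, hvu⟩ := hv.exists_eq_mul hH
    (fun i => by
      rw [Finset.sum_apply]
      exact (boundedAtImInftySubalgebra ℂ).sum_mem fun a _ => (hM a).2.1.mul (hf.isBounded a i))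
    (fun i => by simp [Finset.sum_apply, (hM _).2.2, hc])
  have hdet : H * frameDet (update f a₀ u) = M a₀ * frameDet f :=
    mul_frameDet_update (fun i => by rw [← hvu, Finset.sum_apply]) a₀
  refine ⟨u, fun a => ?_, fun a => ?_, fun a => ?_, fun h0 => ?_⟩
  · rcases eq_or_ne a a₀ with rfl | hne
    · simpa using hu
    · simpa [hne] using hf.isVectorForm a
  · rcases eq_or_ne a a₀ with rfl | hne
    · simpa using hub
    · simpa [hne] using hf.isBounded a
  · rcases eq_or_ne a a₀ with rfl | hne
    · rw [update_self, sub_right_comm]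
      exact hW.sub hw₀
    · simpa [hne] using hf.even_sub a
  · rw [h0, mul_zero] at hdet
    rcases (UpperHalfPlane.mul_eq_zero_iff (hM a₀).1.mdiff
      (mdifferentiable_frameDet fun a => (hf.isVectorForm a).mdiff)).1 hdet.symm with h | h
    · exact ha₀ (by rw [← (hM a₀).2.2, h, Pi.zero_apply])
    · exact hf.frameDet_ne_zero h

/-- The relation is chosen with support on weights which differ by exponents `n` such that
`denom γ z₀ ^ n = 1`, and the multipliers raise all weights involved to the same one. -/
lemma IsFrame.exists_sum_weight_lt_of_isOrbitDivisor (hf : IsFrame ε k wt f)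
    (hdet : frameDet f z₀ = 0) (hH : IsOrbitDivisor w₀ z₀ H) (hw₀ : Even w₀) (hγ : γ • z₀ = z₀)
    {s : ℤ} (hs : Even s) (hsw : s < w₀)
    (hmult : ∀ n : ℤ, 0 ≤ n → Even n → denom γ z₀ ^ n = 1 →
      ∃ m, IsLevelOneForm (n + s) m ∧ IsBoundedAtImInfty m ∧ m z₀ ≠ 0) :
    ∃ wt' f', IsFrame ε k wt' f' ∧ ∑ a, wt' a < ∑ a, wt a := by
  obtain ⟨c₁, hc₁, hrel₁⟩ := exists_relation_of_frameDet_eq_zero hdet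
  obtain ⟨c, hc0, hc, hcγ⟩ := exists_relation_denom_zpow_eq hf.isVectorForm hγ hc₁ hrel₁
  obtain ⟨a₀, ha₀, hmax⟩ : ∃ a₀, c a₀ ≠ 0 ∧ ∀ a, c a ≠ 0 → wt a ≤ wt a₀ := by
    obtain ⟨b, hb⟩ := Function.ne_iff.1 hc0
    simpa using Finset.exists_max_image {a | c a ≠ 0} wt ⟨b, by simpa using hb⟩
  have hm (a : ι) : ∃ m : ℍ → ℂ, c a ≠ 0 →
      IsLevelOneForm (wt a₀ + s - wt a) m ∧ IsBoundedAtImInfty m ∧ m z₀ ≠ 0 := by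
    by_cases ha : c a = 0
    · exact ⟨0, fun h => absurd ha h⟩
    have heven : Even (wt a₀ - wt a) := by
      simpa using (hf.even_sub a₀).sub (hf.even_sub a)
    have hdenom := denom_ne_zero γ z₀
    obtain ⟨m, hm⟩ := hmult (wt a₀ - wt a) (sub_nonneg.2 (hmax a ha)) heven
      (by rw [zpow_sub₀ hdenom, hcγ a₀ a ha₀ ha, div_self (zpow_ne_zero _ hdenom)])
    exact ⟨m, fun _ => by rwa [add_sub_right_comm]⟩
  choose m hm using hm
  obtain ⟨u, hu⟩ := hf.exists_update hH hw₀ hc hm ha₀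
    (by rw [add_sub_right_comm]; exact (hf.even_sub a₀).add hs)
  refine ⟨_, _, hu, Finset.sum_lt_sum (fun a _ => ?_) ⟨a₀, Finset.mem_univ _, ?_⟩⟩
  · rcases eq_or_ne a a₀ with rfl | hne
    · rw [update_self]
      omega
    · rw [update_of_ne hne]
  · rw [update_self]
    omega

open ModularForm EisensteinSeries

lemma exists_isLevelOneForm_eisensteinMonomial (p q : ℕ) {w : ℤ} (hw : 4 * p + 6 * q = w)
    (h : E₄ z₀ ^ p * E₆ z₀ ^ q ≠ 0) :
    ∃ m, IsLevelOneForm w m ∧ IsBoundedAtImInfty m ∧ m z₀ ≠ 0 := by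
  refine ⟨eisensteinMonomial p q 0, isLevelOneForm_eisensteinMonomial p q 0 (by omega), ?_,
    by simpa [eisensteinMonomial] using h⟩
  have hlead := hasMonicLead_eisensteinMonomial p q 0
  rw [HasMonicLead, neg_zero, qPow_zero, mul_one] at hlead
  exact Tendsto.isBigO_one ℝ hlead

/-- The divisor is `E₆` or `E₄` at the elliptic points. Elsewhere it has weight `12`, and the
multipliers use that every even integer `≥ 10` has the form `4 * p + 6 * q`. -/
lemma IsFrame.exists_sum_weight_lt (hε : ∀ γ i, ε γ i ^ 2 = 1) (hf : IsFrame ε k wt f)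
    (hz : frameDet f z₀ = 0) : ∃ wt' f', IsFrame ε k wt' f' ∧ ∑ a, wt' a < ∑ a, wt a := by
  by_cases h₆ : E₆ z₀ = 0
  · obtain ⟨γ, rfl⟩ := (isOrbitDivisor_E₆ E₆_I).exists_smul_eq z₀ h₆
    refine hf.exists_sum_weight_lt_of_isOrbitDivisor
      (frameDet_eq_zero_of_smul hε hf.isVectorForm hz) (isOrbitDivisor_E₆ E₆_I) (by decide) S_smul_I
      Even.zero (by decide) fun n hn hne h => ?_
    rw [ModularGroup.denom_S, UpperHalfPlane.coe_I] at h
    have h4 := four_dvd_of_I_zpow_eq_one hne h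
    have h₄ : E₄ UpperHalfPlane.I ≠ 0 := fun h => E₆_ne_zero_of_E₄_eq_zero h E₆_I
    exact exists_isLevelOneForm_eisensteinMonomial (n / 4).toNat 0 (by omega) (by simp [h₄])
  by_cases h₄ : E₄ z₀ = 0
  · obtain ⟨γ, rfl⟩ := (isOrbitDivisor_E₄ E₄_rho).exists_smul_eq z₀ h₄
    refine hf.exists_sum_weight_lt_of_isOrbitDivisor
      (frameDet_eq_zero_of_smul hε hf.isVectorForm hz) (isOrbitDivisor_E₄ E₄_rho) (by decide)
      T_mul_S_smul_rho Even.zero (by decide) fun n hn hne h => ?_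
    rw [denom_T_mul_S] at h
    have h6 := six_dvd_of_rho_zpow_eq_one hne h
    have h₆ : E₆ rho ≠ 0 := E₆_ne_zero_of_E₄_eq_zero E₄_rho
    exact exists_isLevelOneForm_eisensteinMonomial 0 (n / 6).toNat (by omega) (by simp [h₆])
  · refine hf.exists_sum_weight_lt_of_isOrbitDivisor hz (isOrbitDivisor_orbitForm h₄ h₆)
      (by decide) (one_smul _ z₀) (s := 10) (by decide) (by decide) fun n hn hne _ => ?_
    lift n to ℕ using hn
    obtain ⟨p, q, hpq⟩ := exists_eq_four_mul_add_six_mul (k := n + 10)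
      ((Int.even_coe_nat n).1 hne |>.add (by decide)) (by omega)
    exact exists_isLevelOneForm_eisensteinMonomial p q (by omega)
      (mul_ne_zero (pow_ne_zero _ h₄) (pow_ne_zero _ h₆))

/-- Lowering the weights terminates since the total weight of a frame is nonnegative. -/
lemma IsFrame.exists_forall_frameDet_ne_zero (hε : ∀ γ i, ε γ i ^ 2 = 1)
    (hf : IsFrame ε k wt f) : ∃ wt' f', IsFrame ε k wt' f' ∧ ∀ z, frameDet f' z ≠ 0 := by
  induction hn : (∑ a, wt a).toNat using Nat.strong_induction_on generalizing wt f with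
  | _ n ih =>
    by_cases hz : ∀ z, frameDet f z ≠ 0
    · exact ⟨wt, f, hf, hz⟩
    push Not at hz
    obtain ⟨z, hz⟩ := hz
    obtain ⟨wt', f', hf', hlt⟩ := hf.exists_sum_weight_lt hε hz
    have hnonneg := hf'.sum_weight_nonneg hε
    exact ih _ (by omega) hf' rfl

end Lowering

/-! ### Duality for vector-valued forms -/

section Translates

variable {h : ℝ} {N : ℕ} {F : ℍ → ℂ}

lemma MeroPeriodic.exists_least_qCoeff_ne_zero (hF : MeroPeriodic h F) (h0 : F ≠ 0) :
    ∃ M : ℤ, qCoeff h F M ≠ 0 ∧ ∀ m < M, qCoeff h F m = 0 := by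
  obtain ⟨N, hN⟩ := hF.exists_qCoeff_eq_zero
  have hne : ∃ m, qCoeff h F m ≠ 0 := by
    by_contra! hc
    exact h0 (hF.ext (meroPeriodic_const hF.pos 0) fun m => (hc m).trans (qCoeff_zero m).symm)
  obtain ⟨M, hM, hmin⟩ := Int.exists_least_of_bdd
    ⟨-(N : ℤ), fun m hm => not_lt.1 fun hlt => hm (hN m hlt)⟩ hne
  exact ⟨M, hM, fun m hm => by_contra fun hc => (hmin m hc).not_gt hm⟩

lemma MeroPeriodic.inv (hF : MeroPeriodic h F) (h0 : ∀ z, F z ≠ 0) : MeroPeriodic h F⁻¹ := by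
  obtain ⟨M, hM, hlow⟩ :=
    hF.exists_least_qCoeff_ne_zero fun hc => h0 UpperHalfPlane.I (congrFun hc _)
  have hlim := (hF.mul (meroPeriodic_qPow hF.pos (-M))).tendsto_qCoeff_zero
    (hF.isBounded_mul_qPow_of_qCoeff hlow)
  rw [qCoeff_mul_qPow, zero_sub, neg_neg] at hlim
  refine .of_isBounded hF.pos (hF.mdiff.inv h0) (fun z => by simp [hF.vadd_eq]) (n := M) ?_
  have hinv : F⁻¹ * qPow h M = (F * qPow h (-M))⁻¹ := by
    ext z
    simp [mul_comm, eq_inv_of_mul_eq_one_right (qPow_neg_mul_apply h M z)]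
  rw [hinv]
  exact (hlim.inv₀ hM).isBigO_one ℝ

lemma MeroPeriodic.to_period_one (hF : MeroPeriodic N F)
    (hp : ∀ z : ℍ, F ((1 : ℝ) +ᵥ z) = F z) : MeroPeriodic 1 F := by
  have hN : 0 < N := mod_cast hF.pos
  obtain ⟨n, hn⟩ := hF.exists_isBounded
  refine ⟨one_pos, hF.mdiff, hp, n, ?_⟩
  rw [qPow_one_eq hN.ne']
  refine isBoundedAtImInfty_mul_qPow_mono hF.pos ?_ hn
  exact_mod_cast Nat.le_mul_of_pos_left n hN

lemma isBoundedAtImInfty_comp_vadd (hF : IsBoundedAtImInfty F) (x : ℝ) :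
    IsBoundedAtImInfty fun z : ℍ => F (x +ᵥ z) := by
  obtain ⟨C, A, hC⟩ := isBoundedAtImInfty_iff.1 hF
  exact isBoundedAtImInfty_iff.2 ⟨C, A, fun z hz => hC _ (by rwa [vadd_im])⟩

lemma mdifferentiable_comp_natCast_vadd (hF : MDiff F) (r : ℕ) :
    MDiff fun z : ℍ => F ((r : ℝ) +ᵥ z) := by
  have hT : (fun z : ℍ => F ((r : ℝ) +ᵥ z)) =
      fun z => F ((ModularGroup.T ^ (r : ℤ) : SL(2, ℤ)) • z) := by
    ext z
    rw [modular_T_zpow_smul, Int.cast_natCast]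
  rw [hT]
  exact hF.comp (mdifferentiable_smul
    (g := ((ModularGroup.T ^ (r : ℤ) : SL(2, ℤ)) : GL (Fin 2) ℝ)) (by simp))

lemma qPow_vadd_eq_const_mul (h : ℝ) (m : ℤ) (x : ℝ) (z : ℍ) :
    qPow h m (x +ᵥ z) = cexp (2 * Real.pi * Complex.I * m * x / h) * qPow h m z := by
  rw [qPow_eq_exp, qPow_eq_exp, ← Complex.exp_add, coe_vadd]
  ring_nf

lemma MeroPeriodic.comp_natCast_vadd (hF : MeroPeriodic h F) (r : ℕ) :
    MeroPeriodic h fun z => F ((r : ℝ) +ᵥ z) := by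
  obtain ⟨n, hn⟩ := hF.exists_isBounded
  refine ⟨hF.pos, mdifferentiable_comp_natCast_vadd hF.mdiff r,
    fun z => by rw [vadd_vadd, add_comm, ← vadd_vadd, hF.vadd_eq], n, ?_⟩
  set c := cexp (2 * Real.pi * Complex.I * (n : ℤ) * (r : ℝ) / h)
  have hshift : ((fun z : ℍ => F ((r : ℝ) +ᵥ z)) * qPow h n) =
      c⁻¹ • fun z : ℍ => (F * qPow h n) ((r : ℝ) +ᵥ z) := by
    ext z
    have hc : c ≠ 0 := Complex.exp_ne_zero _
    simp only [Pi.mul_apply, Pi.smul_apply, smul_eq_mul, qPow_vadd_eq_const_mul]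
    change _ = c⁻¹ * (F ((r : ℝ) +ᵥ z) * (c * qPow h n z))
    field_simp
  rw [hshift]
  exact (boundedAtImInftySubalgebra ℂ).smul_mem (isBoundedAtImInfty_comp_vadd hn _) _

/-- The sum of the translates of a function of period `N` by `0, …, N - 1`: the trace to period
one. -/
def translateTrace (N : ℕ) (F : ℍ → ℂ) : ℍ → ℂ :=
  ∑ r ∈ Finset.range N, fun z : ℍ => F ((r : ℝ) +ᵥ z)

lemma translateTrace_apply (N : ℕ) (F : ℍ → ℂ) (z : ℍ) :
    translateTrace N F z = ∑ r ∈ Finset.range N, F ((r : ℝ) +ᵥ z) := by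
  rw [translateTrace, Finset.sum_apply]

lemma MeroPeriodic.translateTrace (hF : MeroPeriodic N F) :
    MeroPeriodic 1 (translateTrace N F) := by
  have hsum : MeroPeriodic N (ModularityCriterion.translateTrace N F) :=
    MeroPeriodic.sum hF.pos fun r _ => hF.comp_natCast_vadd r
  refine hsum.to_period_one fun z => ?_
  have hshift (r : ℕ) : F ((r : ℝ) +ᵥ (1 : ℝ) +ᵥ z) = F (((r + 1 : ℕ) : ℝ) +ᵥ z) := by
    rw [vadd_vadd, Nat.cast_succ]
  have hcycle := Finset.sum_range_succ (fun r : ℕ => F ((r : ℝ) +ᵥ z)) N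
  rw [Finset.sum_range_succ', hF.vadd_eq] at hcycle
  simpa [translateTrace_apply, hshift] using hcycle

lemma MeroPeriodic.mul_translateTrace {G : ℍ → ℂ} (hG : MeroPeriodic 1 G) (N : ℕ) (F : ℍ → ℂ) :
    G * ModularityCriterion.translateTrace N F = ModularityCriterion.translateTrace N (G * F) := by
  ext z
  simp [translateTrace_apply, Finset.mul_sum, hG.natCast_vadd_eq]

lemma translateTrace_sum {κ : Type*} (s : Finset κ) (N : ℕ) (F : κ → ℍ → ℂ) :
    translateTrace N (∑ a ∈ s, F a) = ∑ a ∈ s, translateTrace N (F a) := by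
  ext z
  simp only [translateTrace_apply, Finset.sum_apply]
  exact Finset.sum_comm

lemma qCoeff_translateTrace_zero (hN : 0 < N) (hF : MDiff F) :
    qCoeff 1 (translateTrace N F) 0 = N * qCoeff N F 0 := by
  have hN' : (N : ℂ) ≠ 0 := mod_cast hN.ne'
  have hadj := intervalIntegral.sum_integral_adjacent_intervals (μ := MeasureTheory.volume)
    (f := fun x : ℝ => F (x +ᵥ UpperHalfPlane.I)) (a := fun r : ℕ => (r : ℝ)) (n := N)
    fun r _ => (continuous_horizontal_line hF).intervalIntegrable _ _
  have hshift (r : ℕ) : ∫ x in (0 : ℝ)..1, F ((r : ℝ) +ᵥ x +ᵥ UpperHalfPlane.I) =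
      ∫ x in (r : ℝ)..(r + 1 : ℕ), F (x +ᵥ UpperHalfPlane.I) := by
    simpa [add_vadd] using intervalIntegral.integral_comp_add_left (a := 0) (b := 1)
      (fun x : ℝ => F (x +ᵥ UpperHalfPlane.I)) (r : ℝ)
  rw [Nat.cast_zero] at hadj
  simp only [qCoeff, neg_zero, qPow_zero, mul_one, ← hadj, translateTrace_apply]
  rw [intervalIntegral.integral_finsetSum fun r _ =>
    (continuous_horizontal_line (mdifferentiable_comp_natCast_vadd hF r)).intervalIntegrable _ _]
  simp only [hshift]
  push_cast
  field_simp

end Translates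

section ResiduePairing

lemma exists_linearMap_eq_zero_and_eq {K V : Type*} [Field K] [AddCommGroup V] [Module K V]
    {U W : Submodule K V} {ℓ : V →ₗ[K] K} (h : ∀ x ∈ U, x ∈ W → ℓ x = 0) :
    ∃ L : V →ₗ[K] K, (∀ x ∈ U, L x = 0) ∧ ∀ x ∈ W, L x = ℓ x := by
  set p : W →ₗ[K] V ⧸ U := U.mkQ ∘ₗ W.subtype
  have hmem : ℓ ∘ₗ W.subtype ∈ LinearMap.range p.dualMap := by
    rw [LinearMap.range_dualMap_eq_dualAnnihilator_ker, Submodule.mem_dualAnnihilator]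
    exact fun x hx => h _ (by simpa [p] using hx) x.2
  obtain ⟨L, hL⟩ := hmem
  refine ⟨L ∘ₗ U.mkQ, fun x hx => ?_, fun x hx => LinearMap.congr_fun hL ⟨x, hx⟩⟩
  rw [LinearMap.comp_apply, (by simpa using hx : U.mkQ x = 0), map_zero]

/-- The pairing of the principal part and constant term of `G` with the sequence `d`. -/
def principalPairing (d : ℕ → ℂ) : meroPeriodicSubalgebra one_pos →ₗ[ℂ] ℂ where
  toFun G := ∑ᶠ m : ℕ, qCoeff 1 G.1 (-m) * d m
  map_add' G H := by
    have hfin (G : meroPeriodicSubalgebra one_pos) :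
        (support fun m : ℕ => qCoeff 1 G.1 (-m) * d m).Finite := by
      obtain ⟨n, hn⟩ := MeroPeriodic.exists_qCoeff_eq_zero G.2
      refine (Set.finite_Iic n).subset fun m hm => Set.mem_Iic.2 <| not_lt.1 fun hlt => hm ?_
      simp only [hn _ (neg_lt_neg (Nat.cast_lt.2 hlt)), zero_mul]
    rw [← finsum_add_distrib (hfin G) (hfin H)]
    refine finsum_congr fun m => ?_
    rw [← add_mul, ← qCoeff_add (MeroPeriodic.mdiff G.2) (MeroPeriodic.mdiff H.2)]
    rfl
  map_smul' c G := by
    simp only [Subalgebra.coe_smul, qCoeff_smul, mul_assoc, RingHom.id_apply, smul_eq_mul]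
    exact (smul_finsum c fun m : ℕ => qCoeff 1 G.1 (-m) * d m).symm

lemma exists_isLevelOneForm_linearMap_eq {w : ℤ} (hw : Even w)
    {L : meroPeriodicSubalgebra one_pos →ₗ[ℂ] ℂ}
    (hL : ∀ G : meroPeriodicSubalgebra one_pos, IsBoundedAtImInfty (G.1 * qPow 1 (-1)) → L G = 0)
    (horth : ∀ S (hS : IsLevelOneForm w S), L ⟨S, hS.meroPeriodic⟩ = 0) :
    ∃ T, IsLevelOneForm (2 - w) T ∧
      ∀ G : meroPeriodicSubalgebra one_pos, L G = qCoeff 1 (T * G.1) 0 := by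
  have hexp := linearMap_apply_eq_finsum L hL
  set t : ℤ → ℂ := fun m => L ⟨qPow 1 (-m), meroPeriodic_qPow one_pos (-m)⟩ with ht
  obtain ⟨T, hT, hcoeff⟩ := exists_isLevelOneForm_qCoeff_eq hw t (N := 0) (fun n hn => hL _ (by
      rw [← qPow_add]
      exact isBoundedAtImInfty_qPow one_pos (by omega))) fun S hS => by
    rw [← horth S hS, hexp, ← finsum_comp_equiv (Equiv.neg ℤ)]
    exact finsum_congr fun n => by simp [ht, mul_comm]
  refine ⟨T, hT, fun G => ?_⟩
  rw [hexp, hT.meroPeriodic.qCoeff_mul_zero G.2]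
  exact finsum_congr fun m => by simp [hcoeff, ht]

end ResiduePairing

section SignSystem

variable {ι : Type*} [MulAction SL(2, ℤ) ι] {ε : SL(2, ℤ) → ι → ℂ} {N : ℕ} {i₀ : ι} {k : ℤ}

/-- Signs `ε γ i` attached to the elements of an `SL(2, ℤ)`-set on which `T ^ N` acts trivially,
together with a distinguished element, fixed by `T`, that plays the role of the cusp `∞`. -/
structure IsSignSystem (ε : SL(2, ℤ) → ι → ℂ) (N : ℕ) (i₀ : ι) : Prop where
  pos : 0 < N
  sq_eq_one : ∀ γ i, ε γ i ^ 2 = 1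
  T_pow_smul : ∀ i : ι, (ModularGroup.T ^ N : SL(2, ℤ)) • i = i
  T_pow_eq_one : ∀ i, ε (ModularGroup.T ^ N) i = 1
  T_smul : (ModularGroup.T : SL(2, ℤ)) • i₀ = i₀
  T_eq_one : ε ModularGroup.T i₀ = 1

lemma IsSignSystem.T_pow_smul_base (hε : IsSignSystem ε N i₀) (r : ℕ) :
    (ModularGroup.T ^ r : SL(2, ℤ)) • i₀ = i₀ := by
  induction r with
  | zero => simp
  | succ r ih => rw [pow_succ, mul_smul, hε.T_smul, ih]

lemma denom_T_pow (r : ℕ) (z : ℍ) : denom (ModularGroup.T ^ r : SL(2, ℤ)) z = 1 := by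
  rw [← zpow_natCast, ModularGroup.denom_apply, ModularGroup.coe_T_zpow]
  simp

lemma T_pow_smul_eq_vadd (r : ℕ) (z : ℍ) :
    (ModularGroup.T ^ r : SL(2, ℤ)) • z = (r : ℝ) +ᵥ z := by
  rw [← zpow_natCast, modular_T_zpow_smul, Int.cast_natCast]

namespace IsVectorForm

variable {v : ι → ℍ → ℂ}

lemma apply_natCast_vadd (hv : IsVectorForm ε k v) (r : ℕ) (i : ι) (z : ℍ) :
    v ((ModularGroup.T ^ r : SL(2, ℤ)) • i) ((r : ℝ) +ᵥ z) =
      ε (ModularGroup.T ^ r) ((ModularGroup.T ^ r : SL(2, ℤ)) • i) * v i z := by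
  rw [← T_pow_smul_eq_vadd, hv.smul_eq, denom_T_pow, one_zpow, mul_one, inv_smul_smul]

lemma vadd_eq (hε : IsSignSystem ε N i₀) (hv : IsVectorForm ε k v) (i : ι) (z : ℍ) :
    v i ((N : ℝ) +ᵥ z) = v i z := by
  simpa [hε.T_pow_smul, hε.T_pow_eq_one] using hv.apply_natCast_vadd N i z

lemma one_vadd_eq (hε : IsSignSystem ε N i₀) (hv : IsVectorForm ε k v) (z : ℍ) :
    v i₀ ((1 : ℝ) +ᵥ z) = v i₀ z := by
  simpa [hε.T_smul, hε.T_eq_one] using hv.apply_natCast_vadd 1 i₀ z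

end IsVectorForm

end SignSystem

section DualFrame

variable {ι : Type*} [Fintype ι] [DecidableEq ι] {f : ι → ι → ℍ → ℂ}

/-- The dual frame: the transposed inverse of the array `f`. -/
def dualFrame (f : ι → ι → ℍ → ℂ) (a i : ι) (z : ℍ) : ℂ := (Matrix.of fun a i => f a i z)⁻¹ i a

lemma sum_mul_dualFrame (hf : ∀ z, frameDet f z ≠ 0) (i j : ι) (z : ℍ) :
    ∑ a, f a j z * dualFrame f a i z = if j = i then 1 else 0 := by
  have hinv := Matrix.nonsing_inv_mul (Matrix.of fun a i => f a i z) (isUnit_iff_ne_zero.2 (hf z))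
  simpa [Matrix.mul_apply, Matrix.one_apply, eq_comm, mul_comm, dualFrame] using
    congrFun (congrFun hinv i) j

lemma dualFrame_eq_of_sum_mul {z : ℍ} {C : ι → ι → ℂ}
    (hC : ∀ i j, ∑ a, f a j z * C a i = if j = i then 1 else 0) (a i : ι) :
    dualFrame f a i z = C a i := by
  have hinv : (Matrix.of fun a i => f a i z)⁻¹ = Matrix.of fun i a => C a i := by
    refine Matrix.inv_eq_left_inv (Matrix.ext fun i j => ?_)
    simpa [Matrix.mul_apply, Matrix.one_apply, eq_comm, mul_comm] using hC i j
  rw [dualFrame, hinv, Matrix.of_apply]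

lemma meroPeriodic_frameDet {h : ℝ} (hh : 0 < h) (hf : ∀ a i, MeroPeriodic h (f a i)) :
    MeroPeriodic h (frameDet f) := by
  rw [frameDet_eq_sum]
  exact .sum hh fun σ _ => (MeroPeriodic.prod hh fun i _ => hf (σ i) i).smul _

lemma dualFrame_eq_inv_mul (f : ι → ι → ℍ → ℂ) (a i : ι) :
    dualFrame f a i = (frameDet f)⁻¹ * frameDet (update f a (Pi.single i 1)) := by
  ext z
  rw [dualFrame, Matrix.inv_def, Ring.inverse_eq_inv', Matrix.smul_apply, smul_eq_mul,
    Matrix.adjugate_apply, Pi.mul_apply, Pi.inv_apply, frameDet, frameDet]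
  congr 2
  ext b j
  rcases eq_or_ne b a with rfl | hb
  · rcases eq_or_ne j i with rfl | hj
    · simp
    · simp [hj]
  · simp [hb]

lemma meroPeriodic_dualFrame {h : ℝ} (hh : 0 < h) (hf : ∀ a i, MeroPeriodic h (f a i))
    (hdet : ∀ z, frameDet f z ≠ 0) (a i : ι) : MeroPeriodic h (dualFrame f a i) := by
  rw [dualFrame_eq_inv_mul]
  refine ((meroPeriodic_frameDet hh hf).inv hdet).mul (meroPeriodic_frameDet hh fun b j => ?_)
  rcases eq_or_ne b a with rfl | hb
  · rw [update_self, Pi.single_apply]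
    split_ifs
    exacts [meroPeriodic_const hh 1, meroPeriodic_const hh 0]
  · rw [update_of_ne hb]
    exact hf b j

variable [MulAction SL(2, ℤ) ι] {ε : SL(2, ℤ) → ι → ℂ} {k : ℤ} {wt : ι → ℤ}

lemma dualFrame_smul_eq (hε : ∀ γ i, ε γ i ^ 2 = 1) (hf : ∀ a, IsVectorForm ε (wt a) (f a))
    (hdet : ∀ z, frameDet f z ≠ 0) (γ : SL(2, ℤ)) (z : ℍ) (a i : ι) :
    dualFrame f a i (γ • z) = ε γ i * denom γ z ^ (-wt a) * dualFrame f a (γ⁻¹ • i) z := by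
  refine dualFrame_eq_of_sum_mul
    (C := fun a i => ε γ i * denom γ z ^ (-wt a) * dualFrame f a (γ⁻¹ • i) z) (fun i j => ?_) a i
  have hterm (a : ι) : f a j (γ • z) *
      (ε γ i * denom γ z ^ (-wt a) * dualFrame f a (γ⁻¹ • i) z) =
        ε γ j * ε γ i * (f a (γ⁻¹ • j) z * dualFrame f a (γ⁻¹ • i) z) := by
    have hd := zpow_ne_zero (wt a) (denom_ne_zero γ z)
    rw [(hf a).smul_eq, zpow_neg]
    field_simp
  simp_rw [hterm]
  rw [← Finset.mul_sum, sum_mul_dualFrame hdet]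
  rcases eq_or_ne j i with rfl | hij
  · simp [← sq, hε]
  · rw [if_neg hij, if_neg fun h => hij (smul_left_cancel _ h), mul_zero]

variable {N : ℕ} {i₀ : ι}

namespace IsFrame

lemma meroPeriodic (hε : IsSignSystem ε N i₀) (hf : IsFrame ε k wt f) (a i : ι) :
    MeroPeriodic N (f a i) :=
  .of_isBounded (mod_cast hε.pos) ((hf.isVectorForm a).mdiff i)
    ((hf.isVectorForm a).vadd_eq hε i) (n := 0) (by simpa [qPow_zero] using hf.isBounded a i)

lemma meroPeriodic_one (hε : IsSignSystem ε N i₀) (hf : IsFrame ε k wt f) (a : ι) :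
    MeroPeriodic 1 (f a i₀) :=
  (hf.meroPeriodic hε a i₀).to_period_one ((hf.isVectorForm a).one_vadd_eq hε)

lemma meroPeriodic_dualFrame (hε : IsSignSystem ε N i₀) (hf : IsFrame ε k wt f)
    (hdet : ∀ z, frameDet f z ≠ 0) (a i : ι) : MeroPeriodic N (dualFrame f a i) :=
  ModularityCriterion.meroPeriodic_dualFrame (mod_cast hε.pos) (hf.meroPeriodic hε) hdet a i

lemma meroPeriodic_one_dualFrame (hε : IsSignSystem ε N i₀) (hf : IsFrame ε k wt f)
    (hdet : ∀ z, frameDet f z ≠ 0) (a : ι) : MeroPeriodic 1 (dualFrame f a i₀) :=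
  (hf.meroPeriodic_dualFrame hε hdet a i₀).to_period_one fun z => by
    rw [← modular_T_smul, dualFrame_smul_eq hε.sq_eq_one hf.isVectorForm hdet, denom_T, one_zpow,
      hε.T_eq_one, inv_smul_eq_iff.2 hε.T_smul.symm, one_mul, one_mul]

lemma sum_mul_translateTrace_dualFrame (hε : IsSignSystem ε N i₀) (hf : IsFrame ε k wt f)
    (hdet : ∀ z, frameDet f z ≠ 0) (F : ℍ → ℂ) (i j : ι) :
    ∑ a, f a j * translateTrace N (dualFrame f a i * F) = ∑ r ∈ Finset.range N,
      (if (ModularGroup.T ^ r : SL(2, ℤ)) • j = i then ε (ModularGroup.T ^ r) i else 0) •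
        fun z : ℍ => F ((r : ℝ) +ᵥ z) := by
  ext z
  simp only [Finset.sum_apply, Pi.mul_apply, translateTrace_apply, Finset.mul_sum, Pi.smul_apply]
  rw [Finset.sum_comm]
  refine Finset.sum_congr rfl fun r _ => ?_
  set γ : SL(2, ℤ) := ModularGroup.T ^ r
  have hterm (a : ι) : f a j z * (dualFrame f a i ((r : ℝ) +ᵥ z) * F ((r : ℝ) +ᵥ z)) =
      f a (γ • j) ((r : ℝ) +ᵥ z) * dualFrame f a i ((r : ℝ) +ᵥ z) *
        (ε γ (γ • j) * F ((r : ℝ) +ᵥ z)) := by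
    rw [(hf.isVectorForm a).apply_natCast_vadd]
    linear_combination (-(f a j z * dualFrame f a i ((r : ℝ) +ᵥ z) * F ((r : ℝ) +ᵥ z))) *
      hε.sq_eq_one γ (γ • j)
  simp_rw [hterm]
  rw [← Finset.sum_mul, sum_mul_dualFrame hdet]
  split_ifs with hij
  · rw [hij, one_mul, smul_eq_mul]
  · simp

end IsFrame

end DualFrame

section Coordinates

variable {ι : Type*} [Fintype ι] {f : ι → ι → ℍ → ℂ}

/-- The vector-valued function with coordinates `s`, of period one, with respect to the frame
`f`. -/
def ofCoords (f : ι → ι → ℍ → ℂ) :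
    (ι → meroPeriodicSubalgebra one_pos) →ₗ[ℂ] (ι → ℍ → ℂ) where
  toFun s i := ∑ a, f a i * (s a).1
  map_add' s t := by
    ext i z
    simp [mul_add, Finset.sum_add_distrib]
  map_smul' c s := by
    ext i z
    simp [Finset.mul_sum]

lemma ofCoords_apply (f : ι → ι → ℍ → ℂ) (s : ι → meroPeriodicSubalgebra one_pos) (i : ι) :
    ofCoords f s i = ∑ a, f a i * (s a).1 := rfl

lemma ofCoords_single [DecidableEq ι] (f : ι → ι → ℍ → ℂ) (a : ι)
    (G : meroPeriodicSubalgebra one_pos) (i : ι) :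
    ofCoords f (Pi.single a G) i = f a i * G.1 := by
  rw [ofCoords_apply, Finset.sum_eq_single a (fun b _ hb => by simp [hb]) (by simp),
    Pi.single_eq_same]

/-- Coordinates of vector-valued forms of weight `w` with respect to a frame of weights `wt`. -/
def formCoords (wt : ι → ℤ) (w : ℤ) : Submodule ℂ (ι → meroPeriodicSubalgebra one_pos) where
  carrier := {s | ∀ a, IsLevelOneForm (w - wt a) (s a).1}
  add_mem' hs ht a := (hs a).add (ht a)
  zero_mem' _ := .zero
  smul_mem' c _ hs a := (hs a).smul c

/-- Coordinates of vector-valued functions bounded at `i∞` in all components other than `i₀`. -/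
def boundedCoords (f : ι → ι → ℍ → ℂ) (i₀ : ι) :
    Submodule ℂ (ι → meroPeriodicSubalgebra one_pos) where
  carrier := {s | ∀ i ≠ i₀, IsBoundedAtImInfty (ofCoords f s i)}
  add_mem' hs ht i hi := by
    rw [map_add]
    exact (boundedAtImInftySubalgebra ℂ).add_mem (hs i hi) (ht i hi)
  zero_mem' i _ := by
    rw [map_zero]
    exact (boundedAtImInftySubalgebra ℂ).zero_mem
  smul_mem' c s hs i hi := by
    rw [map_smul]
    exact (boundedAtImInftySubalgebra ℂ).smul_mem (hs i hi) c

/-- On coordinate vectors of functions bounded away from the component `i₀`, the residue pairing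
with the tuple `t` computes the pairing of the principal part of the component `i₀` with `d`. -/
def RepresentsPairing (f : ι → ι → ℍ → ℂ) (i₀ : ι) (d : ℕ → ℂ) (t : ι → ℍ → ℂ) : Prop :=
  ∀ s ∈ boundedCoords f i₀,
    qCoeff 1 (∑ a, t a * (s a).1) 0 = ∑ᶠ m : ℕ, qCoeff 1 (ofCoords f s i₀) (-m) * d m

variable [MulAction SL(2, ℤ) ι] {ε : SL(2, ℤ) → ι → ℂ} {k : ℤ} {wt : ι → ℤ} {i₀ : ι}

lemma isVectorForm_ofCoords {w : ℤ} (hf : ∀ a, IsVectorForm ε (wt a) (f a))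
    {s : ι → meroPeriodicSubalgebra one_pos} (hs : s ∈ formCoords wt w) :
    IsVectorForm ε w (ofCoords f s) := by
  have hsum : ofCoords f s = ∑ a, fun i => (s a).1 * f a i := by
    ext i z
    simp [ofCoords_apply, mul_comm]
  rw [hsum]
  exact .sum _ fun a _ => by simpa using (hf a).mul_left (hs a)

variable [DecidableEq ι] {N : ℕ}

lemma IsFrame.exists_linearMap_eq_pairing (hε : IsSignSystem ε N i₀) (hf : IsFrame ε k wt f)
    {d : ℕ → ℂ}
    (horth : ∀ v, IsVectorForm ε (2 - k) v → (∀ i ≠ i₀, IsBoundedAtImInfty (v i)) →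
      MeroPeriodic 1 (v i₀) → ∑ᶠ m : ℕ, qCoeff 1 (v i₀) (-m) * d m = 0) :
    ∃ L : (ι → meroPeriodicSubalgebra one_pos) →ₗ[ℂ] ℂ,
      (∀ s ∈ formCoords wt (2 - k), L s = 0) ∧ ∀ s ∈ boundedCoords f i₀,
        L s = ∑ᶠ m : ℕ, qCoeff 1 (ofCoords f s i₀) (-m) * d m := by
  have hmero (s : ι → meroPeriodicSubalgebra one_pos) : MeroPeriodic 1 (ofCoords f s i₀) :=
    .sum one_pos fun a _ => (hf.meroPeriodic_one hε a).mul (s a).2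
  obtain ⟨ℓ, hℓ⟩ : ∃ ℓ : (ι → meroPeriodicSubalgebra one_pos) →ₗ[ℂ] ℂ,
      ∀ s, ℓ s = ∑ᶠ m : ℕ, qCoeff 1 (ofCoords f s i₀) (-m) * d m :=
    ⟨principalPairing d ∘ₗ
      ((LinearMap.proj i₀ : (ι → ℍ → ℂ) →ₗ[ℂ] ℍ → ℂ) ∘ₗ ofCoords f).codRestrict
        (Subalgebra.toSubmodule (meroPeriodicSubalgebra one_pos)) hmero, fun _ => rfl⟩
  simp only [← hℓ]
  exact exists_linearMap_eq_zero_and_eq fun s hs hs' => by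
    rw [hℓ]
    exact horth _ (isVectorForm_ofCoords hf.isVectorForm hs) hs' (hmero s)

lemma IsFrame.exists_representsPairing (hε : IsSignSystem ε N i₀) (hf : IsFrame ε k wt f)
    {d : ℕ → ℂ}
    (horth : ∀ v, IsVectorForm ε (2 - k) v → (∀ i ≠ i₀, IsBoundedAtImInfty (v i)) →
      MeroPeriodic 1 (v i₀) → ∑ᶠ m : ℕ, qCoeff 1 (v i₀) (-m) * d m = 0) :
    ∃ t : ι → ℍ → ℂ, (∀ a, IsLevelOneForm (k + wt a) (t a)) ∧ RepresentsPairing f i₀ d t := by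
  obtain ⟨L, hform, hbdd⟩ := hf.exists_linearMap_eq_pairing hε horth
  have hvanish (a : ι) (G : meroPeriodicSubalgebra one_pos)
      (hG : IsBoundedAtImInfty (G.1 * qPow 1 (-1))) : L (Pi.single a G) = 0 := by
    have hG' : IsBoundedAtImInfty G.1 := by
      simpa [qPow_zero] using isBoundedAtImInfty_mul_qPow_mono one_pos (by decide : (-1 : ℤ) ≤ 0) hG
    rw [hbdd _ fun i _ => by rw [ofCoords_single]; exact (hf.isBounded a i).mul hG',
      ofCoords_single]
    refine finsum_eq_zero_of_forall_eq_zero fun m => ?_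
    rw [((hf.meroPeriodic_one hε a).mul G.2).qCoeff_eq_zero_of_lt (M := 1)
      (by rw [mul_assoc]; exact (hf.isBounded a i₀).mul hG) (by omega), zero_mul]
  have hkill (a : ι) (S : ℍ → ℂ) (hS : IsLevelOneForm (2 - k - wt a) S) :
      L (Pi.single a ⟨S, hS.meroPeriodic⟩) = 0 := hform _ fun b => by
    rcases eq_or_ne b a with rfl | hb
    · rwa [Pi.single_eq_same]
    · rw [Pi.single_eq_of_ne hb]
      exact .zero
  have heven (a : ι) : Even (2 - k - wt a) := by
    obtain ⟨r, hr⟩ := hf.even_sub a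
    exact ⟨1 - k - r, by omega⟩
  choose t ht hLt using fun a => exists_isLevelOneForm_linearMap_eq (heven a)
    (L := L ∘ₗ LinearMap.single ℂ (fun _ => meroPeriodicSubalgebra one_pos) a)
    (hvanish a) (hkill a)
  refine ⟨t, fun a => by convert ht a using 1; ring, fun s hs => ?_⟩
  rw [← hbdd s hs, qCoeff_sum fun a _ => (ht a).meroPeriodic.mul (s a).2]
  conv_rhs => rw [← Finset.univ_sum_single s, map_sum]
  exact Finset.sum_congr rfl fun a _ => (hLt a (s a)).symm

end Coordinates

section Duality

variable {ι : Type*} [Fintype ι] [DecidableEq ι] {f : ι → ι → ℍ → ℂ} {t : ι → ℍ → ℂ}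

/-- The vector-valued function with coordinates `t` with respect to the dual frame. -/
def dualCombination (f : ι → ι → ℍ → ℂ) (t : ι → ℍ → ℂ) (i : ι) : ℍ → ℂ :=
  ∑ a, t a * dualFrame f a i

variable [MulAction SL(2, ℤ) ι] {ε : SL(2, ℤ) → ι → ℂ} {k : ℤ} {wt : ι → ℤ} {N : ℕ} {i₀ : ι}
  {d : ℕ → ℂ}

namespace IsFrame

lemma meroPeriodic_dualCombination (hε : IsSignSystem ε N i₀) (hf : IsFrame ε k wt f)
    (hdet : ∀ z, frameDet f z ≠ 0) (ht : ∀ a, IsLevelOneForm (k + wt a) (t a)) (i : ι) :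
    MeroPeriodic N (dualCombination f t i) :=
  .sum (mod_cast hε.pos) fun a _ =>
    ((ht a).meroPeriodic.of_period_one hε.pos).mul (hf.meroPeriodic_dualFrame hε hdet a i)

lemma isVectorForm_dualCombination (hε : IsSignSystem ε N i₀) (hf : IsFrame ε k wt f)
    (hdet : ∀ z, frameDet f z ≠ 0) (ht : ∀ a, IsLevelOneForm (k + wt a) (t a)) :
    IsVectorForm ε k (dualCombination f t) where
  mdiff i := (hf.meroPeriodic_dualCombination hε hdet ht i).mdiff
  smul_eq γ i z := by
    simp only [dualCombination, Finset.sum_apply, Pi.mul_apply, Finset.mul_sum]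
    refine Finset.sum_congr rfl fun a _ => ?_
    have hd := zpow_ne_zero (wt a) (denom_ne_zero γ z)
    rw [(ht a).smul_eq, dualFrame_smul_eq hε.sq_eq_one hf.isVectorForm hdet,
      zpow_add₀ (denom_ne_zero γ z), zpow_neg]
    field_simp

/-- Pairing with the vector whose only nonzero component is `q ^ (-m)` at `i₀` extracts the
coefficient of `q ^ m`. -/
lemma qCoeff_dualCombination_base (hε : IsSignSystem ε N i₀) (hf : IsFrame ε k wt f)
    (hdet : ∀ z, frameDet f z ≠ 0) (ht : RepresentsPairing f i₀ d t) (m : ℤ) :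
    qCoeff 1 (dualCombination f t i₀) m = ∑ᶠ n : ℕ, (if (n : ℤ) = m then 1 else 0) * d n := by
  let s : ι → meroPeriodicSubalgebra one_pos := fun a =>
    ⟨dualFrame f a i₀ * qPow 1 (-m),
      (hf.meroPeriodic_one_dualFrame hε hdet a).mul (meroPeriodic_qPow one_pos _)⟩
  have hs (i : ι) : ofCoords f s i = (if i = i₀ then 1 else 0 : ℂ) • qPow 1 (-m) := by
    ext z
    rw [Pi.smul_apply, ← sum_mul_dualFrame hdet _ _ z, smul_eq_mul, Finset.sum_mul]
    simp [ofCoords_apply, s, mul_assoc]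
  have hpair := ht s fun i hi => by
    rw [hs, if_neg hi, zero_smul]
    exact (boundedAtImInftySubalgebra ℂ).zero_mem
  have hres : ∑ a, t a * (s a).1 = dualCombination f t i₀ * qPow 1 (-m) := by
    simp [s, dualCombination, Finset.sum_mul, mul_assoc]
  rw [hres, qCoeff_mul_qPow, zero_sub, neg_neg, hs, if_pos rfl, one_smul] at hpair
  simpa only [qCoeff_qPow one_pos, neg_inj] using hpair

/-- The vector with only nonzero component `q ^ (-m / N)` at `i` need not have coordinates of
period one, so it is averaged over translates. For `m ≤ 0` the result is bounded, and it vanishes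
at `i₀`. -/
lemma qCoeff_dualCombination_eq_zero (hε : IsSignSystem ε N i₀) (hf : IsFrame ε k wt f)
    (hdet : ∀ z, frameDet f z ≠ 0) (ht : ∀ a, IsLevelOneForm (k + wt a) (t a))
    (hrep : RepresentsPairing f i₀ d t) {i : ι} (hi : i ≠ i₀) {m : ℤ} (hm : m ≤ 0) :
    qCoeff N (dualCombination f t i) m = 0 := by
  have hN : (0 : ℝ) < N := mod_cast hε.pos
  have hdual (a : ι) := (hf.meroPeriodic_dualFrame hε hdet a i).mul (meroPeriodic_qPow hN (-m))
  let s : ι → meroPeriodicSubalgebra one_pos := fun a =>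
    ⟨translateTrace N (dualFrame f a i * qPow N (-m)), (hdual a).translateTrace⟩
  have hs := hf.sum_mul_translateTrace_dualFrame hε hdet (qPow N (-m)) i
  have hpair := hrep s fun j _ => by
    rw [ofCoords_apply, hs]
    exact (boundedAtImInftySubalgebra ℂ).sum_mem fun r _ =>
      (boundedAtImInftySubalgebra ℂ).smul_mem
        (isBoundedAtImInfty_comp_vadd (isBoundedAtImInfty_qPow hN (by omega)) _) _
  have hbase : ofCoords f s i₀ = 0 := by
    rw [ofCoords_apply, hs]
    exact Finset.sum_eq_zero fun r _ => by rw [hε.T_pow_smul_base, if_neg hi.symm, zero_smul]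
  have hres : ∑ a, t a * (s a).1 = translateTrace N (dualCombination f t i * qPow N (-m)) := by
    simp only [s, (ht _).meroPeriodic.mul_translateTrace, ← translateTrace_sum, dualCombination,
      Finset.sum_mul, mul_assoc]
  have hmdiff := ((hf.meroPeriodic_dualCombination hε hdet ht i).mul
    (meroPeriodic_qPow hN (-m))).mdiff
  rw [hres, hbase, qCoeff_translateTrace_zero hε.pos hmdiff, qCoeff_mul_qPow, zero_sub,
    neg_neg] at hpair
  simpa [qCoeff_zero, hε.pos.ne'] using hpair

/-- The nontrivial half of Serre duality. -/
theorem exists_isVectorForm_qCoeff_eq (hε : IsSignSystem ε N i₀) (hf : IsFrame ε k wt f)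
    (hdet : ∀ z, frameDet f z ≠ 0)
    (horth : ∀ v, IsVectorForm ε (2 - k) v → (∀ i ≠ i₀, IsBoundedAtImInfty (v i)) →
      MeroPeriodic 1 (v i₀) → ∑ᶠ m : ℕ, qCoeff 1 (v i₀) (-m) * d m = 0) :
    ∃ g, IsVectorForm ε k g ∧ MeroPeriodic 1 (g i₀) ∧ (∀ m : ℕ, qCoeff 1 (g i₀) m = d m) ∧
      (∀ m < 0, qCoeff 1 (g i₀) m = 0) ∧
      ∀ i ≠ i₀, MeroPeriodic N (g i) ∧ IsZeroAtImInfty (g i) := by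
  obtain ⟨t, ht, hrep⟩ := hf.exists_representsPairing hε horth
  have hmero := hf.meroPeriodic_dualCombination hε hdet ht
  have hbase := hf.qCoeff_dualCombination_base hε hdet hrep
  refine ⟨dualCombination f t, hf.isVectorForm_dualCombination hε hdet ht, ?_, fun m => ?_,
    fun m hm => ?_, fun i hi => ⟨hmero i, ?_⟩⟩
  · exact .sum one_pos fun a _ =>
      (ht a).meroPeriodic.mul (hf.meroPeriodic_one_dualFrame hε hdet a)
  · rw [hbase, finsum_eq_single _ m fun n hn => by rw [if_neg (mod_cast hn), zero_mul],
      if_pos rfl, one_mul]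
  · rw [hbase]
    exact finsum_eq_zero_of_forall_eq_zero fun n => by rw [if_neg (by omega), zero_mul]
  · exact (hmero i).isZero_of_qCoeff fun m hm =>
      hf.qCoeff_dualCombination_eq_zero hε hdet ht hrep hi hm

end IsFrame

end Duality

section Residue

variable {ι : Type*} [MulAction SL(2, ℤ) ι] {ε : SL(2, ℤ) → ι → ℂ} {k : ℤ}
  {F G : ι → ℍ → ℂ}

lemma IsVectorForm.sum_mul_smul_eq [Fintype ι] (hε : ∀ γ i, ε γ i ^ 2 = 1)
    (hF : IsVectorForm ε (2 - k) F) (hG : IsVectorForm ε k G) (γ : SL(2, ℤ)) (z : ℍ) :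
    (∑ i, F i * G i) (γ • z) = denom γ z ^ (2 : ℤ) * (∑ i, F i * G i) z := by
  simp only [Finset.sum_apply, Pi.mul_apply, Finset.mul_sum]
  rw [← Equiv.sum_comp (MulAction.toPerm γ)]
  refine Finset.sum_congr rfl fun i _ => ?_
  have hd : denom γ z ^ (2 : ℤ) = denom γ z ^ (2 - k) * denom γ z ^ k := by
    rw [← zpow_add₀ (denom_ne_zero γ z), sub_add_cancel]
  rw [MulAction.toPerm_apply, hF.smul_eq, hG.smul_eq, inv_smul_smul, hd]
  linear_combination (denom γ z ^ (2 - k) * denom γ z ^ k * F i z * G i z) * hε γ (γ • i)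

/-- The sum of the `F i * G i` is a level one form of weight two, and only the term at `i₀`
contributes to its constant term. -/
theorem IsVectorForm.qCoeff_mul_zero [Finite ι] {i₀ : ι} (hε : ∀ γ i, ε γ i ^ 2 = 1)
    (hF : IsVectorForm ε (2 - k) F) (hG : IsVectorForm ε k G) (hF₁ : MeroPeriodic 1 (F i₀))
    (hG₁ : MeroPeriodic 1 (G i₀)) (hFb : ∀ i ≠ i₀, IsBoundedAtImInfty (F i))
    (hG₀ : ∀ i ≠ i₀, IsZeroAtImInfty (G i)) : qCoeff 1 (F i₀ * G i₀) 0 = 0 := by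
  classical
  cases nonempty_fintype ι
  have hsplit : ∑ i, F i * G i = F i₀ * G i₀ + ∑ i ∈ Finset.univ.erase i₀, F i * G i :=
    (Finset.add_sum_erase _ _ (Finset.mem_univ i₀)).symm
  have hzero : IsZeroAtImInfty (∑ i ∈ Finset.univ.erase i₀, F i * G i) :=
    Finset.sum_induction _ IsZeroAtImInfty (fun _ _ => ZeroAtFilter.add) (zero_zeroAtFilter _)
      fun i hi => BoundedAtFilter.mul_zeroAtFilter (hFb i (Finset.ne_of_mem_erase hi))
        (hG₀ i (Finset.ne_of_mem_erase hi))
  have hmul := hF₁.mul hG₁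
  have hform : IsLevelOneForm 2 (∑ i, F i * G i) := by
    obtain ⟨n, hn⟩ := hmul.exists_isBounded
    refine ⟨?_, IsVectorForm.sum_mul_smul_eq hε hF hG, n, ?_⟩
    · exact mdifferentiable_sum fun i _ => (hF.mdiff i).mul (hG.mdiff i)
    · rw [hsplit, add_mul]
      exact (boundedAtImInftySubalgebra ℂ).add_mem hn
        (hzero.isBoundedAtImInfty.mul (isBoundedAtImInfty_qPow one_pos (by omega)))
  have hrest : MeroPeriodic 1 (∑ i ∈ Finset.univ.erase i₀, F i * G i) := by
    rw [← add_sub_cancel_left (F i₀ * G i₀) (∑ i ∈ Finset.univ.erase i₀, F i * G i), ← hsplit]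
    exact hform.meroPeriodic.sub hmul
  have hconst := hform.qCoeff_zero_eq_zero
  rwa [hsplit, qCoeff_add hmul.mdiff hrest.mdiff, hrest.qCoeff_eq_zero_of_isZero hzero le_rfl,
    add_zero] at hconst

end Residue

/-! ### A frame from powers of a single form -/

section InitialFrame

lemma frameDet_odd_pow {ι : Type*} [Fintype ι] [DecidableEq ι] {n : ℕ} (e : ι ≃ Fin n)
    (v : ι → ℍ → ℂ) :
    frameDet (fun a i => v i ^ (2 * (e a : ℕ) + 1)) =
      (∏ i, v i) * ∏ l, ∏ m ∈ Finset.Ioi l, (v (e.symm m) ^ 2 - v (e.symm l) ^ 2) := by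
  ext z
  have hdet := Matrix.det_vandermonde fun l => v (e.symm l) z ^ 2
  simp only [Pi.mul_apply, Finset.prod_apply, Pi.sub_apply, Pi.pow_apply]
  rw [← hdet, ← Matrix.det_transpose, ← Matrix.det_submatrix_equiv_self e, frameDet,
    ← Matrix.det_mul_row]
  congr 1
  ext a i
  simp [Matrix.vandermonde_apply, pow_succ, pow_mul, mul_comm]

variable {ι : Type*} [MulAction SL(2, ℤ) ι] {ε : SL(2, ℤ) → ι → ℂ} {w : ℤ} {v : ι → ℍ → ℂ}
  {i₀ : ι} {c : ℂ}

lemma prod_ne_zero_of_mdifferentiable {κ : Type*} {s : Finset κ} {F : κ → ℍ → ℂ}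
    (h : ∀ a ∈ s, MDiff (F a)) (h₀ : ∀ a ∈ s, F a ≠ 0) : ∏ a ∈ s, F a ≠ 0 := by
  have hone : MDiff (1 : ℍ → ℂ) := mdifferentiable_const
  exact (Finset.prod_induction F (fun P : ℍ → ℂ => MDiff P ∧ P ≠ 0)
    (fun P Q hP hQ => ⟨hP.1.mul hQ.1, fun hz =>
      ((UpperHalfPlane.mul_eq_zero_iff hP.1 hQ.1).1 hz).elim hP.2 hQ.2⟩)
    ⟨hone, one_ne_zero⟩ fun a ha => ⟨h a ha, h₀ a ha⟩).2

namespace IsVectorForm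

lemma odd_pow (hε : ∀ γ i, ε γ i ^ 2 = 1) (hv : IsVectorForm ε w v) (n : ℕ) :
    IsVectorForm ε ((2 * n + 1 : ℕ) * w) (fun i => v i ^ (2 * n + 1)) where
  mdiff i := (hv.mdiff i).pow _
  smul_eq γ i z := by
    have hpow : ε γ i ^ (2 * n + 1) = ε γ i := by rw [pow_succ, pow_mul, hε, one_pow, one_mul]
    simp only [Pi.pow_apply]
    rw [hv.smul_eq, mul_pow, mul_pow, hpow, mul_comm ((2 * n + 1 : ℕ) : ℤ), zpow_mul, zpow_natCast]

lemma ne_zero_of_tendsto (hε : ∀ γ i, ε γ i ^ 2 = 1) (hv : IsVectorForm ε w v) (hc : c ≠ 0)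
    (hlim : Tendsto (v i₀) atImInfty (𝓝 c)) {γ : SL(2, ℤ)} {i : ι} (hγ : γ⁻¹ • i = i₀) :
    v i ≠ 0 := fun hi => by
  have hbase : v i₀ = 0 := by
    ext z
    have h := hv.smul_eq γ i z
    have hd := zpow_ne_zero w (denom_ne_zero γ z)
    have he : ε γ i ≠ 0 := fun h => by simpa [h] using hε γ i
    rw [hi, hγ] at h
    simpa [hd, he] using h.symm
  rw [hbase] at hlim
  exact hc (tendsto_nhds_unique hlim tendsto_const_nhds)

lemma sq_sub_sq_ne_zero (hε : ∀ γ i, ε γ i ^ 2 = 1) (hv : IsVectorForm ε w v) (hc : c ≠ 0)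
    (hlim : Tendsto (v i₀) atImInfty (𝓝 c)) (h₀ : ∀ i ≠ i₀, IsZeroAtImInfty (v i))
    {γ : SL(2, ℤ)} {i j : ι} (hij : i ≠ j) (hγ : γ⁻¹ • j = i₀) : v i ^ 2 - v j ^ 2 ≠ 0 := by
  intro h
  have hi : γ⁻¹ • i ≠ i₀ := fun h => hij (smul_left_cancel γ⁻¹ (h.trans hγ.symm))
  have hsq : v (γ⁻¹ • i) ^ 2 = v i₀ ^ 2 := by
    ext z
    have hz := congrFun h (γ • z)
    simp only [Pi.sub_apply, Pi.pow_apply, Pi.zero_apply] at hz ⊢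
    rw [hv.smul_eq, hv.smul_eq, hγ, mul_pow, mul_pow, mul_pow, mul_pow, hε, hε, one_mul] at hz
    refine mul_left_cancel₀ (pow_ne_zero 2 (zpow_ne_zero w (denom_ne_zero γ z))) ?_
    linear_combination hz
  have hlim' : Tendsto (v i₀ ^ 2) atImInfty (𝓝 (0 ^ 2)) := hsq ▸ (h₀ _ hi).pow 2
  simpa [hc] using tendsto_nhds_unique (hlim.pow 2) hlim'

end IsVectorForm

variable [Fintype ι] [DecidableEq ι]

/-- Odd powers of a form that is nonzero at exactly one cusp are linearly independent: their
determinant is a Vandermonde determinant in the squares of the components, up to the product of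
the components, and these squares are pairwise distinct. -/
lemma exists_isFrame_of_tendsto (hε : ∀ γ i, ε γ i ^ 2 = 1) {k : ℤ} (hv : IsVectorForm ε w v)
    (hb : ∀ i, IsBoundedAtImInfty (v i)) (htrans : ∀ i : ι, ∃ γ : SL(2, ℤ), γ⁻¹ • i = i₀)
    (hc : c ≠ 0) (hlim : Tendsto (v i₀) atImInfty (𝓝 c)) (h₀ : ∀ i ≠ i₀, IsZeroAtImInfty (v i))
    (hwk : Even (w - k)) : ∃ (wt : ι → ℤ) (f : ι → ι → ℍ → ℂ), IsFrame ε k wt f := by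
  set e := Fintype.equivFin ι
  have hsq (i j : ι) : MDiff (v i ^ 2 - v j ^ 2) := ((hv.mdiff i).pow 2).sub ((hv.mdiff j).pow 2)
  have hsq_prod (l) : MDiff (∏ m ∈ Finset.Ioi l, (v (e.symm m) ^ 2 - v (e.symm l) ^ 2)) :=
    mdifferentiable_prod fun m _ => hsq _ _
  refine ⟨fun a => (2 * (e a : ℕ) + 1 : ℕ) * w, fun a i => v i ^ (2 * (e a : ℕ) + 1),
    fun a => hv.odd_pow hε _, fun a i => (boundedAtImInftySubalgebra ℂ).pow_mem (hb i) _,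
    fun a => ?_, ?_⟩
  · obtain ⟨r, hr⟩ := hwk
    exact ⟨(e a : ℕ) * w + r, by push_cast; linear_combination hr⟩
  · rw [frameDet_odd_pow, Ne, UpperHalfPlane.mul_eq_zero_iff
      (mdifferentiable_prod fun i _ => hv.mdiff i) (mdifferentiable_prod fun l _ => hsq_prod l)]
    refine not_or_intro (prod_ne_zero_of_mdifferentiable (fun i _ => hv.mdiff i) fun i _ => ?_)
      (prod_ne_zero_of_mdifferentiable (fun l _ => hsq_prod l) fun l _ =>
        prod_ne_zero_of_mdifferentiable (fun m _ => hsq _ _) fun m hm => ?_)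
    · exact hv.ne_zero_of_tendsto hε hc hlim (htrans i).choose_spec
    · exact hv.sq_sub_sq_ne_zero hε hc hlim h₀
        (e.symm.injective.ne (Finset.mem_Ioi.1 hm).ne') (htrans _).choose_spec

end InitialFrame

/-! ### Constant terms of Eisenstein series -/

section EisensteinConstantTerm

open EisensteinSeries

variable {N : ℕ} {w : ℤ}

/-- The constant term of the level `N` Eisenstein series attached to `a`: only the summands with
vanishing `z`-coefficient survive as `Im z → ∞`. -/
def eisensteinConstantTerm (w : ℤ) (a : Fin 2 → ZMod N) : ℂ :=
  ∑' x : gammaSet N 1 a, if x.1 0 = 0 then ((x.1 1 : ℤ) : ℂ) ^ (-w) else 0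

/-- The sequence `(n + 2) i`, which tends to `i∞` inside the strip `|Re z| ≤ 1`, `Im z ≥ 2` where
Mathlib bounds the Eisenstein summands uniformly. -/
def verticalSeq (n : ℕ) : ℍ := ⟨⟨0, (n : ℝ) + 2⟩, by positivity⟩

lemma tendsto_verticalSeq : Tendsto verticalSeq atTop atImInfty := by
  rw [atImInfty, tendsto_comap_iff]
  exact tendsto_atTop_add_const_right _ _ tendsto_natCast_atTop_atTop

lemma verticalSeq_mem_verticalStrip (n : ℕ) : verticalSeq n ∈ verticalStrip 1 2 := by
  rw [mem_verticalStrip_iff]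
  exact ⟨abs_zero.trans_le zero_le_one, le_add_of_nonneg_left n.cast_nonneg⟩

lemma le_norm_mul_verticalSeq_add {c : ℤ} (hc : c ≠ 0) (d : ℤ) (n : ℕ) :
    (n : ℝ) + 2 ≤ ‖(c : ℂ) * (verticalSeq n : ℂ) + d‖ := by
  have him : ((c : ℂ) * (verticalSeq n : ℂ) + d).im = (c : ℝ) * ((n : ℝ) + 2) := by
    simp [verticalSeq]
  refine le_trans ?_ (Complex.abs_im_le_norm _)
  rw [him, abs_mul, abs_of_pos (by positivity : (0 : ℝ) < n + 2)]
  exact le_mul_of_one_le_left (by positivity) (mod_cast Int.one_le_abs hc)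

lemma tendsto_eisSummand_verticalSeq (hw : 0 < w) (x : Fin 2 → ℤ) :
    Tendsto (fun n => eisSummand w x (verticalSeq n)) atTop
      (𝓝 (if x 0 = 0 then ((x 1 : ℤ) : ℂ) ^ (-w) else 0)) := by
  by_cases h : x 0 = 0
  · simp [eisSummand, h]
  rw [if_neg h, tendsto_zero_iff_norm_tendsto_zero]
  have hpow : Tendsto (fun n : ℕ => ((n : ℝ) + 2) ^ (-w)) atTop (𝓝 0) :=
    (tendsto_zpow_atTop_zero (by omega)).comp
      (tendsto_atTop_add_const_right _ _ tendsto_natCast_atTop_atTop)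
  refine squeeze_zero (fun _ => norm_nonneg _) (fun n => ?_) hpow
  rw [eisSummand, norm_zpow]
  lift w to ℕ using hw.le
  simp only [zpow_neg, zpow_natCast]
  gcongr
  exact le_norm_mul_verticalSeq_add h _ n

lemma tendsto_eisensteinSeries_verticalSeq (hw : 3 ≤ w) (a : Fin 2 → ZMod N) :
    Tendsto (fun n => eisensteinSeries a w (verticalSeq n)) atTop
      (𝓝 (eisensteinConstantTerm w a)) := by
  have hw' : (2 : ℝ) < w := mod_cast hw
  have hsum : Summable fun x : Fin 2 → ℤ => r ⟨⟨1, 2⟩, two_pos⟩ ^ (-w) * ‖x‖ ^ (-w) :=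
    mod_cast (summable_one_div_norm_rpow hw').mul_left <| r ⟨⟨1, 2⟩, two_pos⟩ ^ (-w)
  refine tendsto_tsum_of_dominated_convergence (hsum.subtype (gammaSet N 1 a))
    (fun x => tendsto_eisSummand_verticalSeq (by omega) x.1) (Eventually.of_forall fun n x => ?_)
  simp_rw [eisSummand, norm_zpow]
  exact_mod_cast summand_bound_of_mem_verticalStrip (two_pos.trans hw').le x.1 two_pos
    (verticalSeq_mem_verticalStrip n)

lemma isBoundedAtImInfty_eisensteinSeries [NeZero N] (hw : 3 ≤ w) (a : Fin 2 → ZMod N) :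
    IsBoundedAtImInfty (eisensteinSeries a w) := by
  have h := isBoundedAtImInfty_eisensteinSeriesSIF a hw 1
  rwa [SlashAction.slash_one] at h

lemma meroPeriodic_eisensteinSeries [NeZero N] (hw : 3 ≤ w) (a : Fin 2 → ZMod N) :
    MeroPeriodic N (eisensteinSeries a w) := by
  refine .of_isBounded (mod_cast NeZero.pos N) (eisensteinSeriesSIF_mdifferentiable hw a)
    (fun z => ?_) (n := 0) ?_
  · have h := SlashInvariantForm.T_zpow_width_invariant N w 1 (eisensteinSeriesSIF a w) z
    rw [modular_T_zpow_smul, mul_one] at h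
    simpa only [Int.cast_natCast, eisensteinSeriesSIF_apply] using h
  · simpa [qPow_zero] using isBoundedAtImInfty_eisensteinSeries hw a

lemma tendsto_eisensteinSeries [NeZero N] (hw : 3 ≤ w) (a : Fin 2 → ZMod N) :
    Tendsto (eisensteinSeries a w) atImInfty (𝓝 (eisensteinConstantTerm w a)) := by
  have h := (meroPeriodic_eisensteinSeries hw a).tendsto_qCoeff_zero
    (isBoundedAtImInfty_eisensteinSeries hw a)
  rwa [tendsto_nhds_unique (h.comp tendsto_verticalSeq)
    (tendsto_eisensteinSeries_verticalSeq hw a)] at h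

lemma eisensteinConstantTerm_eq_zero {a : Fin 2 → ZMod N} (ha : a 0 ≠ 0) :
    eisensteinConstantTerm w a = 0 := by
  refine (tsum_congr fun x : gammaSet N 1 a => if_neg fun h => ha ?_).trans tsum_zero
  simpa [h] using (congrFun x.2.1 0).symm

lemma vecCons_zero_mem_gammaSet {d : ZMod N} {b : ℤ} :
    ![0, b] ∈ gammaSet N 1 ![0, d] ↔ (b : ZMod N) = d ∧ b.natAbs = 1 := by
  simp only [gammaSet, Set.mem_ofPred_eq, funext_iff, Fin.forall_fin_two]
  simp [Int.gcd]

open Classical in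
lemma eisensteinConstantTerm_zero_left (w : ℤ) (d : ZMod N) : eisensteinConstantTerm w ![0, d] =
    (if d = 1 then 1 else 0) + (if d = -1 then (-1 : ℂ) ^ w else 0) := by
  set g : (Fin 2 → ℤ) → ℂ := fun x => if x 0 = 0 then ((x 1 : ℤ) : ℂ) ^ (-w) else 0 with hg
  have hsum : eisensteinConstantTerm w ![0, d] = ∑' x, (gammaSet N 1 ![0, d]).indicator g x :=
    tsum_subtype _ g
  rw [hsum, tsum_eq_sum (s := {![0, 1], ![0, -1]}), Finset.sum_pair fun h => by
    simpa using congrFun h 1]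
  · have hinv : ((-1 : ℂ) ^ w)⁻¹ = (-1) ^ w := by rw [← inv_zpow, inv_neg_one]
    simp [Set.indicator_apply, vecCons_zero_mem_gammaSet, hg, hinv, eq_comm]
  · refine fun x hx => Set.indicator_apply_eq_zero.2 fun h => if_neg fun h₀ => hx ?_
    have hx' : x = ![0, x 1] := by
      ext i
      fin_cases i <;> simp [h₀]
    rw [hx', vecCons_zero_mem_gammaSet] at h
    rcases Int.natAbs_eq_iff.mp h.2 with h | h <;> rw [hx', h] <;> simp

end EisensteinConstantTerm

/-! ### Induction from `Γ₀(D)` -/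

section Induction

open CongruenceSubgroup

variable {D : ℕ} {χ : ℤ → ℂ}

lemma _root_.IsQuadDirChar.map_one (hχ : IsQuadDirChar D χ) : χ 1 = 1 := by
  have h₀ : χ 1 ≠ 0 := fun h => (hχ.eq_zero_iff 1).1 h isCoprime_one_left
  exact (mul_eq_left₀ h₀).1 (by rw [← hχ.mul, mul_one])

lemma _root_.IsQuadDirChar.congr (hχ : IsQuadDirChar D χ) {a b : ℤ}
    (h : (a : ZMod D) = b) : χ a = χ b := by
  obtain ⟨n, hn⟩ := (ZMod.intCast_eq_intCast_iff_dvd_sub a b D).1 h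
  have hp : Function.Periodic χ (D : ℤ) := hχ.periodic
  rw [eq_add_of_sub_eq' hn, mul_comm]
  exact (hp.int_mul n a).symm

lemma _root_.IsQuadDirChar.sq_eq_one (hχ : IsQuadDirChar D χ) {a : ℤ}
    (h : IsCoprime a (D : ℤ)) : χ a ^ 2 = 1 := by
  rcases hχ.sq_vals a with h₀ | h₁ | h₁
  · exact absurd h ((hχ.eq_zero_iff a).1 h₀)
  · rw [h₁, one_pow]
  · rw [h₁, neg_one_sq]

lemma mem_Gamma0_iff_dvd {γ : SL(2, ℤ)} : γ ∈ Gamma0 D ↔ (D : ℤ) ∣ γ 1 0 := by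
  rw [Gamma0_mem, ZMod.intCast_zmod_eq_zero_iff_dvd]

lemma isCoprime_of_mem_Gamma0 {γ : SL(2, ℤ)} (h : γ ∈ Gamma0 D) :
    IsCoprime (γ 1 1) (D : ℤ) := by
  obtain ⟨n, hn⟩ := mem_Gamma0_iff_dvd.1 h
  have hdet := Matrix.SpecialLinearGroup.det_coe γ
  rw [Matrix.det_fin_two, hn] at hdet
  exact ⟨γ 0 0, -(γ 0 1 * n), by linear_combination hdet⟩

/-- The coset space `SL₂(ℤ)/Γ₀(D)`, indexing the components of the induced vector-valued forms. -/
abbrev Gamma0Coset (D : ℕ) : Type := SL(2, ℤ) ⧸ Gamma0 D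

/-- The trivial coset, corresponding to the cusp `∞`. -/
def trivialCoset (D : ℕ) : Gamma0Coset D := QuotientGroup.mk 1

open Classical in
/-- A choice of coset representatives, normalised to be `1` at the trivial coset. -/
def cosetRep (i : Gamma0Coset D) : SL(2, ℤ) := if i = trivialCoset D then 1 else i.out

lemma cosetRep_trivialCoset : cosetRep (trivialCoset D) = 1 := if_pos rfl

lemma cosetRep_smul_trivialCoset (i : Gamma0Coset D) : cosetRep i • trivialCoset D = i := by
  rw [trivialCoset, MulAction.Quotient.smul_mk, smul_eq_mul, mul_one, cosetRep]
  split_ifs with h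
  · exact h.symm
  · exact QuotientGroup.out_eq' i

lemma smul_trivialCoset_eq_iff {γ : SL(2, ℤ)} :
    γ • trivialCoset D = trivialCoset D ↔ γ ∈ Gamma0 D := by
  rw [trivialCoset, MulAction.Quotient.smul_mk, smul_eq_mul, mul_one, eq_comm, QuotientGroup.eq,
    inv_one, one_mul]

lemma inv_smul_trivialCoset_eq_iff {γ : SL(2, ℤ)} :
    γ⁻¹ • trivialCoset D = trivialCoset D ↔ γ ∈ Gamma0 D := by
  rw [smul_trivialCoset_eq_iff, inv_mem_iff]

/-- The cocycle `SL₂(ℤ) × SL₂(ℤ)/Γ₀(D) → Γ₀(D)` attached to the coset representatives. -/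
def cosetCocycle (γ : SL(2, ℤ)) (i : Gamma0Coset D) : SL(2, ℤ) :=
  (cosetRep i)⁻¹ * γ * cosetRep (γ⁻¹ • i)

lemma cosetCocycle_mem (γ : SL(2, ℤ)) (i : Gamma0Coset D) : cosetCocycle γ i ∈ Gamma0 D := by
  rw [← smul_trivialCoset_eq_iff, cosetCocycle, mul_smul, mul_smul, cosetRep_smul_trivialCoset,
    smul_inv_smul, inv_smul_eq_iff, cosetRep_smul_trivialCoset]

/-- The signs by which `SL₂(ℤ)` acts on the induced vector-valued forms. -/
def inducedSign (χ : ℤ → ℂ) (γ : SL(2, ℤ)) (i : Gamma0Coset D) : ℂ := χ (cosetCocycle γ i 1 1)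

lemma inducedSign_sq (hχ : IsQuadDirChar D χ) (γ : SL(2, ℤ)) (i : Gamma0Coset D) :
    inducedSign χ γ i ^ 2 = 1 :=
  hχ.sq_eq_one (isCoprime_of_mem_Gamma0 (cosetCocycle_mem γ i))

lemma inducedSign_trivialCoset {γ : SL(2, ℤ)} (h : γ ∈ Gamma0 D) :
    inducedSign χ γ (trivialCoset D) = χ (γ 1 1) := by
  rw [inducedSign, cosetCocycle, inv_smul_trivialCoset_eq_iff.2 h, cosetRep_trivialCoset, inv_one,
    one_mul, mul_one]

/-- The vector-valued form with components `F ∣ s⁻¹`, `s` running over coset representatives. -/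
def inducedVector (w : ℤ) (F : ℍ → ℂ) (i : Gamma0Coset D) : ℍ → ℂ := F ∣[w] (cosetRep i)⁻¹

lemma inducedVector_trivialCoset (w : ℤ) (F : ℍ → ℂ) :
    inducedVector w F (trivialCoset D) = F := by
  rw [inducedVector, cosetRep_trivialCoset, inv_one, SlashAction.slash_one]

lemma cosetRep_inv_notMem {i : Gamma0Coset D} (hi : i ≠ trivialCoset D) :
    (cosetRep i)⁻¹ ∉ Gamma0 D := fun h => hi <| by
  rwa [inv_mem_iff, ← smul_trivialCoset_eq_iff, cosetRep_smul_trivialCoset] at h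

lemma isVectorForm_inducedVector {w : ℤ} {F : ℍ → ℂ} (hF : MDiff F)
    (hs : ∀ γ ∈ Gamma0 D, F ∣[w] γ = χ (γ 1 1) • F) :
    IsVectorForm (inducedSign (D := D) χ) w (inducedVector w F) where
  mdiff i := hF.slash w _
  smul_eq γ i z := by
    have hrep : (cosetRep i)⁻¹ * γ = cosetCocycle γ i * (cosetRep (γ⁻¹ • i))⁻¹ := by
      rw [cosetCocycle, mul_inv_cancel_right]
    have hslash : inducedVector w F i ∣[w] γ =
        inducedSign χ γ i • inducedVector w F (γ⁻¹ • i) := by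
      rw [inducedVector, ← SlashAction.slash_mul, hrep, SlashAction.slash_mul,
        hs _ (cosetCocycle_mem γ i), ModularForm.SL_smul_slash]
      rfl
    have hz := congrFun hslash z
    rw [ModularForm.SL_slash_apply, zpow_neg,
      mul_inv_eq_iff_eq_mul₀ (zpow_ne_zero _ (denom_ne_zero γ z))] at hz
    rw [hz, Pi.smul_apply, smul_eq_mul]
    ring

lemma IsVectorForm.slash_trivialCoset {w : ℤ} {v : Gamma0Coset D → ℍ → ℂ}
    (hv : IsVectorForm (inducedSign χ) w v) (γ : SL(2, ℤ)) (z : ℍ) :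
    (v (trivialCoset D) ∣[w] γ) z =
      inducedSign χ γ (trivialCoset D) * v (γ⁻¹ • trivialCoset D) z := by
  have hd := zpow_ne_zero w (denom_ne_zero γ z)
  rw [ModularForm.SL_slash_apply, hv.smul_eq, zpow_neg]
  field_simp

lemma isSignSystem_inducedSign (hχ : IsQuadDirChar D χ) (hD : 0 < D) :
    IsSignSystem (inducedSign (D := D) χ) D (trivialCoset D) := by
  have hT : ModularGroup.T ∈ Gamma0 D := by simp [ModularGroup.coe_T]
  have hconj (i : Gamma0Coset D) :
      (cosetRep i)⁻¹ * ModularGroup.T ^ D * cosetRep i ∈ CongruenceSubgroup.Gamma D := by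
    have hTD := ModularGroup_T_pow_mem_Gamma (D : ℤ) (D : ℤ) dvd_rfl
    rw [zpow_natCast, Int.natAbs_natCast] at hTD
    simpa using (Gamma_normal D).conj_mem _ hTD (cosetRep i)⁻¹
  have hfix (i : Gamma0Coset D) : ModularGroup.T ^ D • i = i := by
    have h := smul_trivialCoset_eq_iff.2 (Gamma0_mem.2 (Gamma_mem.1 (hconj i)).2.2.1)
    rwa [mul_smul, mul_smul, cosetRep_smul_trivialCoset, inv_smul_eq_iff,
      cosetRep_smul_trivialCoset] at h
  refine ⟨hD, inducedSign_sq hχ, hfix, fun i => ?_, smul_trivialCoset_eq_iff.2 hT, ?_⟩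
  · rw [inducedSign, cosetCocycle, inv_smul_eq_iff.2 (hfix i).symm, ← hχ.map_one]
    exact hχ.congr (by simpa using (Gamma_mem.1 (hconj i)).2.2.2)
  · rw [inducedSign_trivialCoset hT, ModularGroup.coe_T]
    exact hχ.map_one

end Induction

/-! ### The Eisenstein series supported at `∞` -/

section EisensteinAtInfty

open CongruenceSubgroup EisensteinSeries

variable {D : ℕ} {χ : ℤ → ℂ} {w : ℤ}

lemma isUnit_intCast_of_isCoprime {a : ℤ} (h : IsCoprime a (D : ℤ)) : IsUnit (a : ZMod D) := by
  obtain ⟨u, v, huv⟩ := h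
  have h₁ : (u : ZMod D) * a = 1 := by
    simpa using congrArg (Int.cast : ℤ → ZMod D) huv
  exact IsUnit.of_mul_eq_one_right _ h₁

variable [NeZero D]

/-- The weight `w` Eisenstein series of level `D` and character `χ` which, for `3 ≤ w` and
`χ (-1) = (-1) ^ w`, vanishes at every cusp other than `∞`. -/
def eisensteinAtInfty (χ : ℤ → ℂ) (D : ℕ) [NeZero D] (w : ℤ) : ℍ → ℂ :=
  ∑ d : ZMod D, χ (d.val : ℤ) • eisensteinSeries ![0, d] w

lemma eisensteinAtInfty_slash (w : ℤ) (γ : SL(2, ℤ)) : eisensteinAtInfty χ D w ∣[w] γ =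
    ∑ d : ZMod D, χ (d.val : ℤ) •
      eisensteinSeries ![d * (γ 1 0 : ZMod D), d * (γ 1 1 : ZMod D)] w := by
  have hrow (d : ZMod D) : eisensteinSeries ![0, d] w ∣[w] γ =
      eisensteinSeries ![d * (γ 1 0 : ZMod D), d * (γ 1 1 : ZMod D)] w := by
    rw [eisensteinSeries_slash_apply]
    congr 1
    ext i
    fin_cases i <;> simp [Matrix.vecMul, dotProduct, Fin.sum_univ_two]
  let slashHom : (ℍ → ℂ) →+ (ℍ → ℂ) :=
    ⟨⟨fun f => f ∣[w] γ, SlashAction.zero_slash w γ⟩, fun f g => SlashAction.add_slash w γ f g⟩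
  refine (map_sum slashHom _ _).trans (Finset.sum_congr rfl fun d _ => ?_)
  rw [← hrow]
  exact ModularForm.SL_smul_slash _ _ _ _

lemma mdifferentiable_eisensteinAtInfty (hw : 3 ≤ w) : MDiff (eisensteinAtInfty χ D w) :=
  mdifferentiable_sum fun _ _ => (eisensteinSeriesSIF_mdifferentiable hw _).const_smul _

lemma eisensteinAtInfty_slash_of_mem_Gamma0 (hχ : IsQuadDirChar D χ) (w : ℤ) {γ : SL(2, ℤ)}
    (hγ : γ ∈ Gamma0 D) : eisensteinAtInfty χ D w ∣[w] γ = χ (γ 1 1) • eisensteinAtInfty χ D w := by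
  have hcop := isCoprime_of_mem_Gamma0 hγ
  rw [eisensteinAtInfty_slash, eisensteinAtInfty, Finset.smul_sum]
  refine Fintype.sum_bijective (fun d : ZMod D => d * (γ 1 1 : ZMod D))
    (Units.mulRight_bijective (isUnit_intCast_of_isCoprime hcop).unit) _ _ fun d => ?_
  have hmul : χ ((d * (γ 1 1 : ZMod D)).val : ℤ) = χ (d.val : ℤ) * χ (γ 1 1) := by
    rw [← hχ.mul]
    exact hχ.congr (by simp)
  simp only [Gamma0_mem.1 hγ, mul_zero, hmul, smul_smul]
  congr 1
  linear_combination (-χ (d.val : ℤ)) * hχ.sq_eq_one hcop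

lemma tendsto_eisensteinAtInfty_slash (hw : 3 ≤ w) (γ : SL(2, ℤ)) :
    Tendsto (eisensteinAtInfty χ D w ∣[w] γ) atImInfty (𝓝 (∑ d : ZMod D, χ (d.val : ℤ) *
      eisensteinConstantTerm w ![d * (γ 1 0 : ZMod D), d * (γ 1 1 : ZMod D)])) := by
  rw [eisensteinAtInfty_slash]
  refine (tendsto_finsetSum Finset.univ fun d _ =>
    (tendsto_eisensteinSeries hw _).const_mul (χ (d.val : ℤ))).congr fun z => ?_
  simp only [Finset.sum_apply, Pi.smul_apply, smul_eq_mul]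

lemma isZeroAtImInfty_eisensteinAtInfty_slash (hχ : IsQuadDirChar D χ) (hw : 3 ≤ w)
    {γ : SL(2, ℤ)} (hγ : γ ∉ Gamma0 D) : IsZeroAtImInfty (eisensteinAtInfty χ D w ∣[w] γ) := by
  have h := tendsto_eisensteinAtInfty_slash (χ := χ) (D := D) hw γ
  rwa [Finset.sum_eq_zero] at h
  intro d _
  by_cases hd : IsCoprime (d.val : ℤ) (D : ℤ)
  · have hunit : IsUnit d := by simpa using isUnit_intCast_of_isCoprime hd
    have hne : d * (γ 1 0 : ZMod D) ≠ 0 := fun h₀ =>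
      hγ (Gamma0_mem.2 (hunit.mul_right_eq_zero.1 h₀))
    rw [eisensteinConstantTerm_eq_zero (by exact hne), mul_zero]
  · rw [(hχ.eq_zero_iff _).2 hd, zero_mul]

lemma tendsto_eisensteinAtInfty (hχ : IsQuadDirChar D χ) (hw : 3 ≤ w)
    (hpar : χ (-1) = (-1) ^ w) : Tendsto (eisensteinAtInfty χ D w) atImInfty (𝓝 2) := by
  have h := tendsto_eisensteinAtInfty_slash (χ := χ) (D := D) hw 1
  have hχ₁ : χ ((1 : ZMod D).val : ℤ) = 1 := hχ.map_one ▸ hχ.congr (by simp)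
  have hχ₂ : χ ((-1 : ZMod D).val : ℤ) = (-1) ^ w := hpar ▸ hχ.congr (by simp)
  rw [SlashAction.slash_one] at h
  convert h
  simp only [Matrix.SpecialLinearGroup.coe_one, Matrix.one_apply_ne one_ne_zero,
    Matrix.one_apply_eq, Int.cast_zero, Int.cast_one, mul_zero, mul_one,
    eisensteinConstantTerm_zero_left, mul_add, mul_ite, Finset.sum_add_distrib,
    Finset.sum_ite_eq', Finset.mem_univ, if_true, hχ₁, hχ₂, ← mul_zpow, neg_mul_neg, one_zpow]
  norm_num

lemma exists_isFrame_inducedSign (hχ : IsQuadDirChar D χ) (hw : 3 ≤ w)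
    (hpar : χ (-1) = (-1) ^ w) {k : ℤ} (hwk : Even (w - k)) [Fintype (Gamma0Coset D)]
    [DecidableEq (Gamma0Coset D)] :
    ∃ wt f, IsFrame (inducedSign (D := D) χ) k wt f := by
  have hlim := tendsto_eisensteinAtInfty hχ hw hpar
  have hzero (i : Gamma0Coset D) (hi : i ≠ trivialCoset D) :
      IsZeroAtImInfty (inducedVector w (eisensteinAtInfty χ D w) i) :=
    isZeroAtImInfty_eisensteinAtInfty_slash hχ hw (cosetRep_inv_notMem hi)
  have hbdd (i : Gamma0Coset D) :
      IsBoundedAtImInfty (inducedVector w (eisensteinAtInfty χ D w) i) := by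
    rcases eq_or_ne i (trivialCoset D) with rfl | hi
    · rw [inducedVector_trivialCoset]
      exact hlim.isBigO_one ℝ
    · exact (hzero i hi).isBoundedAtImInfty
  refine exists_isFrame_of_tendsto (inducedSign_sq hχ)
    (isVectorForm_inducedVector (mdifferentiable_eisensteinAtInfty hw)
      fun γ hγ => eisensteinAtInfty_slash_of_mem_Gamma0 hχ w hγ) hbdd
    (fun i => ⟨cosetRep i, ?_⟩) two_ne_zero ?_ hzero hwk
  · rw [inv_smul_eq_iff, cosetRep_smul_trivialCoset]
  · rwa [inducedVector_trivialCoset]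

lemma exists_isFrame_inducedSign_frameDet_ne_zero (hχ : IsQuadDirChar D χ) {k : ℤ}
    (hpar : χ (-1) = (-1) ^ k) [Fintype (Gamma0Coset D)] [DecidableEq (Gamma0Coset D)] :
    ∃ wt f, IsFrame (inducedSign (D := D) χ) k wt f ∧ ∀ z, frameDet f z ≠ 0 := by
  have hw : 3 ≤ k + 2 * (3 - k).toNat := by lia
  have hpar' : χ (-1) = (-1) ^ (k + 2 * (3 - k).toNat) := by
    rw [zpow_add₀ (by norm_num), hpar, Even.neg_one_zpow (even_two_mul _), mul_one]
  obtain ⟨wt, f, hf⟩ := exists_isFrame_inducedSign hχ hw hpar' (k := k)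
    (by rw [add_sub_cancel_left]; exact even_two_mul _)
  exact hf.exists_forall_frameDet_ne_zero (inducedSign_sq hχ)

end EisensteinAtInfty

/-! ### Functions on the upper half-plane as a subset of `ℂ` -/

section UpperHalfPlaneSubset

/-- The restriction of a function on `ℂ` to the type `ℍ`. -/
def restrictUHP (f : ℂ → ℂ) : ℍ → ℂ := fun z => f z

/-- The extension of a function on the type `ℍ` to `ℂ`, with junk values off the upper
half-plane. -/
def extendUHP (F : ℍ → ℂ) : ℂ → ℂ := fun τ => F (ofComplex τ)

lemma extendUHP_apply (F : ℍ → ℂ) {τ : ℂ} (hτ : τ ∈ UHP) : extendUHP F τ = F ⟨τ, hτ⟩ :=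
  congrArg F (ofComplex_apply_of_im_pos hτ)

lemma restrictUHP_extendUHP (F : ℍ → ℂ) : restrictUHP (extendUHP F) = F :=
  funext fun z => congrArg F (ofComplex_apply z)

lemma mdifferentiable_restrictUHP {f : ℂ → ℂ} (hf : DifferentiableOn ℂ f UHP) :
    MDiff (restrictUHP f) := by
  refine UpperHalfPlane.mdifferentiable_iff.2 (hf.congr fun τ hτ => ?_)
  rw [comp_apply, restrictUHP, ofComplex_apply_of_im_pos hτ]

lemma differentiableOn_extendUHP {F : ℍ → ℂ} (hF : MDiff F) :
    DifferentiableOn ℂ (extendUHP F) UHP :=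
  UpperHalfPlane.mdifferentiable_iff.1 hF

lemma slash_matR_apply (w : ℤ) (γ : SL(2, ℤ)) (f : ℂ → ℂ) (z : ℍ) :
    slash w (matR γ) f z = (restrictUHP f ∣[w] γ) z := by
  have hdet : (matR γ).det = 1 := by
    have h := Matrix.SpecialLinearGroup.det_coe γ
    rw [Matrix.det_fin_two] at h ⊢
    simp only [matR, Matrix.map_apply]
    exact_mod_cast h
  rw [ModularForm.SL_slash_apply, ModularGroup.denom_apply, restrictUHP,
    coe_specialLinearGroup_apply, slash, hdet]
  simp only [matR, Matrix.map_apply, Real.sqrt_one, Complex.ofReal_one, one_zpow, one_mul,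
    Complex.ofReal_intCast, algebraMap_int_eq, eq_intCast]
  ring

lemma exp_eq_qPow_one (m : ℤ) (z : ℍ) : cexp (2 * Real.pi * Complex.I * m * z) = qPow 1 m z := by
  rw [qPow_eq_exp, Complex.ofReal_one, div_one]

end UpperHalfPlaneSubset

section ExtendByZero

/-- The extension of a sequence to `ℤ` by zero, turning power series into Laurent series. -/
def extendByZero (d : ℕ → ℂ) : ℤ → ℂ := extend Nat.cast d 0

variable (d : ℕ → ℂ)

lemma extendByZero_natCast (m : ℕ) : extendByZero d m = d m :=
  Nat.cast_injective.extend_apply d 0 m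

lemma extendByZero_of_neg {m : ℤ} (hm : m < 0) : extendByZero d m = 0 :=
  extend_apply' _ _ _ (by rintro ⟨n, rfl⟩; omega)

lemma hasSum_extendByZero_iff (z : ℍ) (a : ℂ) :
    HasSum (fun m : ℤ => extendByZero d m * qPow 1 m z) a ↔
      HasSum (fun m : ℕ => d m * cexp (2 * Real.pi * Complex.I * m * z)) a := by
  rw [← hasSum_nat_sub_iff (N := 0) fun m hm => by
    rw [extendByZero_of_neg d (by simpa using hm), zero_mul]]
  simp only [sub_zero, extendByZero_natCast, ← exp_eq_qPow_one, Int.cast_natCast]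

lemma finsum_extendByZero_mul (c : ℤ → ℂ) :
    ∑ᶠ m : ℤ, extendByZero d m * c m = ∑ᶠ m : ℕ, d m * c m := by
  have hsupp : support (fun m : ℤ => extendByZero d m * c m) ⊆ Set.range (Nat.cast : ℕ → ℤ) :=
    fun m hm => ⟨m.toNat, Int.toNat_of_nonneg <| not_lt.1 fun h₀ =>
      left_ne_zero_of_mul hm (extendByZero_of_neg d h₀)⟩
  calc ∑ᶠ m : ℤ, extendByZero d m * c m
      = ∑ᶠ m ∈ Set.range (Nat.cast : ℕ → ℤ), extendByZero d m * c m := by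
        rw [← finsum_mem_univ]
        exact finsum_mem_inter_support_eq' _ _ _ fun m hm =>
          ⟨fun _ => hsupp hm, fun _ => Set.mem_univ m⟩
    _ = ∑ᶠ m : ℕ, d m * c m := by
        simp only [finsum_mem_range Nat.cast_injective, extendByZero_natCast]

end ExtendByZero

/-! ### From scalar-valued forms to vector-valued forms -/

section Induce

variable {D : ℕ} {χ : ℤ → ℂ} {w : ℤ}

lemma isVectorForm_inducedVector_restrictUHP {f : ℂ → ℂ} (hf : DifferentiableOn ℂ f UHP)
    (hs : ∀ γ : SL(2, ℤ), (D : ℤ) ∣ γ 1 0 → ∀ τ ∈ UHP, slash w (matR γ) f τ = χ (γ 1 1) * f τ) :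
    IsVectorForm (inducedSign (D := D) χ) w (inducedVector w (restrictUHP f)) := by
  refine isVectorForm_inducedVector (mdifferentiable_restrictUHP hf) fun γ hγ => funext fun z => ?_
  rw [← slash_matR_apply, hs γ (mem_Gamma0_iff_dvd.1 hγ) z z.im_pos]
  rfl

lemma not_dvd_cosetRep_inv {i : Gamma0Coset D} (hi : i ≠ trivialCoset D) :
    ¬ (D : ℤ) ∣ (cosetRep i)⁻¹ 1 0 :=
  fun h => cosetRep_inv_notMem hi (mem_Gamma0_iff_dvd.2 h)

lemma _root_.IsWeaklyHolInfty.hasSum_qPow {f : ℂ → ℂ} {c : ℤ → ℂ}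
    (hf : IsWeaklyHolInfty D χ w f c) (z : ℍ) :
    HasSum (fun m : ℤ => c m * qPow 1 m z) (restrictUHP f z) := by
  simpa only [exp_eq_qPow_one, restrictUHP] using hf.fourier z z.im_pos

lemma _root_.IsWeaklyHolInfty.isBoundedAtImInfty_inducedVector {f : ℂ → ℂ} {c : ℤ → ℂ}
    (hf : IsWeaklyHolInfty D χ w f c) {i : Gamma0Coset D} (hi : i ≠ trivialCoset D) :
    IsBoundedAtImInfty (inducedVector w (restrictUHP f) i) := by
  obtain ⟨C, hC⟩ := hf.bdd_at_other_cusps _ (not_dvd_cosetRep_inv hi)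
  refine isBoundedAtImInfty_iff.2 ⟨C, 1, fun z hz => ?_⟩
  rw [inducedVector, ← slash_matR_apply]
  exact hC z hz

lemma _root_.MemMInftySpace.isZeroAtImInfty_inducedVector {g : ℂ → ℂ}
    (hg : MemMInftySpace D χ w g) {i : Gamma0Coset D} (hi : i ≠ trivialCoset D) :
    IsZeroAtImInfty (inducedVector w (restrictUHP g) i) :=
  ((hg.vanish_at_other_cusps _ (not_dvd_cosetRep_inv hi)).comp tendsto_coe_atImInfty).congr
    fun z => slash_matR_apply w _ g z

end Induce

/-! ### From vector-valued forms to scalar-valued forms -/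

section Project

variable {D : ℕ} {χ : ℤ → ℂ} {w : ℤ} {v : Gamma0Coset D → ℍ → ℂ}

lemma inv_smul_trivialCoset_ne {γ : SL(2, ℤ)} (hγ : ¬ (D : ℤ) ∣ γ 1 0) :
    γ⁻¹ • trivialCoset D ≠ trivialCoset D :=
  fun h => hγ (mem_Gamma0_iff_dvd.1 (inv_smul_trivialCoset_eq_iff.1 h))

lemma norm_inducedSign (hχ : IsQuadDirChar D χ) (γ : SL(2, ℤ)) (i : Gamma0Coset D) :
    ‖inducedSign χ γ i‖ = 1 := by
  have h := congrArg norm (inducedSign_sq hχ γ i)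
  rw [norm_pow, norm_one] at h
  exact (pow_eq_one_iff_of_nonneg (norm_nonneg _) two_ne_zero).1 h

namespace IsVectorForm

lemma slash_extendUHP (hv : IsVectorForm (inducedSign χ) w v) (γ : SL(2, ℤ)) {τ : ℂ}
    (hτ : τ ∈ UHP) : slash w (matR γ) (extendUHP (v (trivialCoset D))) τ =
      inducedSign χ γ (trivialCoset D) * v (γ⁻¹ • trivialCoset D) ⟨τ, hτ⟩ := by
  rw [← hv.slash_trivialCoset]
  simpa only [restrictUHP_extendUHP] using
    slash_matR_apply w γ (extendUHP (v (trivialCoset D))) ⟨τ, hτ⟩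

lemma slash_extendUHP_of_dvd (hv : IsVectorForm (inducedSign χ) w v) {γ : SL(2, ℤ)}
    (hγ : (D : ℤ) ∣ γ 1 0) {τ : ℂ} (hτ : τ ∈ UHP) :
    slash w (matR γ) (extendUHP (v (trivialCoset D))) τ =
      χ (γ 1 1) * extendUHP (v (trivialCoset D)) τ := by
  have hmem := mem_Gamma0_iff_dvd.2 hγ
  rw [hv.slash_extendUHP γ hτ, inducedSign_trivialCoset hmem,
    inv_smul_trivialCoset_eq_iff.2 hmem, extendUHP_apply _ hτ]

theorem isWeaklyHolInfty (hv : IsVectorForm (inducedSign χ) w v) (hχ : IsQuadDirChar D χ)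
    (hD : 0 < D) (hb : ∀ i ≠ trivialCoset D, IsBoundedAtImInfty (v i))
    (h₁ : MeroPeriodic 1 (v (trivialCoset D))) :
    IsWeaklyHolInfty D χ w (extendUHP (v (trivialCoset D))) (qCoeff 1 (v (trivialCoset D))) where
  holo := differentiableOn_extendUHP (hv.mdiff _)
  transform _ hγ _ hτ := hv.slash_extendUHP_of_dvd hγ hτ
  coeff_bddBelow := h₁.exists_qCoeff_eq_zero.imp' Nat.cast fun _ h => h
  fourier τ hτ := by
    rw [extendUHP_apply _ hτ]
    simpa only [← exp_eq_qPow_one] using h₁.hasSum ⟨τ, hτ⟩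
  bdd_at_other_cusps γ hγ := by
    have hbγ := hb _ (inv_smul_trivialCoset_ne hγ)
    have hM : MeroPeriodic D (v (γ⁻¹ • trivialCoset D)) :=
      .of_isBounded (mod_cast hD) (hv.mdiff _) (hv.vadd_eq (isSignSystem_inducedSign hχ hD) _)
        (n := 0) (by rwa [qPow_zero, mul_one])
    obtain ⟨C, hC⟩ := hM.exists_norm_le_of_isBounded hbγ
    refine ⟨C, fun τ hτ => ?_⟩
    have hτ₀ : τ ∈ UHP := zero_lt_one.trans_le hτ
    rw [hv.slash_extendUHP γ hτ₀, norm_mul, norm_inducedSign hχ, one_mul]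
    exact hC _ hτ

theorem memMInftySpace (hv : IsVectorForm (inducedSign χ) w v)
    (h₁ : MeroPeriodic 1 (v (trivialCoset D))) (hb : IsBoundedAtImInfty (v (trivialCoset D)))
    (h₀ : ∀ i ≠ trivialCoset D, IsZeroAtImInfty (v i)) :
    MemMInftySpace D χ w (extendUHP (v (trivialCoset D))) where
  holo := differentiableOn_extendUHP (hv.mdiff _)
  transform _ hγ _ hτ := hv.slash_extendUHP_of_dvd hγ hτ
  bdd_at_infty := by
    obtain ⟨C, hC⟩ := h₁.exists_norm_le_of_isBounded hb
    refine ⟨C, fun τ hτ => ?_⟩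
    rw [extendUHP_apply _ (zero_lt_one.trans_le hτ : τ ∈ UHP)]
    exact hC _ hτ
  vanish_at_other_cusps γ hγ := by
    have h := ((h₀ _ (inv_smul_trivialCoset_ne hγ)).comp tendsto_comap_im_ofComplex).const_mul
      (inducedSign χ γ (trivialCoset D))
    rw [mul_zero] at h
    refine h.congr' ?_
    filter_upwards [tendsto_comap.eventually (eventually_gt_atTop (0 : ℝ))] with τ hτ
    rw [hv.slash_extendUHP γ hτ, comp_apply, ofComplex_apply_of_im_pos hτ]

end IsVectorForm

end Project

/-! ### The two directions of the criterion -/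

section Criterion

variable {D : ℕ} {χ : ℤ → ℂ} {k : ℤ} {d : ℕ → ℂ}

theorem finsum_coeff_neg_mul_eq_zero (hD : 0 < D) (hχ : IsQuadDirChar D χ) {g : ℂ → ℂ}
    (hg : MemMInftySpace D χ k g)
    (hs : ∀ τ ∈ UHP, HasSum (fun m : ℕ => d m * cexp (2 * Real.pi * Complex.I * m * τ)) (g τ))
    {f : ℂ → ℂ} {c : ℤ → ℂ} (hf : IsWeaklyHolInfty D χ (2 - k) f c) :
    ∑ᶠ m : ℕ, c (-m) * d m = 0 := by
  have : NeZero D := ⟨hD.ne'⟩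
  obtain ⟨m₀, hc⟩ := hf.coeff_bddBelow
  have hFd := mdifferentiable_restrictUHP hf.holo
  have hGd := mdifferentiable_restrictUHP hg.holo
  have hd (m : ℤ) (hm : m < -0) : extendByZero d m = 0 :=
    extendByZero_of_neg d (by rwa [neg_zero] at hm)
  have hGs (z : ℍ) := (hasSum_extendByZero_iff d z _).2 (hs z z.im_pos)
  have hF := meroPeriodic_of_hasSum one_pos hFd hc hf.hasSum_qPow
  have hG := meroPeriodic_of_hasSum one_pos hGd hd hGs
  have h := IsVectorForm.qCoeff_mul_zero (i₀ := trivialCoset D) (inducedSign_sq hχ)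
    (isVectorForm_inducedVector_restrictUHP hf.holo hf.transform)
    (isVectorForm_inducedVector_restrictUHP hg.holo hg.transform)
    (by rwa [inducedVector_trivialCoset]) (by rwa [inducedVector_trivialCoset])
    (fun _ => hf.isBoundedAtImInfty_inducedVector) (fun _ => hg.isZeroAtImInfty_inducedVector)
  rw [inducedVector_trivialCoset, inducedVector_trivialCoset, hF.qCoeff_mul_zero hG,
    qCoeff_eq_of_hasSum one_pos hFd hc hf.hasSum_qPow, qCoeff_eq_of_hasSum one_pos hGd hd hGs,
    finsum_extendByZero_mul d fun m => c (-m)] at h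
  simpa only [mul_comm] using h

theorem exists_memMInftySpace_hasSum (hD : 0 < D) (hχ : IsQuadDirChar D χ)
    (hpar : χ (-1) = (-1) ^ k)
    (horth : ∀ (f : ℂ → ℂ) (c : ℤ → ℂ), IsWeaklyHolInfty D χ (2 - k) f c →
      ∑ᶠ m : ℕ, c (-m) * d m = 0) :
    ∃ g : ℂ → ℂ, MemMInftySpace D χ k g ∧ ∀ τ ∈ UHP,
      HasSum (fun m : ℕ => d m * cexp (2 * Real.pi * Complex.I * m * τ)) (g τ) := by
  classical
  have : NeZero D := ⟨hD.ne'⟩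
  cases nonempty_fintype (Gamma0Coset D)
  obtain ⟨wt, f, hf, hdet⟩ := exists_isFrame_inducedSign_frameDet_ne_zero hχ hpar
  obtain ⟨g, hg, hg₁, hgd, hgneg, hg₀⟩ :=
    hf.exists_isVectorForm_qCoeff_eq (isSignSystem_inducedSign hχ hD) hdet
      fun v hv hb h₁ => horth _ _ (hv.isWeaklyHolInfty hχ hD hb h₁)
  have hcoeff : qCoeff 1 (g (trivialCoset D)) = extendByZero d := by
    ext m
    rcases lt_or_ge m 0 with hm | hm
    · rw [hgneg m hm, extendByZero_of_neg d hm]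
    · lift m to ℕ using hm
      rw [hgd, extendByZero_natCast]
  refine ⟨extendUHP (g (trivialCoset D)), hg.memMInftySpace hg₁ (hg₁.isBounded_of_qCoeff hgneg)
    fun i hi => (hg₀ i hi).2, fun τ hτ => ?_⟩
  rw [extendUHP_apply _ hτ, ← hasSum_extendByZero_iff d ⟨τ, hτ⟩, ← hcoeff]
  exact hg₁.hasSum ⟨τ, hτ⟩

end Criterion

end ModularityCriterion

end

theorem modularity_criterion_general
    (D : ℕ) (hDpos : 0 < D) (k : ℤ)
    (χ : ℤ → ℂ) (hχ : IsQuadDirChar D χ) (hpar : χ (-1) = (-1) ^ k)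
    (d : ℕ → ℂ) :
    (∀ (f : ℂ → ℂ) (c : ℤ → ℂ), IsWeaklyHolInfty D χ (2 - k) f c →
        ∑ᶠ m : ℕ, c (-(m : ℤ)) * d m = 0) ↔
      (∃ g : ℂ → ℂ, MemMInftySpace D χ k g ∧ ∀ τ ∈ UHP,
        HasSum (fun m : ℕ => d m * Complex.exp (2 * (Real.pi : ℂ) * Complex.I * m * τ))
          (g τ)) :=
  ⟨ModularityCriterion.exists_memMInftySpace_hasSum hDpos hχ hpar,
    fun ⟨_, hg, hs⟩ _ _ hf =>
      ModularityCriterion.finsum_coeff_neg_mul_eq_zero hDpos hχ hg hs hf⟩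

/-- **Modularity criterion.**  For a formal `q`-expansion `∑_{m ≥ 0} d(m) q^m` the following are
equivalent: (1) `∑_{m ≥ 0} c(-m) d(m) = 0` for every `f ∈ M^{!,∞}_{2-k}(D,χ)` with Fourier
coefficients `c`; (2) `∑_{m ≥ 0} d(m) q^m` is the `q`-expansion of an element of `M^∞_k(D,χ)`. -/
theorem modularity_criterion
    (D : ℕ) (hD : Odd D) (hDsf : Squarefree D) (hDpos : 0 < D)
    (k : ℤ) (hk : 2 ≤ k)
    (χ : ℤ → ℂ) (hχ : IsQuadDirChar D χ) (hpar : χ (-1) = (-1) ^ k)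
    (d : ℕ → ℂ) :
    (∀ (f : ℂ → ℂ) (c : ℤ → ℂ), IsWeaklyHolInfty D χ (2 - k) f c →
        ∑ᶠ m : ℕ, c (-(m : ℤ)) * d m = 0) ↔
      (∃ g : ℂ → ℂ, MemMInftySpace D χ k g ∧ ∀ τ ∈ UHP,
        HasSum (fun m : ℕ => d m * Complex.exp (2 * (Real.pi : ℂ) * Complex.I * m * τ))
          (g τ)) := by
  exact modularity_criterion_general D hDpos k χ hχ hpar d
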